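/- arXiv:2110.11825 — 4 statements merged into one kernel-verified Lean document; each statement's English description precedes it below -/
import Mathlib

section
/- Let X be a finite-dimensional real normed space and C_X = {(t,x) ∈ R ⊕ X : ‖x‖_X ≤ t} the associated proper cone. The following are equivalent: (1) C_X is resilient; (2) every central map α ⊕ P : R ⊕ X → R ⊕ X, given by (t,x) ↦ (α t, P(x)) for α ∈ R and a linear map P : X → X, that is (C_X,C_X)-entanglement annihilating is (C_X,C_X)-entanglement breaking. -/
open scoped TensorProduct
open Set

noncomputable section

/-- The dual cone of a set `C`, inside the algebraic dual space. -/
def dualConeSet {V : Type*} [AddCommGroup V] [Module ℝ V] (C : Set V) :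
    Set (Module.Dual ℝ V) := {φ | ∀ x ∈ C, 0 ≤ φ x}

/-- A proper cone: a closed convex cone which is generating (`C - C = V`) and
pointed (`C ∩ (-C) = {0}`). -/
def IsProperCone {V : Type*} [NormedAddCommGroup V] [NormedSpace ℝ V] (C : Set V) : Prop :=
  IsClosed C ∧ Convex ℝ C ∧ (∀ ⦃c : ℝ⦄, 0 < c → ∀ ⦃x⦄, x ∈ C → c • x ∈ C) ∧
    (∀ v : V, ∃ x ∈ C, ∃ y ∈ C, v = x - y) ∧ C ∩ (-C) = {0}

/-- `(C₁,C₂)`-entanglement breaking maps. -/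
def IsEntanglementBreaking {V₁ V₂ : Type*} [AddCommGroup V₁] [Module ℝ V₁]
    [AddCommGroup V₂] [Module ℝ V₂] (C₁ : Set V₁) (C₂ : Set V₂) (P : V₁ →ₗ[ℝ] V₂) : Prop :=
  ∃ (m : ℕ) (φ : Fin m → Module.Dual ℝ V₁) (x : Fin m → V₂),
    (∀ i, φ i ∈ dualConeSet C₁) ∧ (∀ i, x i ∈ C₂) ∧ ∀ v, P v = ∑ i, φ i v • x i

/-- The `k`-fold minimal tensor power of a cone. -/
def minTensorPow {V : Type*} [AddCommGroup V] [Module ℝ V] (C : Set V) (k : ℕ) :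
    Set (⨂[ℝ] _ : Fin k, V) :=
  convexHull ℝ {z | ∃ x : Fin k → V, (∀ i, x i ∈ C) ∧ z = PiTensorProduct.tprod ℝ x}

/-- The functional on the `k`-fold tensor power induced by a family of functionals,
`x₁ ⊗ ⋯ ⊗ x_k ↦ ∏ i, φ i (x i)`. -/
def dualPairing {V : Type*} [AddCommGroup V] [Module ℝ V] {k : ℕ}
    (φ : Fin k → Module.Dual ℝ V) : (⨂[ℝ] _ : Fin k, V) →ₗ[ℝ] ℝ :=
  PiTensorProduct.lift ((MultilinearMap.mkPiAlgebra ℝ (Fin k) ℝ).compLinearMap φ)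

/-- The `k`-fold maximal tensor power of a cone: the dual of the minimal tensor power of
the dual cone, under the canonical identification of `(V^{⊗k})*` with `(V*)^{⊗k}`. -/
def maxTensorPow {V : Type*} [AddCommGroup V] [Module ℝ V] (C : Set V) (k : ℕ) :
    Set (⨂[ℝ] _ : Fin k, V) :=
  {z | ∀ φ : Fin k → Module.Dual ℝ V, (∀ i, φ i ∈ dualConeSet C) → 0 ≤ dualPairing φ z}

/-- `(C₁,C₂)`-entanglement annihilating maps: `P^{⊗k}` maps the `k`-fold maximal tensor power
of `C₁` into the `k`-fold minimal tensor power of `C₂`, for every `k ≥ 1`. -/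
def IsEntanglementAnnihilating {V₁ V₂ : Type*} [AddCommGroup V₁] [Module ℝ V₁]
    [AddCommGroup V₂] [Module ℝ V₂] (C₁ : Set V₁) (C₂ : Set V₂) (P : V₁ →ₗ[ℝ] V₂) : Prop :=
  ∀ k : ℕ, 1 ≤ k →
    Set.MapsTo (⇑(PiTensorProduct.map fun _ : Fin k => P))
      (maxTensorPow C₁ k) (minTensorPow C₂ k)

/-- A pair of cones is resilient if every entanglement annihilating map between them is
entanglement breaking. -/
def IsResilientPair {V₁ V₂ : Type*} [AddCommGroup V₁] [Module ℝ V₁]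
    [AddCommGroup V₂] [Module ℝ V₂] (C₁ : Set V₁) (C₂ : Set V₂) : Prop :=
  ∀ P : V₁ →ₗ[ℝ] V₂, IsEntanglementAnnihilating C₁ C₂ P → IsEntanglementBreaking C₁ C₂ P

/-- The minimal tensor product of two cones. -/
def minTensor {V W : Type*} [AddCommGroup V] [Module ℝ V] [AddCommGroup W] [Module ℝ W]
    (C : Set V) (D : Set W) : Set (V ⊗[ℝ] W) :=
  convexHull ℝ {z | ∃ x ∈ C, ∃ y ∈ D, z = x ⊗ₜ[ℝ] y}

/-- The maximal tensor product of two cones: the dual of the minimal tensor product of the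
dual cones, under the canonical identification of `(V ⊗ W)*` with `V* ⊗ W*`. -/
def maxTensor {V W : Type*} [AddCommGroup V] [Module ℝ V] [AddCommGroup W] [Module ℝ W]
    (C : Set V) (D : Set W) : Set (V ⊗[ℝ] W) :=
  {z | ∀ φ ∈ dualConeSet C, ∀ ψ ∈ dualConeSet D,
      0 ≤ TensorProduct.dualDistrib ℝ V W (φ ⊗ₜ[ℝ] ψ) z}

/-- The Lorentz cone `L_n ⊆ ℝ ⊕ ℝⁿ`. -/
def lorentzCone (n : ℕ) : Set (ℝ × EuclideanSpace ℝ (Fin n)) := {p | ‖p.2‖ ≤ p.1}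


/-- The cone `C_X = {(t,x) : ‖x‖_X ≤ t}` over (the unit ball of) a normed space `X`. -/
def coneOverNormedSpace (X : Type*) [NormedAddCommGroup X] : Set (ℝ × X) :=
  {p | ‖p.2‖ ≤ p.1}

/-- The central map `α ⊕ P : (t,x) ↦ (α t, P x)` on `ℝ ⊕ X`. -/
def centralMap {X : Type*} [AddCommGroup X] [Module ℝ X] (α : ℝ) (P : X →ₗ[ℝ] X) :
    (ℝ × X) →ₗ[ℝ] (ℝ × X) :=
  LinearMap.prodMap (α • LinearMap.id) P

section helpers

variable {V : Type*} [AddCommGroup V] [Module ℝ V]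

lemma dualPairing_tprod {k : ℕ} (φ : Fin k → Module.Dual ℝ V) (x : Fin k → V) :
    dualPairing φ (PiTensorProduct.tprod ℝ x) = ∏ i, φ i (x i) := by
  simp [dualPairing]

lemma dualPairing_map {k : ℕ} (φ : Fin k → Module.Dual ℝ V) (A : Fin k → V →ₗ[ℝ] V)
    (z : ⨂[ℝ] _ : Fin k, V) :
    dualPairing φ (PiTensorProduct.map A z) = dualPairing (fun i => (φ i) ∘ₗ A i) z := by
  have : (dualPairing φ) ∘ₗ (PiTensorProduct.map A) = dualPairing (fun i => (φ i) ∘ₗ A i) := by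
    ext x
    simp [dualPairing_tprod]
  exact LinearMap.congr_fun this z

lemma map_maxTensorPow {C : Set V} {k : ℕ} (A : Fin k → V →ₗ[ℝ] V)
    (hA : ∀ i, ∀ x ∈ C, A i x ∈ C) {z : ⨂[ℝ] _ : Fin k, V} (hz : z ∈ maxTensorPow C k) :
    PiTensorProduct.map A z ∈ maxTensorPow C k := by
  intro φ hφ
  rw [dualPairing_map]
  exact hz _ fun i x hx => hφ i _ (hA i x hx)

lemma map_minTensorPow {C : Set V} {k : ℕ} (A : Fin k → V →ₗ[ℝ] V)
    (hA : ∀ i, ∀ x ∈ C, A i x ∈ C) {z : ⨂[ℝ] _ : Fin k, V} (hz : z ∈ minTensorPow C k) :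
    PiTensorProduct.map A z ∈ minTensorPow C k := by
  have h := Set.mem_image_of_mem (PiTensorProduct.map A) hz
  unfold minTensorPow at h ⊢
  rw [LinearMap.image_convexHull] at h
  refine convexHull_mono ?_ h
  rintro _ ⟨_, ⟨x, hx, rfl⟩, rfl⟩
  exact ⟨fun i => A i (x i), fun i => hA i _ (hx i), by simp⟩

lemma minTensorPow_smul {C : Set V} (hC : ∀ c : ℝ, 0 ≤ c → ∀ x ∈ C, c • x ∈ C)
    {k : ℕ} (hk : 1 ≤ k) {c : ℝ} (hc : 0 ≤ c) {z : ⨂[ℝ] _ : Fin k, V}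
    (hz : z ∈ minTensorPow C k) : c • z ∈ minTensorPow C k := by
  have h := Set.smul_mem_smul_set (a := c) hz
  unfold minTensorPow at h ⊢
  rw [← convexHull_smul] at h
  refine convexHull_mono ?_ h
  rintro _ ⟨_, ⟨x, hx, rfl⟩, rfl⟩
  refine ⟨Function.update x ⟨0, hk⟩ (c • x ⟨0, hk⟩), fun i => ?_, ?_⟩
  · by_cases hi : i = ⟨0, hk⟩
    · subst hi
      simpa using hC c hc _ (hx _)
    · simpa [Function.update_of_ne hi] using hx i
  · simp [MultilinearMap.map_update_smul]

lemma minTensorPow_add {C : Set V} (hC : ∀ c : ℝ, 0 ≤ c → ∀ x ∈ C, c • x ∈ C)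
    {k : ℕ} (hk : 1 ≤ k) {z w : ⨂[ℝ] _ : Fin k, V}
    (hz : z ∈ minTensorPow C k) (hw : w ∈ minTensorPow C k) : z + w ∈ minTensorPow C k := by
  have h := (convex_convexHull ℝ {z | ∃ x : Fin k → V, (∀ i, x i ∈ C) ∧
    z = PiTensorProduct.tprod ℝ x}) hz hw (a := 1/2) (b := 1/2) (by norm_num) (by norm_num)
    (by norm_num)
  have h2 := minTensorPow_smul hC hk (c := 2) (by norm_num) h
  rw [smul_add, smul_smul, smul_smul] at h2
  norm_num at h2
  exact h2

lemma EA_comp {C : Set V} {P S : V →ₗ[ℝ] V} (hP : IsEntanglementAnnihilating C C P)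
    (hS : ∀ x ∈ C, S x ∈ C) : IsEntanglementAnnihilating C C (S ∘ₗ P) := by
  intro k hk z hz
  rw [PiTensorProduct.map_comp (fun _ => S) (fun _ => P)]
  exact map_minTensorPow _ (fun _ => hS) (hP k hk hz)

lemma EA_twirl {C : Set V} (hC : ∀ c : ℝ, 0 ≤ c → ∀ x ∈ C, c • x ∈ C)
    (h0 : (0 : V) ∈ C) {T R : V →ₗ[ℝ] V}
    (hT : IsEntanglementAnnihilating C C T)
    (hR : ∀ x ∈ C, R x ∈ C) : IsEntanglementAnnihilating C C (T + R ∘ₗ T ∘ₗ R) := by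
  classical
  intro k hk z hz
  have e : PiTensorProduct.map (fun _ : Fin k => T + R ∘ₗ T ∘ₗ R) =
      ∑ s : Finset (Fin k), PiTensorProduct.map
        (s.piecewise (fun _ => T) (fun _ => R ∘ₗ T ∘ₗ R)) :=
    (PiTensorProduct.mapMultilinear ℝ (fun _ : Fin k => V) (fun _ => V)).map_add_univ
      (fun _ => T) (fun _ => R ∘ₗ T ∘ₗ R)
  rw [e, LinearMap.sum_apply]
  refine Finset.sum_induction _ (fun w => w ∈ minTensorPow C k)
    (fun a b ha hb => minTensorPow_add hC hk ha hb) ?_ ?_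
  · refine subset_convexHull ℝ _ ⟨fun _ => 0, fun _ => h0, ?_⟩
    exact ((PiTensorProduct.tprod ℝ).map_coord_zero ⟨0, hk⟩ rfl).symm
  · intro s _
    let A : Fin k → V →ₗ[ℝ] V := s.piecewise (fun _ => LinearMap.id) (fun _ => R)
    have hA : ∀ i, ∀ x ∈ C, A i x ∈ C := by
      intro i x hx
      by_cases hi : i ∈ s
      · simpa [A, hi] using hx
      · simpa [A, hi] using hR x hx
    have : s.piecewise (fun _ => T) (fun _ => R ∘ₗ T ∘ₗ R) =
        fun i => A i ∘ₗ (T ∘ₗ A i) := by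
      ext i : 1
      by_cases hi : i ∈ s <;> simp [A, hi]
    rw [this, PiTensorProduct.map_comp, PiTensorProduct.map_comp (fun _ => T)]
    exact map_minTensorPow A hA (hT k hk (map_maxTensorPow A hA hz))

lemma EA_pos {C : Set V} {P : V →ₗ[ℝ] V} (hP : IsEntanglementAnnihilating C C P)
    {x : V} (hx : x ∈ C) {φ : Module.Dual ℝ V} (hφ : φ ∈ dualConeSet C) : 0 ≤ φ (P x) := by
  have h := hP 1 le_rfl (x := PiTensorProduct.tprod ℝ (fun _ => x)) (by
    intro ψ hψ
    rw [dualPairing_tprod]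
    exact Finset.prod_nonneg fun i _ => hψ i x hx)
  have h2 : minTensorPow C 1 ⊆ (dualPairing (fun _ : Fin 1 => φ)) ⁻¹' (Set.Ici 0) := by
    refine convexHull_min ?_ ((convex_Ici 0).linear_preimage _)
    rintro _ ⟨y, hy, rfl⟩
    simp only [Set.mem_preimage, Set.mem_Ici, dualPairing_tprod]
    exact Finset.prod_nonneg fun i _ => hφ _ (hy i)
  simpa [dualPairing_tprod] using h2 h

lemma EB_of_fintype {C : Set V} {P : V →ₗ[ℝ] V} {ι : Type*} [Fintype ι]
    (φ : ι → Module.Dual ℝ V) (x : ι → V) (hφ : ∀ i, φ i ∈ dualConeSet C)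
    (hx : ∀ i, x i ∈ C) (h : ∀ v, P v = ∑ i, φ i v • x i) :
    IsEntanglementBreaking C C P := by
  let e := Fintype.equivFin ι
  refine ⟨Fintype.card ι, φ ∘ e.symm, x ∘ e.symm, fun i => hφ _, fun i => hx _, fun v => ?_⟩
  rw [h, ← e.symm.sum_comp]
  rfl

lemma EB_trace [FiniteDimensional ℝ V] {C : Set V} {P : V →ₗ[ℝ] V}
    (h : IsEntanglementBreaking C C P) : 0 ≤ LinearMap.trace ℝ V P := by
  obtain ⟨m, φ, x, hφ, hx, hP⟩ := h
  have : P = ∑ i, (φ i).smulRight (x i) := by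
    ext v
    simp [hP]
  rw [this, map_sum]
  refine Finset.sum_nonneg fun i _ => ?_
  rw [LinearMap.trace_smulRight]
  exact hφ i _ (hx i)

/-- Trace duality. -/
lemma exists_trace_rep [FiniteDimensional ℝ V] (g : (V →ₗ[ℝ] V) →ₗ[ℝ] ℝ) :
    ∃ S : V →ₗ[ℝ] V, (∀ (φ : Module.Dual ℝ V) x, φ (S x) = g (φ.smulRight x)) ∧
      ∀ M, LinearMap.trace ℝ V (S ∘ₗ M) = g M := by
  let b := Module.finBasis ℝ V
  let S : V →ₗ[ℝ] V := ∑ i, ((g ∘ₗ (LinearMap.smulRightₗ (b.coord i))).smulRight (b i))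
  have hS : ∀ (φ : Module.Dual ℝ V) x, φ (S x) = g (φ.smulRight x) := by
    intro φ x
    have : φ.smulRight x = ∑ i, φ (b i) • (b.coord i).smulRight x := by
      refine b.ext fun j => ?_
      simp [Finsupp.single_apply]
    rw [this]
    simp [S, mul_comm]
  refine ⟨S, hS, fun M => ?_⟩
  have hM : M = ∑ i, (b.coord i).smulRight (M (b i)) := by
    refine b.ext fun j => ?_
    simp [Finsupp.single_apply]
  have hM2 : S ∘ₗ M = ∑ i, (b.coord i).smulRight (S (M (b i))) := by
    refine b.ext fun j => ?_
    simp [Finsupp.single_apply]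
  rw [hM2, map_sum]
  conv_rhs => rw [hM, map_sum]
  refine Finset.sum_congr rfl fun i _ => ?_
  rw [LinearMap.trace_smulRight, hS]

end helpers

section hull

lemma isCompact_convexHull_aux {E : Type*} [NormedAddCommGroup E] [NormedSpace ℝ E]
    [FiniteDimensional ℝ E] {K : Set E} (hK : IsCompact K) : IsCompact (convexHull ℝ K) := by
  classical
  rcases K.eq_empty_or_nonempty with rfl | ⟨p, hp⟩
  · simp
  let d := Module.finrank ℝ E + 1
  have hc : IsCompact ((fun q : (Fin d → ℝ) × (Fin d → E) => ∑ i, q.1 i • q.2 i) ''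
      (stdSimplex ℝ (Fin d) ×ˢ Set.univ.pi fun _ => K)) :=
    ((isCompact_stdSimplex ℝ (Fin d)).prod (isCompact_univ_pi fun _ => hK)).image (by fun_prop)
  convert! hc using 1
  ext x
  constructor
  · intro hx
    obtain ⟨ι, _, z, w, hz, hai, hw, hw1, hx⟩ := eq_pos_convex_span_of_mem_convexHull hx
    have hcard : Fintype.card ι ≤ Fintype.card (Fin d) := by
      rw [Fintype.card_fin]
      exact hai.card_le_finrank_succ.trans (Nat.succ_le_succ (Submodule.finrank_le _))
    obtain ⟨e⟩ := Function.Embedding.nonempty_of_card_le hcard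
    have hout : ∀ j : Fin d, j ∉ Set.range e → Function.extend e w (fun _ => 0) j = 0 := by
      intro j hj
      rw [Function.extend_apply' _ _ _ hj]
    refine ⟨(Function.extend e w (fun _ => 0), Function.extend e z (fun _ => p)),
      ⟨⟨fun j => ?_, ?_⟩, fun j _ => ?_⟩, ?_⟩
    · by_cases hj : ∃ i, e i = j
      · obtain ⟨i, rfl⟩ := hj
        simpa [e.injective.extend_apply] using (hw i).le
      · simp [Function.extend_apply' _ _ _ hj]
    · rw [← hw1]
      refine (Fintype.sum_of_injective e e.injective _ _ hout fun i => ?_).symm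
      simp [e.injective.extend_apply]
    · by_cases hj : ∃ i, e i = j
      · obtain ⟨i, rfl⟩ := hj
        simpa [e.injective.extend_apply] using hz ⟨i, rfl⟩
      · simpa [Function.extend_apply' _ _ _ hj] using hp
    · rw [← hx]
      refine (Fintype.sum_of_injective e e.injective _ _ (fun j hj => ?_) fun i => ?_).symm
      · simp only [hout j hj, zero_smul]
      · simp [e.injective.extend_apply]
  · rintro ⟨⟨w, z⟩, ⟨⟨hw, hw1⟩, hz⟩, rfl⟩
    exact mem_convexHull_of_exists_fintype w z hw hw1 (fun i => hz i trivial) rfl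

end hull

section cone

variable {X : Type} [NormedAddCommGroup X] [NormedSpace ℝ X]

local notation "𝒞" => coneOverNormedSpace X

lemma cone_smul (c : ℝ) (hc : 0 ≤ c) (x : ℝ × X) (hx : x ∈ 𝒞) : c • x ∈ 𝒞 := by
  change ‖c • x.2‖ ≤ c * x.1
  rw [norm_smul, Real.norm_of_nonneg hc]
  exact mul_le_mul_of_nonneg_left hx hc

lemma cone_bidual {x : ℝ × X} (h : ∀ φ ∈ dualConeSet 𝒞, 0 ≤ φ x) : x ∈ 𝒞 := by
  obtain ⟨g, hg, hgx⟩ := exists_dual_vector'' ℝ x.2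
  have := h (LinearMap.fst ℝ ℝ X - (g : X →ₗ[ℝ] ℝ) ∘ₗ LinearMap.snd ℝ ℝ X) (by
    intro y hy
    have h1 := g.le_opNorm y.2
    have h2 := le_abs_self (g y.2)
    have hy' : ‖y.2‖ ≤ y.1 := hy
    rw [Real.norm_eq_abs] at h1
    have : ‖g‖ * ‖y.2‖ ≤ ‖y.2‖ := mul_le_of_le_one_left (norm_nonneg _) hg
    simp
    linarith)
  simp [hgx] at this
  exact this

lemma dual_bound {φ : Module.Dual ℝ (ℝ × X)} (h : φ ∈ dualConeSet 𝒞) (v : ℝ × X) :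
    |φ v| ≤ φ (1, 0) * (|v.1| + ‖v.2‖) := by
  have h1 := h (‖v.2‖, v.2) (by simp [coneOverNormedSpace])
  have h2 := h (‖v.2‖, -v.2) (by simp [coneOverNormedSpace])
  have h3 := h (1, 0) (by simp [coneOverNormedSpace])
  have e : ∀ (t : ℝ) (y : X), φ (t, y) = t * φ (1, 0) + φ (0, y) := by
    intro t y
    rw [← smul_eq_mul, ← map_smul, ← map_add]
    simp
  have e' : φ (0, -v.2) = - φ (0, v.2) := by rw [← map_neg]; simp
  have ev : φ v = v.1 * φ (1, 0) + φ (0, v.2) := e v.1 v.2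
  rw [e] at h1 h2
  rw [ev]
  rw [e'] at h2
  have := mul_le_mul_of_nonneg_right (le_abs_self v.1) h3
  have := mul_le_mul_of_nonneg_right (neg_abs_le v.1) h3
  rw [abs_le]
  constructor <;> nlinarith

variable [FiniteDimensional ℝ X]

/-- The base of the dual cone. -/
def dualBase (X : Type) [NormedAddCommGroup X] [NormedSpace ℝ X] :
    Set (StrongDual ℝ (ℝ × X)) :=
  {φ | (∀ x ∈ coneOverNormedSpace X, 0 ≤ φ x) ∧ φ (1, 0) = 1}

/-- The base of the cone. -/
def coneBase (X : Type) [NormedAddCommGroup X] : Set (ℝ × X) :=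
  {x | x ∈ coneOverNormedSpace X ∧ x.1 = 1}

lemma dualBase_compact : IsCompact (dualBase X) := by
  refine Metric.isCompact_of_isClosed_isBounded ?_ ?_
  · have : dualBase X = (⋂ x ∈ coneOverNormedSpace X, {φ | 0 ≤ φ x}) ∩ {φ | φ (1, 0) = 1} := by
      ext φ
      simp [dualBase]
    rw [this]
    refine IsClosed.inter (isClosed_biInter fun x _ => ?_) ?_
    · exact isClosed_le continuous_const (by fun_prop)
    · exact isClosed_eq (by fun_prop) continuous_const
  · refine (Metric.isBounded_closedBall (x := 0) (r := 2)).subset ?_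
    intro φ hφ
    rw [mem_closedBall_zero_iff]
    refine φ.opNorm_le_bound (by norm_num) fun v => ?_
    have h := dual_bound (φ := (φ : (ℝ × X) →ₗ[ℝ] ℝ)) hφ.1 v
    have h2 : φ (1, 0) = 1 := hφ.2
    have h3 := norm_fst_le v
    have h4 := norm_snd_le v
    simp only [ContinuousLinearMap.coe_coe, h2] at h
    rw [Real.norm_eq_abs] at h3 ⊢
    linarith

lemma coneBase_compact : IsCompact (coneBase X) := by
  refine Metric.isCompact_of_isClosed_isBounded ?_ ?_
  · have : coneBase X = {x : ℝ × X | ‖x.2‖ ≤ x.1} ∩ {x | x.1 = 1} := rfl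
    rw [this]
    exact (isClosed_le (by fun_prop) (by fun_prop)).inter (isClosed_eq (by fun_prop) (by fun_prop))
  · refine (Metric.isBounded_closedBall (x := 0) (r := 1)).subset ?_
    intro x hx
    rw [mem_closedBall_zero_iff]
    have h1 : ‖x.2‖ ≤ x.1 := hx.1
    have h2 : x.1 = 1 := hx.2
    rw [Prod.norm_def, h2]
    simp
    linarith

lemma exists_witness {P : (ℝ × X) →ₗ[ℝ] (ℝ × X)} (hpos : ∀ x ∈ 𝒞, P x ∈ 𝒞)
    (hP : ¬ IsEntanglementBreaking 𝒞 𝒞 P) :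
    ∃ S : (ℝ × X) →ₗ[ℝ] (ℝ × X), (∀ x ∈ 𝒞, S x ∈ 𝒞) ∧
      LinearMap.trace ℝ (ℝ × X) (S ∘ₗ P) < 0 := by
  set a : ℝ := (P (1, 0)).1 with ha
  have h10 : ((1, 0) : ℝ × X) ∈ 𝒞 := by simp [coneOverNormedSpace]
  have hfst : LinearMap.fst ℝ ℝ X ∈ dualConeSet 𝒞 := fun x hx =>
    (norm_nonneg _).trans (show ‖x.2‖ ≤ x.1 from hx)
  have ha0 : 0 ≤ a := hfst _ (hpos _ h10)
  have hapos : 0 < a := by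
    refine lt_of_le_of_ne ha0 fun h0 => hP ?_
    refine ⟨0, Fin.elim0, Fin.elim0, fun i => i.elim0, fun i => i.elim0, fun v => ?_⟩
    have key : ∀ φ ∈ dualConeSet 𝒞, φ (1, 0) = 0 → ∀ v, φ v = 0 := by
      intro φ hφ h v
      have := dual_bound hφ v
      rw [h, zero_mul] at this
      exact abs_eq_zero.mp (le_antisymm this (abs_nonneg _))
    have hP1 : P (1, 0) = 0 := by
      have : ‖(P (1, 0)).2‖ ≤ (P (1, 0)).1 := hpos _ h10
      rw [← ha, ← h0] at this
      exact Prod.ext h0.symm (norm_le_zero_iff.mp this)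
    have hall : ∀ φ ∈ dualConeSet 𝒞, φ (P v) = 0 := fun φ hφ =>
      key (φ ∘ₗ P) (fun x hx => hφ _ (hpos x hx)) (by simp [hP1]) v
    have h1 : P v ∈ 𝒞 := cone_bidual fun φ hφ => (hall φ hφ).ge
    have h2 : (P v).1 = 0 := hall _ hfst
    have h3 : ‖(P v).2‖ ≤ (P v).1 := h1
    rw [h2] at h3
    simpa using Prod.ext h2 (norm_le_zero_iff.mp h3)
  let K : Set ((ℝ × X) →L[ℝ] (ℝ × X)) :=
    (fun p : StrongDual ℝ (ℝ × X) × (ℝ × X) => p.1.smulRight p.2) '' (dualBase X ×ˢ coneBase X)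
  have hK : IsCompact K := ((dualBase_compact (X := X)).prod (coneBase_compact (X := X))).image (by fun_prop)
  have hB : IsCompact (convexHull ℝ K) := isCompact_convexHull_aux hK
  let P' : (ℝ × X) →L[ℝ] (ℝ × X) := a⁻¹ • LinearMap.toContinuousLinearMap P
  have hP' : P' ∉ convexHull ℝ K := by
    intro hmem
    rw [mem_convexHull_iff_exists_fintype] at hmem
    obtain ⟨ι, _, w, z, hw, hw1, hz, hsum⟩ := hmem
    choose p hp hpz using hz
    refine hP (EB_of_fintype (fun i => (a * w i) • ((p i).1 : (ℝ × X) →ₗ[ℝ] ℝ))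
      (fun i => (p i).2) (fun i x hx => ?_) (fun i => (hp i).2.1) fun v => ?_)
    · exact mul_nonneg (mul_nonneg ha0 (hw i)) ((hp i).1.1 x hx)
    · have h1 : P v = a • P' v := by simp [P', hapos.ne']
      rw [h1, ← hsum, sum_apply, Finset.smul_sum]
      refine Finset.sum_congr rfl fun i _ => ?_
      simp [← hpz, smul_smul, mul_assoc]
  obtain ⟨f, u, hfu, hu⟩ := geometric_hahn_banach_point_closed (convex_convexHull ℝ K)
    hB.isClosed hP'
  let ev : ((ℝ × X) →ₗ[ℝ] (ℝ × X)) →ₗ[ℝ] ℝ :=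
    LinearMap.fst ℝ ℝ X ∘ₗ LinearMap.applyₗ ((1, 0) : ℝ × X)
  let g : ((ℝ × X) →ₗ[ℝ] (ℝ × X)) →ₗ[ℝ] ℝ :=
    (f : ((ℝ × X) →L[ℝ] (ℝ × X)) →ₗ[ℝ] ℝ) ∘ₗ
      (LinearMap.toContinuousLinearMap : _ ≃ₗ[ℝ] ((ℝ × X) →L[ℝ] (ℝ × X))).toLinearMap - u • ev
  obtain ⟨S, hS, hS2⟩ := exists_trace_rep g
  refine ⟨S, fun x hx => cone_bidual fun φ hφ => ?_, ?_⟩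
  · rw [hS]
    by_cases hφ0 : φ (1, 0) = 0
    · have : φ = 0 := by
        ext1 <;> ext v <;> refine abs_eq_zero.mp (le_antisymm ?_ (abs_nonneg _)) <;>
        · refine (dual_bound hφ _).trans ?_
          simp [hφ0]
      subst this
      have : LinearMap.smulRight (0 : Module.Dual ℝ (ℝ × X)) x = 0 := by ext1 <;> simp
      rw [this, map_zero]
    by_cases hx0 : x.1 = 0
    · have hx' : ‖x.2‖ ≤ x.1 := hx
      rw [hx0] at hx'
      have : x = 0 := Prod.ext hx0 (norm_le_zero_iff.mp hx')
      subst this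
      simp
    have hφp : 0 < φ (1, 0) := lt_of_le_of_ne (hφ _ h10) (Ne.symm hφ0)
    have hxp : 0 < x.1 := lt_of_le_of_ne (hfst _ hx) (Ne.symm hx0)
    let φ' : Module.Dual ℝ (ℝ × X) := (φ (1, 0))⁻¹ • φ
    let x' : ℝ × X := (x.1)⁻¹ • x
    have e : φ.smulRight x = (φ (1, 0) * x.1) • φ'.smulRight x' := by
      refine LinearMap.ext fun v => ?_
      simp only [LinearMap.smulRight_apply, LinearMap.smul_apply, φ', x', smul_smul, smul_eq_mul]
      congr 1
      field_simp
    rw [e, map_smul]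
    refine mul_nonneg (mul_pos hφp hxp).le ?_
    have hx'b : x' ∈ coneBase X :=
      ⟨cone_smul _ (inv_nonneg.mpr hxp.le) _ hx, by simp [x', hx0]⟩
    have hφ'b : LinearMap.toContinuousLinearMap φ' ∈ dualBase X :=
      ⟨fun y hy => mul_nonneg (inv_nonneg.mpr hφp.le) (hφ y hy), by simp [φ', hφ0]⟩
    have hmem : LinearMap.toContinuousLinearMap (φ'.smulRight x') ∈ K :=
      ⟨(LinearMap.toContinuousLinearMap φ', x'), ⟨hφ'b, hx'b⟩, ContinuousLinearMap.ext fun v => rfl⟩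
    have h1 := hu _ (subset_convexHull ℝ K hmem)
    have h2 : ev (φ'.smulRight x') = 1 := by
      simp [ev, φ', x', hφ0, hx0]
    change 0 ≤ f (LinearMap.toContinuousLinearMap (φ'.smulRight x')) - u * ev (φ'.smulRight x')
    rw [h2]
    linarith
  · rw [hS2]
    change f (LinearMap.toContinuousLinearMap P) - u * a < 0
    have h1 : LinearMap.toContinuousLinearMap P = a • P' := by
      simp [P', smul_smul, hapos.ne']
    rw [h1, map_smul, smul_eq_mul]
    nlinarith

end cone

/-- **Theorem.** `C_X` is resilient iff every entanglement annihilating central map on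
`ℝ ⊕ X` is entanglement breaking. -/
theorem coneOverNormedSpace_resilient_iff_central
    (X : Type) [NormedAddCommGroup X] [NormedSpace ℝ X] [FiniteDimensional ℝ X] :
    IsResilientPair (coneOverNormedSpace X) (coneOverNormedSpace X) ↔
      ∀ (α : ℝ) (P : X →ₗ[ℝ] X),
        IsEntanglementAnnihilating (coneOverNormedSpace X) (coneOverNormedSpace X)
          (centralMap α P) →
        IsEntanglementBreaking (coneOverNormedSpace X) (coneOverNormedSpace X)
          (centralMap α P) := by
  constructor
  · intro h α P
    exact h _
  intro h P hP
  by_contra hEB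
  have hpos : ∀ x ∈ coneOverNormedSpace X, P x ∈ coneOverNormedSpace X :=
    fun x hx => cone_bidual fun φ hφ => EA_pos hP hx hφ
  obtain ⟨S, hS, htr⟩ := exists_witness hpos hEB
  let R : (ℝ × X) →ₗ[ℝ] (ℝ × X) := centralMap 1 (-LinearMap.id)
  have hR : ∀ x ∈ coneOverNormedSpace X, R x ∈ coneOverNormedSpace X := by
    intro x hx
    simpa [R, centralMap, coneOverNormedSpace] using hx
  have hRR : R ∘ₗ R = LinearMap.id := by
    refine LinearMap.ext fun x => ?_
    simp [R, centralMap]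
  set T := S ∘ₗ P with hT
  have hEA := EA_twirl cone_smul (by simp [coneOverNormedSpace]) (EA_comp hP hS) hR
  rw [← hT] at hEA
  have hc : T + R ∘ₗ T ∘ₗ R = centralMap (2 * (T (1, 0)).1)
      ((2 : ℝ) • (LinearMap.snd ℝ ℝ X ∘ₗ T ∘ₗ LinearMap.inr ℝ ℝ X)) := by
    have e : ∀ (t : ℝ) (y : X), T (t, y) = t • T (1, 0) + T (0, y) := by
      intro t y
      rw [← map_smul, ← map_add]
      simp
    have e2 : ∀ y : X, T (0, -y) = - T (0, y) := by
      intro y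
      rw [← map_neg]
      simp
    refine LinearMap.ext fun x => ?_
    obtain ⟨t, y⟩ := x
    have hRa : ∀ z : ℝ × X, R z = (z.1, -z.2) := by
      intro z
      simp [R, centralMap, Prod.ext_iff]
    simp only [LinearMap.add_apply, LinearMap.comp_apply, hRa]
    rw [e t y, e t (-y), e2]
    refine Prod.ext ?_ ?_
    · simp [centralMap]
      ring
    · simp [centralMap, two_smul]
      abel
  rw [hc] at hEA
  have h0 := EB_trace (h _ _ hEA)
  rw [← hc, map_add, LinearMap.trace_comp_comm' (T ∘ₗ R) R, LinearMap.comp_assoc, hRR,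
    LinearMap.comp_id] at h0
  linarith

end
end

section
/- Let B ⊆ R^n be a convex body with enough symmetries. The following are equivalent: (1) the cone C_B is resilient; (2) every isotropic map I_{α,β} = α π1 + β π2 on R^{n+1} which is (C_B,C_B)-entanglement annihilating is (C_B,C_B)-entanglement breaking. -/
open scoped TensorProduct
open Set

noncomputable section

open scoped Pointwise

/-- A convex body: a compact convex set with nonempty interior. -/
def IsConvexBody (n : ℕ) (B : Set (Fin n → ℝ)) : Prop :=
  IsCompact B ∧ Convex ℝ B ∧ (interior B).Nonempty

/-- The isometry group of `B`: orthogonal matrices mapping `B` onto itself. -/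
def isoSet (n : ℕ) (B : Set (Fin n → ℝ)) : Set (Matrix (Fin n) (Fin n) ℝ) :=
  {g | g ∈ Matrix.orthogonalGroup (Fin n) ℝ ∧ (fun x => g.mulVec x) '' B = B}

/-- `B` has enough symmetries: the only matrices commuting with all of `Iso(B)` are the
real multiples of the identity. -/
def EnoughSymmetries (n : ℕ) (B : Set (Fin n → ℝ)) : Prop :=
  ∀ S : Matrix (Fin n) (Fin n) ℝ, (∀ g ∈ isoSet n B, g * S = S * g) →
    ∃ c : ℝ, S = c • (1 : Matrix (Fin n) (Fin n) ℝ)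

/-- The cone over a convex body `B`: `C_B = {(t,x) : t ≥ 0, x ∈ tB} ⊆ ℝ ⊕ ℝⁿ`. -/
def coneOverBody (n : ℕ) (B : Set (Fin n → ℝ)) : Set (ℝ × (Fin n → ℝ)) :=
  {p | 0 ≤ p.1 ∧ p.2 ∈ p.1 • B}

/-- The isotropic map `I_{α,β} = α π₁ + β π₂ : (t,x) ↦ (αt, βx)`. -/
def isotropicMap (n : ℕ) (α β : ℝ) : (ℝ × (Fin n → ℝ)) →ₗ[ℝ] (ℝ × (Fin n → ℝ)) :=
  LinearMap.prodMap (α • LinearMap.id) (β • LinearMap.id)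

theorem aux_isCompact_convexHull {E : Type*} [AddCommGroup E] [Module ℝ E] [TopologicalSpace E]
    [IsTopologicalAddGroup E] [ContinuousSMul ℝ E] [FiniteDimensional ℝ E] {s : Set E}
    (hs : IsCompact s) : IsCompact (convexHull ℝ s) := by
  rcases s.eq_empty_or_nonempty with rfl | ⟨s0, hs0⟩
  · simp
  set N := Module.finrank ℝ E + 1 with hN
  have hc : IsCompact ((fun p : (Fin N → ℝ) × (Fin N → E) => ∑ i, p.1 i • p.2 i) ''
      ((stdSimplex ℝ (Fin N)) ×ˢ (Set.univ.pi fun _ => s))) := by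
    apply IsCompact.image
    · exact (isCompact_stdSimplex ℝ (Fin N)).prod (isCompact_univ_pi fun _ => hs)
    · fun_prop
  convert hc using 1
  apply Set.Subset.antisymm
  · intro x hx
    obtain ⟨ι, _, z, w, hz, hind, hw, hw1, hx⟩ := eq_pos_convex_span_of_mem_convexHull hx
    have hcard : Fintype.card ι ≤ N := by
      have := hind.card_le_finrank_succ
      have h2 := Submodule.finrank_le (vectorSpan ℝ (Set.range z))
      omega
    obtain ⟨e⟩ : Nonempty (ι ↪ Fin N) := by
      apply Function.Embedding.nonempty_of_card_le
      simpa using hcard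
    refine ⟨(Function.extend e w 0, Function.extend e z (fun _ => s0)), ⟨⟨?_, ?_⟩, ?_⟩, ?_⟩
    · intro i
      by_cases h : ∃ a, e a = i
      · obtain ⟨a, rfl⟩ := h
        simpa [e.injective.extend_apply] using (hw a).le
      · simp [Function.extend_apply' _ _ _ h]
    · rw [← hw1]
      symm
      apply Fintype.sum_of_injective e e.injective
      · intro i hi
        exact Function.extend_apply' _ _ _ (by simpa using hi)
      · intro i; simp [e.injective.extend_apply]
    · intro i _
      by_cases h : ∃ a, e a = i
      · obtain ⟨a, rfl⟩ := h
        simpa [e.injective.extend_apply] using hz (Set.mem_range_self a)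
      · simpa [Function.extend_apply' _ _ _ h] using hs0
    · rw [← hx]
      symm
      apply Fintype.sum_of_injective e e.injective
      · intro i hi
        simp only []
        rw [Function.extend_apply' _ _ _ (by simpa using hi)]; simp
      · intro i; simp [e.injective.extend_apply]
  · rintro _ ⟨⟨w, z⟩, ⟨⟨hw0, hw1⟩, hz⟩, rfl⟩
    exact (convex_convexHull ℝ s).sum_mem (fun i _ => hw0 i) hw1
      (fun i _ => subset_convexHull ℝ s (hz i trivial))

section Tens
variable {V : Type*} [AddCommGroup V] [Module ℝ V] {C : Set V} {k : ℕ}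

theorem aux_map_max (F : Fin k → V →ₗ[ℝ] V) (hF : ∀ i, ∀ x ∈ C, F i x ∈ C)
    {z : ⨂[ℝ] _ : Fin k, V} (hz : z ∈ maxTensorPow C k) :
    PiTensorProduct.map F z ∈ maxTensorPow C k := by
  intro φ hφ
  have : dualPairing φ (PiTensorProduct.map F z) = dualPairing (fun i => φ i ∘ₗ F i) z := by
    unfold dualPairing
    rw [← LinearMap.comp_apply, PiTensorProduct.lift_comp_map]
    rfl
  rw [this]
  exact hz _ fun i x hx => hφ i _ (hF i x hx)

theorem aux_map_min (F : Fin k → V →ₗ[ℝ] V) (hF : ∀ i, ∀ x ∈ C, F i x ∈ C)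
    {z : ⨂[ℝ] _ : Fin k, V} (hz : z ∈ minTensorPow C k) :
    PiTensorProduct.map F z ∈ minTensorPow C k := by
  have : minTensorPow C k ⊆ (PiTensorProduct.map F) ⁻¹' (minTensorPow C k) := by
    apply convexHull_min
    · rintro _ ⟨x, hx, rfl⟩
      apply subset_convexHull
      exact ⟨fun i => F i (x i), fun i => hF i _ (hx i), by simp⟩
    · exact (convex_convexHull ℝ _).linear_preimage _
  exact this hz

theorem aux_twirl {ι : Type*} [Fintype ι] (w : ι → ℝ) (hw : ∀ i, 0 ≤ w i) (hw1 : ∑ i, w i = 1)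
    (A D : ι → V →ₗ[ℝ] V) (hA : ∀ i, ∀ x ∈ C, A i x ∈ C) (hD : ∀ i, ∀ x ∈ C, D i x ∈ C)
    (R : V →ₗ[ℝ] V) (hR : IsEntanglementAnnihilating C C R) :
    IsEntanglementAnnihilating C C (∑ i, w i • (A i ∘ₗ R ∘ₗ D i)) := by
  classical
  intro k hk z hz
  have h1 : PiTensorProduct.map (fun _ : Fin k => ∑ i, w i • (A i ∘ₗ R ∘ₗ D i)) =
      ∑ r : Fin k → ι, (∏ j, w (r j)) • (PiTensorProduct.map (fun j => A (r j)) ∘ₗ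
        PiTensorProduct.map (fun _ : Fin k => R) ∘ₗ PiTensorProduct.map (fun j => D (r j))) := by
    have := (PiTensorProduct.mapMultilinear ℝ (fun _ : Fin k => V) (fun _ : Fin k => V)).map_sum
      (fun _ i => w i • (A i ∘ₗ R ∘ₗ D i))
    rw [PiTensorProduct.mapMultilinear_apply] at this
    rw [this]
    refine Finset.sum_congr rfl fun r _ => ?_
    rw [MultilinearMap.map_smul_univ, PiTensorProduct.mapMultilinear_apply,
      PiTensorProduct.map_comp, PiTensorProduct.map_comp]
  rw [h1]
  simp only [LinearMap.sum_apply, LinearMap.smul_apply, LinearMap.comp_apply]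
  refine (convex_convexHull ℝ _).sum_mem (fun r _ => Finset.prod_nonneg fun j _ => hw _) ?_ ?_
  · rw [← Fintype.prod_sum (fun (_ : Fin k) i => w i)]
    simp [hw1]
  · intro r _
    exact aux_map_min _ (fun j => hA _) (hR k hk (aux_map_max _ (fun j => hD _) hz))

theorem aux_comp (Q R : V →ₗ[ℝ] V) (hQ : ∀ x ∈ C, Q x ∈ C)
    (hR : IsEntanglementAnnihilating C C R) : IsEntanglementAnnihilating C C (Q ∘ₗ R) := by
  intro k hk z hz
  rw [PiTensorProduct.map_comp]
  exact aux_map_min _ (fun _ => hQ) (hR k hk hz)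

theorem aux_eb_iff (P : V →ₗ[ℝ] V) : IsEntanglementBreaking C C P ↔
    ∃ (m : ℕ) (φ : Fin m → Module.Dual ℝ V) (x : Fin m → V),
    (∀ i, φ i ∈ dualConeSet C) ∧ (∀ i, x i ∈ C) ∧ P = ∑ i, (φ i).smulRight (x i) := by
  unfold IsEntanglementBreaking
  simp [LinearMap.ext_iff]

theorem aux_eb_add {P Q : V →ₗ[ℝ] V} (hP : IsEntanglementBreaking C C P)
    (hQ : IsEntanglementBreaking C C Q) : IsEntanglementBreaking C C (P + Q) := by
  obtain ⟨m, φ, x, h1, h2, h3⟩ := hP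
  obtain ⟨m', φ', x', h1', h2', h3'⟩ := hQ
  refine ⟨m + m', Fin.append φ φ', Fin.append x x', ?_, ?_, ?_⟩
  · intro i
    refine Fin.addCases (fun i => ?_) (fun i => ?_) i <;> simp [h1, h1']
  · intro i
    refine Fin.addCases (fun i => ?_) (fun i => ?_) i <;> simp [h2, h2']
  · intro v
    simp [Fin.sum_univ_add, h3, h3']

theorem aux_eb_smul {P : V →ₗ[ℝ] V} (hP : IsEntanglementBreaking C C P) {c : ℝ} (hc : 0 ≤ c) :
    IsEntanglementBreaking C C (c • P) := by
  obtain ⟨m, φ, x, h1, h2, h3⟩ := hP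
  refine ⟨m, fun i => c • φ i, x, fun i y hy => ?_, h2, fun v => ?_⟩
  · simpa using mul_nonneg hc (h1 i y hy)
  · simp [h3, Finset.smul_sum, mul_smul]

theorem aux_eb_trace [FiniteDimensional ℝ V] {P : V →ₗ[ℝ] V}
    (hP : IsEntanglementBreaking C C P) : 0 ≤ LinearMap.trace ℝ V P := by
  obtain ⟨m, φ, x, h1, h2, h3⟩ := (aux_eb_iff P).1 hP
  rw [h3, map_sum]
  refine Finset.sum_nonneg fun i _ => ?_
  rw [LinearMap.trace_smulRight]
  exact h1 i _ (h2 i)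

/-- Every functional on endomorphisms is a trace pairing. -/
theorem aux_trace_dual [FiniteDimensional ℝ V] (f : (V →ₗ[ℝ] V) →ₗ[ℝ] ℝ) :
    ∃ Q : V →ₗ[ℝ] V, (∀ X, LinearMap.trace ℝ V (Q ∘ₗ X) = f X) ∧
      ∀ (φ : Module.Dual ℝ V) (x : V), φ (Q x) = f (φ.smulRight x) := by
  let b := Module.finBasis ℝ V
  let Q : V →ₗ[ℝ] V := ∑ i, (f ∘ₗ (LinearMap.smulRightₗ (b.coord i))).smulRight (b i)
  have hQ : ∀ w, Q w = ∑ i, f ((b.coord i).smulRight w) • b i := by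
    intro w; simp [Q]
  refine ⟨Q, fun X => ?_, fun φ x => ?_⟩
  · have : Q ∘ₗ X = ∑ i, (f ∘ₗ (LinearMap.smulRightₗ (b.coord i)) ∘ₗ X).smulRight (b i) := by
      ext w; simp [Q]
    rw [this, map_sum]
    simp only [LinearMap.trace_smulRight]
    simp only [LinearMap.comp_apply]
    rw [← map_sum]
    congr 1
    apply b.ext
    intro j
    simp [LinearMap.sum_apply, Finsupp.single_apply]
  · rw [hQ, map_sum]
    simp only [map_smul, smul_eq_mul]
    have : φ.smulRight x = ∑ i, φ (b i) • ((b.coord i).smulRight x) := by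
      apply b.ext
      intro j
      simp [LinearMap.sum_apply, Finsupp.single_apply]
    rw [this, map_sum]
    simp [mul_comm]
end Tens
section Cone
variable {n : ℕ} {B : Set (Fin n → ℝ)}

theorem aux_mem_one {b : Fin n → ℝ} (hb : b ∈ B) : ((1 : ℝ), b) ∈ coneOverBody n B :=
  ⟨zero_le_one, by simpa using hb⟩

theorem aux_mem_cone {p : ℝ × (Fin n → ℝ)} (hp : p ∈ coneOverBody n B) :
    0 ≤ p.1 ∧ ∃ b ∈ B, p = p.1 • ((1 : ℝ), b) := by
  obtain ⟨h, b, hb, hp2⟩ := hp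
  refine ⟨h, b, hb, ?_⟩
  ext
  · simp
  · simp [← hp2]

theorem aux_bidual (hB : IsConvexBody n B) (y : ℝ × (Fin n → ℝ))
    (hy : ∀ φ ∈ dualConeSet (coneOverBody n B), 0 ≤ φ y) : y ∈ coneOverBody n B := by
  obtain ⟨hc, hconv, hne⟩ := hB
  have key : ∀ (l : (Fin n → ℝ) →ₗ[ℝ] ℝ) (M : ℝ), (∀ b ∈ B, l b ≤ M) →
      l y.2 ≤ M * y.1 := by
    intro l M hM
    have := hy (M • LinearMap.fst ℝ ℝ (Fin n → ℝ) - l ∘ₗ LinearMap.snd ℝ ℝ (Fin n → ℝ)) (by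
      intro p hp
      obtain ⟨h0, b, hb, hpb⟩ := aux_mem_cone hp
      rw [hpb]
      have := mul_le_mul_of_nonneg_left (hM b hb) h0
      simp
      linarith)
    simp at this
    linarith
  have h1 : 0 ≤ y.1 := hy (LinearMap.fst ℝ ℝ (Fin n → ℝ)) (fun p hp => hp.1)
  obtain ⟨b0, hb0'⟩ := hne
  have hb0 := interior_subset hb0'
  refine ⟨h1, ?_⟩
  rcases h1.eq_or_lt with h0 | h0
  · have hy2 : y.2 = 0 := by
      ext i
      have hb : ∀ l : (Fin n → ℝ) →ₗ[ℝ] ℝ, l y.2 ≤ 0 := by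
        intro l
        obtain ⟨M, hM⟩ := (hc.image (LinearMap.continuous_of_finiteDimensional l)).bddAbove
        have := key l M (fun b hb => hM ⟨b, hb, rfl⟩)
        rw [← h0] at this
        simpa using this
      have h2 := hb (LinearMap.proj i)
      have h3 := hb (-LinearMap.proj i)
      simp at h2 h3 ⊢
      linarith
    refine ⟨b0, hb0, ?_⟩
    simp [← h0, hy2]
  · by_contra hcon
    have hx : (y.1⁻¹ • y.2) ∉ B := by
      intro h
      exact hcon ⟨_, h, by simp [smul_smul, h0.ne']⟩
    obtain ⟨f, u, hf1, hf2⟩ := geometric_hahn_banach_closed_point hconv hc.isClosed hx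
    have := key f.toLinearMap u (fun b hb => (hf1 b hb).le)
    simp only [map_smul, smul_eq_mul, ContinuousLinearMap.coe_coe] at this hf2
    rw [inv_mul_eq_div, lt_div_iff₀ h0] at hf2
    linarith

theorem aux_dual_bound {b0 : Fin n → ℝ} {r : ℝ} (hr : 0 < r)
    (hb : Metric.closedBall b0 r ⊆ B) {φ : Module.Dual ℝ (ℝ × (Fin n → ℝ))}
    (hφ : φ ∈ dualConeSet (coneOverBody n B)) (v : Fin n → ℝ) :
    |φ (0, v)| ≤ φ (1, b0) * (‖v‖ / r) := by
  by_cases hv : v = 0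
  · subst hv
    have : ((0 : ℝ), (0 : Fin n → ℝ)) = 0 := rfl
    simp [this]
  have hv' : 0 < ‖v‖ := norm_pos_iff.2 hv
  have h : ∀ c : ℝ, |c| = 1 → 0 ≤ φ (1, b0) + c * (r / ‖v‖) * φ (0, v) := by
    intro c hc
    have hm : b0 + (c * (r / ‖v‖)) • v ∈ B := by
      apply hb
      rw [mem_closedBall_iff_norm]
      rw [add_sub_cancel_left, norm_smul, norm_mul, Real.norm_eq_abs c, hc, norm_div, norm_norm,
        Real.norm_of_nonneg hr.le]
      apply le_of_eq
      field_simp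
    have := hφ _ (aux_mem_one hm)
    have e : ((1 : ℝ), b0 + (c * (r / ‖v‖)) • v) = (1, b0) + (c * (r / ‖v‖)) • (0, v) := by
      ext <;> simp
    rw [e, map_add, map_smul] at this
    simpa using this
  have h1 := h 1 (by simp)
  have h2 := h (-1) (by simp)
  have e : φ (0, v) = (r / ‖v‖ * φ (0, v)) * (‖v‖ / r) := by field_simp
  rw [abs_le]
  have hp : 0 < ‖v‖ / r := by positivity
  constructor
  · rw [e, ← neg_mul]
    exact mul_le_mul_of_nonneg_right (by linarith) hp.le
  · rw [e]
    exact mul_le_mul_of_nonneg_right (by linarith) hp.le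

theorem aux_split (φ : Module.Dual ℝ (ℝ × (Fin n → ℝ))) (b0 : Fin n → ℝ)
    (p : ℝ × (Fin n → ℝ)) : φ p = p.1 * (φ (1, b0) - φ (0, b0)) + φ (0, p.2) := by
  have : p = p.1 • ((1, b0) - (0, b0)) + (0, p.2) := by ext <;> simp
  conv_lhs => rw [this]
  rw [map_add, map_smul, map_sub, smul_eq_mul]

theorem aux_sep (hB : IsConvexBody n B)
    {P : (ℝ × (Fin n → ℝ)) →ₗ[ℝ] (ℝ × (Fin n → ℝ))}
    (hP : ¬ IsEntanglementBreaking (coneOverBody n B) (coneOverBody n B) P) :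
    ∃ f : ((ℝ × (Fin n → ℝ)) →ₗ[ℝ] (ℝ × (Fin n → ℝ))) →ₗ[ℝ] ℝ, f P < 0 ∧
      ∀ φ ∈ dualConeSet (coneOverBody n B), ∀ x ∈ coneOverBody n B,
        0 ≤ f (LinearMap.smulRight φ x) := by
  obtain ⟨hc, hconv, b0, hb0⟩ := hB
  obtain ⟨r, hr, hb⟩ := Metric.nhds_basis_closedBall.mem_iff.1 (mem_interior_iff_mem_nhds.1 hb0)
  set C := coneOverBody n B with hC
  let D : Set ((ℝ × (Fin n → ℝ)) →L[ℝ] ℝ) := {φ | (∀ x ∈ C, 0 ≤ φ x) ∧ φ (1, b0) = 1}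
  have hDc : IsCompact D := by
    apply Metric.isCompact_of_isClosed_isBounded
    · have : D = (⋂ x ∈ C, {φ : (ℝ × (Fin n → ℝ)) →L[ℝ] ℝ | 0 ≤ φ x}) ∩ {φ | φ (1, b0) = 1} := by
        ext φ; simp [D]
      rw [this]
      apply IsClosed.inter
      · refine isClosed_biInter fun x _ => ?_
        exact isClosed_le continuous_const (by fun_prop)
      · exact isClosed_eq (by fun_prop) continuous_const
    · rw [isBounded_iff_forall_norm_le]
      refine ⟨(1 + ‖b0‖ / r) + 1 / r, fun φ hφ => ?_⟩
      refine ContinuousLinearMap.opNorm_le_bound _ (by positivity) fun p => ?_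
      have hb' := fun v => aux_dual_bound hr hb (φ := φ.toLinearMap) hφ.1 v
      simp only [ContinuousLinearMap.coe_coe, hφ.2, one_mul] at hb'
      have hs := aux_split φ.toLinearMap b0 p
      simp only [ContinuousLinearMap.coe_coe, hφ.2] at hs
      rw [hs, Real.norm_eq_abs, add_mul]
      refine (abs_add_le _ _).trans (add_le_add ?_ ?_)
      · rw [abs_mul, mul_comm]
        apply mul_le_mul _ (norm_fst_le p) (abs_nonneg _) (by positivity)
        refine (abs_sub _ _).trans ?_
        have := hb' b0
        simp only [abs_one]
        linarith
      · refine (hb' _).trans ?_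
        rw [div_mul_eq_mul_div, one_mul]
        exact div_le_div_of_nonneg_right (norm_snd_le p) hr.le
  let S : Set ((ℝ × (Fin n → ℝ)) →L[ℝ] (ℝ × (Fin n → ℝ))) := (fun q : ((ℝ × (Fin n → ℝ)) →L[ℝ] ℝ) × (Fin n → ℝ) =>
    ContinuousLinearMap.smulRightL ℝ (ℝ × (Fin n → ℝ)) (ℝ × (Fin n → ℝ)) q.1 ((1 : ℝ), q.2)) '' (D ×ˢ B)
  have hS : IsCompact S := by
    apply (hDc.prod hc).image
    fun_prop
  have hK := aux_isCompact_convexHull hS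
  have hKconv := convex_convexHull ℝ S
  set K := convexHull ℝ S
  let P' : (ℝ × (Fin n → ℝ)) →L[ℝ] (ℝ × (Fin n → ℝ)) := LinearMap.toContinuousLinearMap P
  -- elements of K
  have hK1 : K ⊆ {X | IsEntanglementBreaking C C X.toLinearMap ∧ (X (1, b0)).1 = 1} := by
    apply convexHull_min
    · rintro _ ⟨⟨φ, b⟩, ⟨hφ, hb⟩, rfl⟩
      refine ⟨⟨1, fun _ => φ.toLinearMap, fun _ => (1, b), fun _ => hφ.1,
        fun _ => aux_mem_one hb, fun v => by simp⟩, ?_⟩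
      simp [hφ.2]
    · rintro X ⟨hX1, hX2⟩ Y ⟨hY1, hY2⟩ s t hs ht hst
      refine ⟨?_, ?_⟩
      · simpa using aux_eb_add (aux_eb_smul hX1 hs) (aux_eb_smul hY1 ht)
      · simp [hX2, hY2, hst]
  let ray : Set ((ℝ × (Fin n → ℝ)) →L[ℝ] (ℝ × (Fin n → ℝ))) := (fun s : ℝ => s • P') '' Set.Ici 0
  have hP0 : P' ≠ 0 := by
    intro h
    apply hP
    have h0 : P = 0 := by simpa [P'] using h
    exact ⟨0, fun _ => 0, fun _ => 0, by simp, by simp, by simp [h0]⟩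
  have hrayc : IsClosed ray :=
    (isClosedEmbedding_smul_left hP0).isClosedMap _ isClosed_Ici
  have hrayconv : Convex ℝ ray := by
    have := (convex_Ici (0 : ℝ)).linear_image (LinearMap.toSpanSingleton ℝ ((ℝ × (Fin n → ℝ)) →L[ℝ] (ℝ × (Fin n → ℝ))) P')
    exact this
  have hdisj : Disjoint ray K := by
    rw [Set.disjoint_left]
    rintro _ ⟨s, hs, rfl⟩ hX
    obtain ⟨h1, h2⟩ := hK1 hX
    have hs0 : s ≠ 0 := by
      rintro rfl
      simp at h2
    apply hP
    have := aux_eb_smul h1 (inv_nonneg.2 hs)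
    have e : s⁻¹ • (s • P').toLinearMap = P := by
      refine LinearMap.ext fun v => ?_
      simp [P', smul_smul, hs0]
    simpa only [e] using this
  obtain ⟨f, u, v, hf1, huv, hf2⟩ :=
    geometric_hahn_banach_closed_compact hrayconv hrayc hKconv hK hdisj
  have hu : 0 < u := by simpa using hf1 0 ⟨0, Set.self_mem_Ici, by simp⟩
  have hfP : f P' ≤ 0 := by
    by_contra! h
    have := hf1 ((u / f P') • P') ⟨u / f P', (div_pos hu h).le, rfl⟩
    rw [map_smul, smul_eq_mul, div_mul_cancel₀ _ h.ne'] at this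
    exact lt_irrefl _ this
  obtain ⟨g, hg⟩ : ∃ g : ((ℝ × (Fin n → ℝ)) →L[ℝ] (ℝ × (Fin n → ℝ))) →L[ℝ] ℝ, 0 < g P' := by
    obtain ⟨g, hg⟩ := geometric_hahn_banach_point_point (E := (ℝ × (Fin n → ℝ)) →L[ℝ] (ℝ × (Fin n → ℝ))) hP0.symm
    exact ⟨g, by simpa using hg⟩
  obtain ⟨M, hM⟩ := (hK.image g.continuous).bddAbove
  let M' := max M 1
  have hM' : 0 < M' := lt_max_of_lt_right one_pos
  have hMK : ∀ X ∈ K, g X ≤ M' := fun X hX => (hM ⟨X, hX, rfl⟩).trans (le_max_left _ _)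
  let F : ((ℝ × (Fin n → ℝ)) →L[ℝ] (ℝ × (Fin n → ℝ))) →L[ℝ] ℝ := f - (u / M') • g
  have hFP : F P' < 0 := by
    have := mul_pos (div_pos hu hM') hg
    simp [F]
    linarith
  have hFK : ∀ X ∈ K, 0 < F X := by
    intro X hX
    have h1 := hf2 X hX
    have h2 := mul_le_mul_of_nonneg_left (hMK X hX) (div_pos hu hM').le
    rw [div_mul_cancel₀ _ hM'.ne'] at h2
    simp [F]
    linarith
  refine ⟨F.toLinearMap ∘ₗ (LinearMap.toContinuousLinearMap :
    ((ℝ × (Fin n → ℝ)) →ₗ[ℝ] (ℝ × (Fin n → ℝ))) ≃ₗ[ℝ] ((ℝ × (Fin n → ℝ)) →L[ℝ] (ℝ × (Fin n → ℝ)))).toLinearMap, hFP, ?_⟩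
  intro φ hφ x hx
  obtain ⟨hx0, b, hbB, hxb⟩ := aux_mem_cone hx
  have hb0B : b0 ∈ B := interior_subset hb0
  have hφ0 : 0 ≤ φ (1, b0) := hφ _ (aux_mem_one hb0B)
  rcases hφ0.eq_or_lt with h0 | h0
  · have hz : ∀ v, φ (0, v) = 0 := by
      intro v
      have := aux_dual_bound hr hb hφ v
      rw [← h0] at this
      simpa using this
    have : φ = 0 := by
      refine LinearMap.ext fun p => ?_
      rw [aux_split φ b0 p, ← h0, hz, hz]
      simp
    have e : LinearMap.smulRight φ x = 0 := by rw [this]; exact LinearMap.ext fun p => by simp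
    rw [e, map_zero]
  · let ψ : (ℝ × (Fin n → ℝ)) →L[ℝ] ℝ := (φ (1, b0))⁻¹ • LinearMap.toContinuousLinearMap φ
    have hψ : ψ ∈ D := by
      refine ⟨fun x hx => ?_, ?_⟩
      · simpa [ψ] using mul_nonneg (inv_nonneg.2 hφ0) (hφ x hx)
      · simp [ψ, h0.ne']
    have hm : ContinuousLinearMap.smulRightL ℝ (ℝ × (Fin n → ℝ)) (ℝ × (Fin n → ℝ)) ψ ((1 : ℝ), b) ∈ K :=
      subset_convexHull ℝ _ ⟨(ψ, b), ⟨hψ, hbB⟩, rfl⟩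
    have e : LinearMap.toContinuousLinearMap (LinearMap.smulRight φ x) =
        (φ (1, b0) * x.1) • ContinuousLinearMap.smulRightL ℝ (ℝ × (Fin n → ℝ)) (ℝ × (Fin n → ℝ)) ψ ((1 : ℝ), b) := by
      refine ContinuousLinearMap.ext fun v => ?_
      have : (φ v) • x = (φ v) • (x.1 • ((1 : ℝ), b)) := by rw [← hxb]
      simp only [LinearMap.coe_toContinuousLinearMap', LinearMap.smulRight_apply, this]
      change _ = (φ (1, b0) * x.1) • (((φ (1, b0))⁻¹ * φ v) • ((1 : ℝ), b))
      rw [smul_smul, smul_smul]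
      congr 1
      field_simp
    simp only [LinearMap.comp_apply, LinearEquiv.coe_coe, ContinuousLinearMap.coe_coe]
    rw [e, map_smul]
    exact mul_nonneg (mul_nonneg hφ0 hx0) (hFK _ hm).le
end Cone
section Twirl
open scoped Matrix

theorem aux_min {m : Type*} [Fintype m] [DecidableEq m] {K : Set (Matrix m m ℝ)}
    (hK : IsCompact K) (hKc : Convex ℝ K) (hne : K.Nonempty) :
    ∃ T ∈ K, ∀ O : Matrix m m ℝ, Oᵀ * O = 1 → O * T * Oᵀ ∈ K → O * T * Oᵀ = T := by
  let N : Matrix m m ℝ → ℝ := fun X => ∑ i, ∑ j, X i j ^ 2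
  have hN : ∀ X, N X = (Xᵀ * X).trace := by
    intro X
    simp only [N, Matrix.trace, Matrix.diag, Matrix.mul_apply, Matrix.transpose_apply]
    rw [Finset.sum_comm]
    simp [sq]
  have hNc : Continuous N := by
    simp only [N]
    fun_prop
  obtain ⟨T, hT, hmin⟩ := hK.exists_isMinOn hne hNc.continuousOn
  refine ⟨T, hT, fun O hO hT' => ?_⟩
  have hinv : N (O * T * Oᵀ) = N T := by
    rw [hN, hN]
    have : (O * T * Oᵀ)ᵀ * (O * T * Oᵀ) = O * (Tᵀ * T * Oᵀ) := by
      simp only [Matrix.transpose_mul, Matrix.transpose_transpose, Matrix.mul_assoc]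
      rw [← Matrix.mul_assoc Oᵀ O, hO, Matrix.one_mul]
    rw [this, Matrix.trace_mul_comm, Matrix.mul_assoc, hO, Matrix.mul_one]
  set T' := O * T * Oᵀ
  have hmid : (1 / 2 : ℝ) • T + (1 / 2 : ℝ) • T' ∈ K :=
    hKc hT hT' (by norm_num) (by norm_num) (by norm_num)
  have h1 : N T ≤ N ((1 / 2 : ℝ) • T + (1 / 2 : ℝ) • T') := hmin hmid
  have h2 : N ((1 / 2 : ℝ) • T + (1 / 2 : ℝ) • T') + 1 / 4 * N (T' - T)
      = 1 / 2 * N T + 1 / 2 * N T' := by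
    simp only [N, Finset.mul_sum, ← Finset.sum_add_distrib]
    refine Finset.sum_congr rfl fun i _ => Finset.sum_congr rfl fun j _ => ?_
    simp
    ring
  have h3 : N (T' - T) ≤ 0 := by linarith
  have h4 : ∀ i ∈ Finset.univ, 0 ≤ ∑ j, (T' - T) i j ^ 2 :=
    fun i _ => Finset.sum_nonneg fun j _ => sq_nonneg _
  have h5 := (Finset.sum_eq_zero_iff_of_nonneg h4).1 (le_antisymm h3 (Finset.sum_nonneg h4))
  ext i j
  have h6 := (Finset.sum_eq_zero_iff_of_nonneg (fun j _ => sq_nonneg ((T' - T) i j))).1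
    (h5 i (Finset.mem_univ i)) j (Finset.mem_univ j)
  have h7 : T' i j - T i j = 0 := by simpa using h6
  linarith

variable {n : ℕ} {B : Set (Fin n → ℝ)}

theorem aux_iso_iff (g : Matrix (Fin n) (Fin n) ℝ) : g ∈ isoSet n B ↔
    gᵀ * g = 1 ∧ ∀ x ∈ B, g.mulVec x ∈ B ∧ gᵀ.mulVec x ∈ B := by
  unfold isoSet
  simp only [Set.mem_setOf_eq, Matrix.mem_orthogonalGroup_iff', Matrix.star_eq_conjTranspose,
    Matrix.conjTranspose_eq_transpose_of_trivial]
  refine and_congr_right fun h => ?_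
  have h' : g * gᵀ = 1 := mul_eq_one_comm.1 h
  constructor
  · intro hB x hx
    refine ⟨hB ▸ ⟨x, hx, rfl⟩, ?_⟩
    rw [← hB] at hx
    obtain ⟨y, hy, rfl⟩ := hx
    simpa [Matrix.mulVec_mulVec, h] using hy
  · intro hB
    apply Set.Subset.antisymm
    · rintro _ ⟨x, hx, rfl⟩
      exact (hB x hx).1
    · intro x hx
      exact ⟨gᵀ.mulVec x, (hB x hx).2, by simp [Matrix.mulVec_mulVec, h']⟩

theorem aux_iso_compact (hc : IsClosed B) : IsCompact (isoSet n B) := by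
  have hbox : IsCompact (Set.univ.pi fun _ : Fin n => Set.univ.pi fun _ : Fin n =>
      Set.Icc (-1 : ℝ) 1) := isCompact_univ_pi fun _ => isCompact_univ_pi fun _ => isCompact_Icc
  refine hbox.of_isClosed_subset ?_ ?_
  · have : isoSet n B = {g | gᵀ * g = 1} ∩
        ⋂ x ∈ B, ({g | g.mulVec x ∈ B} ∩ {g | gᵀ.mulVec x ∈ B}) := by
      ext g; simp [aux_iso_iff]
    rw [this]
    apply IsClosed.inter
    · exact isClosed_eq (by fun_prop) continuous_const
    · refine isClosed_biInter fun x _ => IsClosed.inter ?_ ?_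
      · exact hc.preimage (by fun_prop)
      · exact hc.preimage (by fun_prop)
  · intro g hg i _ j _
    have := entry_norm_bound_of_unitary (𝕜 := ℝ) hg.1 i j
    rw [Real.norm_eq_abs, abs_le] at this
    exact this

theorem aux_iso_transpose {g : Matrix (Fin n) (Fin n) ℝ} (hg : g ∈ isoSet n B) :
    gᵀ ∈ isoSet n B := by
  rw [aux_iso_iff] at hg ⊢
  refine ⟨?_, fun x hx => ⟨(hg.2 x hx).2, ?_⟩⟩
  · rw [Matrix.transpose_transpose]; exact mul_eq_one_comm.1 hg.1
  · rw [Matrix.transpose_transpose]; exact (hg.2 x hx).1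

theorem aux_iso_mul {g h : Matrix (Fin n) (Fin n) ℝ} (hg : g ∈ isoSet n B)
    (hh : h ∈ isoSet n B) : g * h ∈ isoSet n B := by
  rw [aux_iso_iff] at hg hh ⊢
  refine ⟨?_, fun x hx => ⟨?_, ?_⟩⟩
  · rw [Matrix.transpose_mul, Matrix.mul_assoc, ← Matrix.mul_assoc gᵀ, hg.1, Matrix.one_mul, hh.1]
  · rw [← Matrix.mulVec_mulVec]; exact (hg.2 _ (hh.2 x hx).1).1
  · rw [Matrix.transpose_mul, ← Matrix.mulVec_mulVec]; exact (hh.2 _ (hg.2 x hx).2).2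

theorem aux_fixed (hn : 2 ≤ n) (hsym : EnoughSymmetries n B) (v : Fin n → ℝ)
    (hv : ∀ g ∈ isoSet n B, g.mulVec v = v) : v = 0 := by
  obtain ⟨c, hc⟩ := hsym (Matrix.vecMulVec v v) (by
    intro g hg
    rw [Matrix.mul_vecMulVec, Matrix.vecMulVec_mul, hv g hg]
    rw [← Matrix.mulVec_transpose, hv _ (aux_iso_transpose hg)])
  have hij : ∀ i j, v i * v j = if i = j then c else 0 := by
    intro i j
    have := congrFun (congrFun hc i) j
    simpa [Matrix.vecMulVec_apply, Matrix.one_apply] using this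
  ext i
  obtain ⟨j, hj⟩ : ∃ j : Fin n, j ≠ i := by
    haveI : Nontrivial (Fin n) := Fin.nontrivial_iff_two_le.2 hn
    exact exists_ne i
  have h1 := hij i i
  have h2 := hij j j
  have h3 := hij i j
  simp only [if_true, if_neg hj.symm] at h1 h2 h3
  rcases mul_eq_zero.1 h3 with h | h
  · simpa using h
  · rw [h] at h2
    rw [← h2] at h1
    simpa using h1

/-- block embedding of the isometry group -/
def auxU (g : Matrix (Fin n) (Fin n) ℝ) : Matrix (Unit ⊕ Fin n) (Unit ⊕ Fin n) ℝ :=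
  Matrix.fromBlocks 1 0 0 g

/-- the standard basis -/
def auxBasis (n : ℕ) : Module.Basis (Unit ⊕ Fin n) ℝ (ℝ × (Fin n → ℝ)) :=
  (Module.Basis.singleton Unit ℝ).prod (Pi.basisFun ℝ (Fin n))

theorem aux_toLin_diag (a : ℝ) (D : Matrix (Fin n) (Fin n) ℝ) :
    Matrix.toLin (auxBasis n) (auxBasis n)
      (Matrix.fromBlocks (a • (1 : Matrix Unit Unit ℝ)) 0 0 D) =
      LinearMap.prodMap (a • LinearMap.id) (Matrix.toLin' D) := by
  apply (LinearMap.toMatrix (auxBasis n) (auxBasis n)).injective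
  rw [LinearMap.toMatrix_toLin]
  ext i j
  rw [LinearMap.toMatrix_apply]
  rcases i with i | i <;> rcases j with j | j <;> simp [auxBasis, Matrix.one_apply]

theorem aux_U_pos {g : Matrix (Fin n) (Fin n) ℝ} (hg : g ∈ isoSet n B)
    (x : ℝ × (Fin n → ℝ)) (hx : x ∈ coneOverBody n B) :
    Matrix.toLin (auxBasis n) (auxBasis n) (auxU g) x ∈ coneOverBody n B := by
  have h := aux_toLin_diag 1 g
  rw [one_smul] at h
  unfold auxU
  rw [h]
  obtain ⟨h0, b, hb, hx⟩ := hx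
  refine ⟨by simpa using h0, g.mulVec b, (((aux_iso_iff g).1 hg).2 b hb).1, ?_⟩
  simp [← hx, Matrix.mulVec_smul]

theorem aux_U_transpose (g : Matrix (Fin n) (Fin n) ℝ) : (auxU g)ᵀ = auxU gᵀ := by
  simp [auxU, Matrix.fromBlocks_transpose]

theorem aux_U_mul (g h : Matrix (Fin n) (Fin n) ℝ) : auxU g * auxU h = auxU (g * h) := by
  simp [auxU, Matrix.fromBlocks_multiply]

theorem aux_U_orth {g : Matrix (Fin n) (Fin n) ℝ} (hg : g ∈ isoSet n B) :
    (auxU g)ᵀ * auxU g = 1 := by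
  rw [aux_U_transpose, aux_U_mul, ((aux_iso_iff g).1 hg).1]
  simp [auxU]

theorem aux_commute (hn : 2 ≤ n) (hsym : EnoughSymmetries n B)
    (T : Matrix (Unit ⊕ Fin n) (Unit ⊕ Fin n) ℝ)
    (hT : ∀ g ∈ isoSet n B, auxU g * T = T * auxU g) :
    ∃ α β : ℝ, Matrix.toLin (auxBasis n) (auxBasis n) T = isotropicMap n α β := by
  have hT' : ∀ g ∈ isoSet n B, T.toBlocks₁₂ = T.toBlocks₁₂ * g ∧ g * T.toBlocks₂₁ = T.toBlocks₂₁ ∧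
      g * T.toBlocks₂₂ = T.toBlocks₂₂ * g := by
    intro g hg
    have h := hT g hg
    rw [← Matrix.fromBlocks_toBlocks T] at h
    simp only [auxU, Matrix.fromBlocks_multiply] at h
    simp [Matrix.fromBlocks_inj] at h
    exact h
  obtain ⟨β, hβ⟩ := hsym T.toBlocks₂₂ fun g hg => (hT' g hg).2.2
  have h12 : T.toBlocks₁₂ = 0 := by
    ext i j
    have := aux_fixed hn hsym (T.toBlocks₁₂ i) (fun g hg => by
      have h := congrFun (hT' _ (aux_iso_transpose hg)).1 i
      rw [← Matrix.vecMul_transpose]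
      exact h.symm)
    exact congrFun this j
  have h21 : T.toBlocks₂₁ = 0 := by
    ext i j
    have := aux_fixed hn hsym (fun i => T.toBlocks₂₁ i j) (fun g hg => by
      ext i
      exact congrFun (congrFun (hT' _ hg).2.1 i) j)
    exact congrFun this i
  refine ⟨T.toBlocks₁₁ () (), β, ?_⟩
  have h11 : T.toBlocks₁₁ = T.toBlocks₁₁ () () • (1 : Matrix Unit Unit ℝ) := by
    ext i j; simp
  conv_lhs => rw [← Matrix.fromBlocks_toBlocks T, h12, h21, hβ, h11, aux_toLin_diag]
  simp [isotropicMap]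

theorem aux_main_twirl (hn : 2 ≤ n) (hB : IsConvexBody n B) (hsym : EnoughSymmetries n B)
    (R : (ℝ × (Fin n → ℝ)) →ₗ[ℝ] (ℝ × (Fin n → ℝ)))
    (hR : IsEntanglementAnnihilating (coneOverBody n B) (coneOverBody n B) R) :
    ∃ α β : ℝ, IsEntanglementAnnihilating (coneOverBody n B) (coneOverBody n B)
      (isotropicMap n α β) ∧
      LinearMap.trace ℝ _ (isotropicMap n α β) = LinearMap.trace ℝ _ R := by
  let bb := auxBasis n
  let RM := LinearMap.toMatrix bb bb R
  let orb : Set (Matrix (Unit ⊕ Fin n) (Unit ⊕ Fin n) ℝ) :=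
    (fun g => auxU g * RM * (auxU g)ᵀ) '' isoSet n B
  have horb : IsCompact orb := by
    apply (aux_iso_compact hB.1.isClosed).image
    unfold auxU
    fun_prop
  have h1mem : (1 : Matrix (Fin n) (Fin n) ℝ) ∈ isoSet n B := by
    rw [aux_iso_iff]; simp
  obtain ⟨T, hTK, hT⟩ := aux_min (aux_isCompact_convexHull horb) (convex_convexHull ℝ orb)
    ⟨_, subset_convexHull ℝ _ ⟨1, h1mem, rfl⟩⟩
  have hinv : ∀ g ∈ isoSet n B, auxU g * T * (auxU g)ᵀ ∈ convexHull ℝ orb := by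
    intro g hg
    let L : Matrix (Unit ⊕ Fin n) (Unit ⊕ Fin n) ℝ →ₗ[ℝ] Matrix (Unit ⊕ Fin n) (Unit ⊕ Fin n) ℝ :=
      LinearMap.mulRight ℝ (auxU g)ᵀ ∘ₗ LinearMap.mulLeft ℝ (auxU g)
    have : convexHull ℝ orb ⊆ L ⁻¹' (convexHull ℝ orb) := by
      apply convexHull_min
      · rintro _ ⟨h, hh, rfl⟩
        apply subset_convexHull
        refine ⟨g * h, aux_iso_mul hg hh, ?_⟩
        simp [L, ← aux_U_mul, Matrix.transpose_mul, Matrix.mul_assoc]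
      · exact (convex_convexHull ℝ _).linear_preimage _
    exact this hTK
  have hcomm : ∀ g ∈ isoSet n B, auxU g * T = T * auxU g := by
    intro g hg
    have := hT (auxU g) (aux_U_orth hg) (hinv g hg)
    conv_rhs => rw [← this]
    rw [Matrix.mul_assoc _ _ (auxU g), aux_U_orth hg, Matrix.mul_one]
  obtain ⟨α, β, hαβ⟩ := aux_commute hn hsym T hcomm
  refine ⟨α, β, ?_⟩
  rw [← hαβ]
  obtain ⟨ι, _, w, z, hw, hw1, hz, hTz⟩ := mem_convexHull_iff_exists_fintype.1 hTK
  choose g hg hgz using hz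
  constructor
  · have e : Matrix.toLin (auxBasis n) (auxBasis n) T =
        ∑ i, w i • (Matrix.toLin bb bb (auxU (g i)) ∘ₗ R ∘ₗ Matrix.toLin bb bb (auxU (g i)ᵀ)) := by
      rw [← hTz, map_sum]
      refine Finset.sum_congr rfl fun i _ => ?_
      rw [map_smul, ← hgz i]
      simp only [RM]
      rw [Matrix.toLin_mul bb bb bb, Matrix.toLin_mul bb bb bb, Matrix.toLin_toMatrix,
        aux_U_transpose, LinearMap.comp_assoc]
    rw [e]
    exact aux_twirl w hw hw1 _ _ (fun i => aux_U_pos (hg i))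
      (fun i => aux_U_pos (aux_iso_transpose (hg i))) R hR
  · rw [Matrix.trace_toLin_eq, LinearMap.trace_eq_matrix_trace ℝ bb R, ← hTz, Matrix.trace_sum]
    have : ∀ i, (w i • z i).trace = w i * RM.trace := by
      intro i
      rw [Matrix.trace_smul, ← hgz i, smul_eq_mul]
      simp only []
      rw [Matrix.trace_mul_comm, ← Matrix.mul_assoc, aux_U_orth (hg i), Matrix.one_mul]
    simp only [this, ← Finset.sum_mul, hw1, one_mul, RM]

theorem aux_ea_pos (hB : IsConvexBody n B) {P : (ℝ × (Fin n → ℝ)) →ₗ[ℝ] (ℝ × (Fin n → ℝ))}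
    (hP : IsEntanglementAnnihilating (coneOverBody n B) (coneOverBody n B) P)
    (x : ℝ × (Fin n → ℝ)) (hx : x ∈ coneOverBody n B) : P x ∈ coneOverBody n B := by
  apply aux_bidual hB
  intro φ hφ
  have h1 : PiTensorProduct.tprod ℝ (fun _ : Fin 1 => x) ∈ maxTensorPow (coneOverBody n B) 1 := by
    intro ψ hψ
    simp [dualPairing]
    exact hψ 0 x hx
  have h2 := hP 1 le_rfl h1
  have h3 : minTensorPow (coneOverBody n B) 1 ⊆
      (dualPairing (fun _ : Fin 1 => φ)) ⁻¹' (Set.Ici 0) := by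
    apply convexHull_min
    · rintro _ ⟨y, hy, rfl⟩
      simp [dualPairing]
      exact hφ _ (hy 0)
    · exact (convex_Ici 0).linear_preimage _
  have h4 := h3 h2
  simpa [dualPairing] using h4

theorem aux_dim_one {B : Set (Fin 1 → ℝ)} (hB : IsConvexBody 1 B) :
    IsResilientPair (coneOverBody 1 B) (coneOverBody 1 B) := by
  intro P hP
  have hpos := aux_ea_pos hB hP
  obtain ⟨hc, hconv, b0, hb0⟩ := hB
  obtain ⟨r, hr, hb⟩ := Metric.nhds_basis_closedBall.mem_iff.1 (mem_interior_iff_mem_nhds.1 hb0)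
  have hb0B : b0 ∈ B := interior_subset hb0
  have hcont : ContinuousOn (fun x : Fin 1 → ℝ => x 0) B := by fun_prop
  obtain ⟨p, hp, hpm⟩ := hc.exists_isMinOn ⟨b0, hb0B⟩ hcont
  obtain ⟨q, hq, hqm⟩ := hc.exists_isMaxOn ⟨b0, hb0B⟩ hcont
  have hlt : p 0 < q 0 := by
    have h1 : p 0 ≤ b0 0 := hpm hb0B
    have hm : b0 + (fun _ => r) ∈ B := by
      apply hb
      rw [mem_closedBall_iff_norm, add_sub_cancel_left]
      rw [pi_norm_le_iff_of_nonneg hr.le]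
      intro i
      rw [Real.norm_of_nonneg hr.le]
    have h2 : b0 0 + r ≤ q 0 := hqm hm

    linarith
  have hd : 0 < q 0 - p 0 := sub_pos.2 hlt
  let l : Module.Dual ℝ (ℝ × (Fin 1 → ℝ)) :=
    LinearMap.proj (0 : Fin 1) ∘ₗ LinearMap.snd ℝ ℝ (Fin 1 → ℝ)
  let t : Module.Dual ℝ (ℝ × (Fin 1 → ℝ)) := LinearMap.fst ℝ ℝ (Fin 1 → ℝ)
  refine ⟨2, ![(q 0 - p 0)⁻¹ • (l - p 0 • t), (q 0 - p 0)⁻¹ • (q 0 • t - l)],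
    ![P (1, q), P (1, p)], ?_, ?_, ?_⟩
  · have key : ∀ x ∈ coneOverBody 1 B, p 0 * x.1 ≤ x.2 0 ∧ x.2 0 ≤ q 0 * x.1 := by
      intro x hx
      obtain ⟨h0, b, hb, hx⟩ := aux_mem_cone hx
      rw [hx]
      have h1 : p 0 ≤ b 0 := hpm hb
      have h2 : b 0 ≤ q 0 := hqm hb
      simp
      constructor <;> nlinarith
    intro i x hx
    have := key x hx
    fin_cases i
    · simp [l, t]
      exact mul_nonneg (inv_nonneg.2 hd.le) (by linarith)
    · simp [l, t]
      exact mul_nonneg (inv_nonneg.2 hd.le) (by linarith)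
  · intro i
    fin_cases i
    · exact hpos _ (aux_mem_one hq)
    · exact hpos _ (aux_mem_one hp)
  · intro v
    rw [Fin.sum_univ_two]
    simp only [Matrix.cons_val_zero, Matrix.cons_val_one]
    rw [← map_smul, ← map_smul, ← map_add]
    congr 1
    ext i
    · simp [l, t]
      field_simp
      ring
    · have : i = 0 := Subsingleton.elim _ _
      subst this
      simp [l, t]
      field_simp
      ring

end Twirl

theorem aux_final
    (n : ℕ) (hn : 1 ≤ n) (B : Set (Fin n → ℝ)) (hB : IsConvexBody n B)
    (hsym : EnoughSymmetries n B) (h : 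
      ∀ α β : ℝ,
        IsEntanglementAnnihilating (coneOverBody n B) (coneOverBody n B)
          (isotropicMap n α β) →
        IsEntanglementBreaking (coneOverBody n B) (coneOverBody n B)
          (isotropicMap n α β)) :
    IsResilientPair (coneOverBody n B) (coneOverBody n B) := by
  rcases hn.eq_or_lt with rfl | hn2
  · exact aux_dim_one hB
  intro P hP
  by_contra hcon
  obtain ⟨f, hfP, hf⟩ := aux_sep hB hcon
  obtain ⟨Q, hQ1, hQ2⟩ := aux_trace_dual f
  have hQpos : ∀ x ∈ coneOverBody n B, Q x ∈ coneOverBody n B := by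
    intro x hx
    apply aux_bidual hB
    intro φ hφ
    rw [hQ2]
    exact hf φ hφ x hx
  obtain ⟨α, β, h1, h2⟩ := aux_main_twirl hn2 hB hsym _ (aux_comp Q P hQpos hP)
  have := aux_eb_trace (h α β h1)
  rw [h2, hQ1] at this
  linarith

/-- **Corollary (resilience of cones with enough symmetries).** `C_B` is resilient iff every
entanglement annihilating isotropic map is entanglement breaking. -/
theorem coneOverBody_resilient_iff_isotropic
    (n : ℕ) (hn : 1 ≤ n) (B : Set (Fin n → ℝ)) (hB : IsConvexBody n B)
    (hsym : EnoughSymmetries n B) :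
    IsResilientPair (coneOverBody n B) (coneOverBody n B) ↔
      ∀ α β : ℝ,
        IsEntanglementAnnihilating (coneOverBody n B) (coneOverBody n B)
          (isotropicMap n α β) →
        IsEntanglementBreaking (coneOverBody n B) (coneOverBody n B)
          (isotropicMap n α β) := by
  exact ⟨fun h α β => h _, fun h => aux_final n hn B hB hsym h⟩

end
end

section
/- Let k, d_A, d_B ≥ 1, let P : Herm_{d_A} → Herm_{d_B} be a (PSD(C^{d_A}), PSD(C^{d_B}))-entanglement annihilating linear map, and let Q : Herm_{d_B} → Herm_{d_A} be a linear map factoring through the Lorentz cone L_k, i.e., Q = Σ_{i=1}^m S_i ∘ R_i where each R_i : Herm_{d_B} → R^{k+1} is (PSD(C^{d_B}), L_k)-positive and each S_i : R^{k+1} → Herm_{d_A} is (L_k, PSD(C^{d_A}))-positive. Then Q ∘ P : Herm_{d_A} → Herm_{d_A} is (PSD(C^{d_A}), PSD(C^{d_A}))-entanglement breaking. -/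
open scoped TensorProduct ComplexOrder
open Set

noncomputable section

abbrev HermMat (d : ℕ) := ↥(selfAdjoint (Matrix (Fin d) (Fin d) ℂ))

/-- The cone of positive semidefinite matrices inside the Hermitian matrices. -/
def psdCone (d : ℕ) : Set (HermMat d) :=
  {X | Matrix.PosSemidef (X : Matrix (Fin d) (Fin d) ℂ)}

section mat
open Matrix
theorem cliff (k : ℕ) : ∃ (ι : Type) (_ : Fintype ι) (_ : DecidableEq ι) (_ : Nonempty ι)
    (A : Fin k → Matrix ι ι ℝ), (∀ i, (A i)ᵀ = A i) ∧
      ∀ i j, A i * A j + A j * A i = if i = j then (2:ℝ) • (1 : Matrix ι ι ℝ) else 0 := by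
  induction k with
  | zero => exact ⟨Unit, inferInstance, inferInstance, inferInstance, fun i => i.elim0,
      fun i => i.elim0, fun i => i.elim0⟩
  | succ k ih =>
    obtain ⟨ι, _, _, _, A, hs, hA⟩ := ih
    refine ⟨ι ⊕ ι, inferInstance, inferInstance, inferInstance,
      Fin.cons (fromBlocks 1 0 0 (-1)) (fun i => fromBlocks 0 (A i) (A i) 0), ?_, ?_⟩
    · intro i
      refine Fin.cases ?_ (fun i => ?_) i
      · simp [fromBlocks_transpose]
      · simp [fromBlocks_transpose, hs]
    · intro i j
      refine Fin.cases ?_ (fun i => ?_) i <;> refine Fin.cases ?_ (fun j => ?_) j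
      · simp [fromBlocks_multiply, fromBlocks_add, ← fromBlocks_one, fromBlocks_smul]
        module
      · simp [fromBlocks_multiply, fromBlocks_add, (Fin.succ_ne_zero _).symm]
      · simp [fromBlocks_multiply, fromBlocks_add, Fin.succ_ne_zero]
      · simp only [Fin.cons_succ, fromBlocks_multiply, fromBlocks_add, Fin.succ_inj]
        simp only [zero_mul, mul_zero, zero_add, add_zero, hA]
        split_ifs
        · simp [← fromBlocks_one, fromBlocks_smul]
        · simp

theorem cliff_sq {k : ℕ} {ι : Type} [Fintype ι] [DecidableEq ι] (A : Fin k → Matrix ι ι ℝ)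
    (hs : ∀ i, (A i)ᵀ = A i)
    (hA : ∀ i j, A i * A j + A j * A i = if i = j then (2:ℝ) • (1 : Matrix ι ι ℝ) else 0)
    (x : Fin k → ℝ) :
    (∑ j, x j • A j)ᵀ * (∑ j, x j • A j) = (∑ j, x j ^ 2) • (1 : Matrix ι ι ℝ) := by
  have h1 : (∑ j, x j • A j)ᵀ = ∑ j, x j • A j := by simp [transpose_sum, hs]
  rw [h1]
  have h2 : (∑ j, x j • A j) * (∑ j, x j • A j) = ∑ i, ∑ j, (x i * x j) • (A i * A j) := by
    rw [Finset.sum_mul_sum]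
    exact Finset.sum_congr rfl fun i _ => Finset.sum_congr rfl fun j _ => by
      rw [smul_mul_smul_comm]
  have h3 : (∑ j, x j • A j) * (∑ j, x j • A j) = ∑ i, ∑ j, (x i * x j) • (A j * A i) := by
    rw [h2, Finset.sum_comm]
    exact Finset.sum_congr rfl fun i _ => Finset.sum_congr rfl fun j _ => by rw [mul_comm]
  have h4 : (2:ℝ) • ((∑ j, x j • A j) * (∑ j, x j • A j))
      = (2:ℝ) • ((∑ j, x j ^ 2) • (1 : Matrix ι ι ℝ)) := by
    rw [two_smul]
    nth_rw 1 [h2]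
    rw [h3, ← Finset.sum_add_distrib]
    simp_rw [← Finset.sum_add_distrib, ← smul_add, hA]
    simp [smul_smul, Finset.sum_smul, Finset.smul_sum]
    refine Finset.sum_congr rfl fun i _ => ?_
    congr 1; ring
  exact smul_right_injective _ (two_ne_zero) h4

theorem cliff_prod {ι : Type} [Fintype ι] [DecidableEq ι] (m : ℕ) (M : Fin m → Matrix ι ι ℝ)
    (c : Fin m → ℝ) (h : ∀ l, (M l)ᵀ * M l = c l • (1 : Matrix ι ι ℝ)) :
    (List.ofFn M).prodᵀ * (List.ofFn M).prod = (∏ l, c l) • (1 : Matrix ι ι ℝ) := by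
  induction m with
  | zero => simp
  | succ m ih =>
    rw [List.ofFn_succ, List.prod_cons, Fin.prod_univ_succ, transpose_mul, Matrix.mul_assoc,
      ← Matrix.mul_assoc (M 0)ᵀ, h 0]
    simp [ih _ _ (fun l => h l.succ), smul_smul]

theorem cliff_col {ι : Type} [Fintype ι] [DecidableEq ι] (M : Matrix ι ι ℝ) (c : ℝ)
    (h : Mᵀ * M = c • (1 : Matrix ι ι ℝ)) (y : ι) : ∑ z, M z y ^ 2 = c := by
  have := congrFun (congrFun h y) y
  simpa [Matrix.mul_apply, sq] using this

theorem sign_orth {k : ℕ} (i j : Fin k) :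
    ∑ ε : Fin k → ℤˣ, (((ε i : ℤ) : ℝ) * ((ε j : ℤ) : ℝ)) = if i = j then (2:ℝ)^k else 0 := by
  split_ifs with h
  · subst h
    have : ∀ u : ℤˣ, ((u : ℤ) : ℝ) * ((u : ℤ) : ℝ) = 1 := by
      intro u; rcases Int.units_eq_one_or u with h | h <;> simp [h]
    simp [this]
  · have := Equiv.sum_comp (Equiv.mulLeft (Pi.mulSingle i (-1) : Fin k → ℤˣ))
      (fun ε : Fin k → ℤˣ => (((ε i : ℤ) : ℝ) * ((ε j : ℤ) : ℝ)))
    have h' : j ≠ i := fun h2 => h h2.symm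
    simp [Pi.mulSingle_eq_of_ne h'] at this
    linarith

open scoped Matrix.Norms.L2Operator MatrixOrder ComplexOrder in
theorem herm_unit (d : ℕ) (X : selfAdjoint (Matrix (Fin d) (Fin d) ℂ)) : ∃ c : ℝ,
    Matrix.PosSemidef ((c • (1 : selfAdjoint (Matrix (Fin d) (Fin d) ℂ)) - X : selfAdjoint (Matrix (Fin d) (Fin d) ℂ)) : Matrix (Fin d) (Fin d) ℂ) := by
  refine ⟨‖(X : Matrix (Fin d) (Fin d) ℂ)‖, ?_⟩
  have := IsSelfAdjoint.le_algebraMap_norm_self (a := (X : Matrix (Fin d) (Fin d) ℂ)) X.2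
  rw [Matrix.le_iff, Algebra.algebraMap_eq_smul_one] at this
  simpa using this
end mat

theorem compact_hull {E : Type*} [NormedAddCommGroup E] [NormedSpace ℝ E] [FiniteDimensional ℝ E]
    {s : Set E} (hs : IsCompact s) : IsCompact (convexHull ℝ s) := by
  classical
  rcases s.eq_empty_or_nonempty with rfl | ⟨s0, hs0⟩
  · simp
  set n := Module.finrank ℝ E + 1
  have hK : IsCompact ((stdSimplex ℝ (Fin n)) ×ˢ (Set.univ.pi fun _ : Fin n => s)) :=
    (isCompact_stdSimplex ℝ (Fin n)).prod (isCompact_univ_pi fun _ => hs)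
  have hc : Continuous (fun p : (Fin n → ℝ) × (Fin n → E) => ∑ i, p.1 i • p.2 i) := by fun_prop
  convert hK.image hc using 1
  ext x
  constructor
  · intro hx
    obtain ⟨ι, _, z, w, hz, hai, hw, hw1, hwz⟩ := eq_pos_convex_span_of_mem_convexHull hx
    have hcard : Fintype.card ι ≤ Fintype.card (Fin n) := by
      simpa [n] using hai.card_le_finrank_succ.trans
        (Nat.succ_le_succ (Submodule.finrank_le _))
    obtain ⟨j⟩ := Function.Embedding.nonempty_of_card_le hcard
    refine ⟨(Function.extend j w 0, Function.extend j z (fun _ => s0)), ⟨⟨?_, ?_⟩, ?_⟩, ?_⟩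
    · intro i
      by_cases h : ∃ a, j a = i
      · obtain ⟨a, rfl⟩ := h
        simpa [j.injective.extend_apply] using (hw a).le
      · simp [Function.extend_apply' _ _ _ h]
    · rw [← hw1]
      symm
      refine Finset.sum_of_injOn j j.injective.injOn (by simp) ?_ ?_
      · intro i _ hi
        simp only []
        rw [Function.extend_apply']
        · rfl
        · simpa using hi
      · intro a _; simp [j.injective.extend_apply]
    · intro i _
      by_cases h : ∃ a, j a = i
      · obtain ⟨a, rfl⟩ := h
        simpa [j.injective.extend_apply] using hz (Set.mem_range_self a)
      · simpa [Function.extend_apply' _ _ _ h] using hs0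
    · rw [← hwz]
      symm
      refine Finset.sum_of_injOn j j.injective.injOn (by simp) ?_ ?_
      · intro i _ hi
        simp only []
        rw [Function.extend_apply']
        · simp
        · simpa using hi
      · intro a _; simp [j.injective.extend_apply]
  · rintro ⟨⟨w, z⟩, ⟨⟨hw, hw1⟩, hz⟩, rfl⟩
    exact mem_convexHull_of_exists_fintype w z hw hw1 (fun i => hz i trivial) rfl

/-- Basis vector of the space part. -/
def lorE {k : ℕ} (j : Fin k) : ℝ × EuclideanSpace ℝ (Fin k) := (0, EuclideanSpace.single j 1)

def lorE0 (k : ℕ) : ℝ × EuclideanSpace ℝ (Fin k) := (1, 0)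

theorem lor_decomp {k : ℕ} (x : ℝ × EuclideanSpace ℝ (Fin k)) :
    x = x.1 • lorE0 k + ∑ j, x.2 j • lorE j := by
  ext i
  · simp [lorE0, lorE, Prod.fst_sum]
  · simp [lorE0, lorE, Prod.snd_sum, Pi.single_apply]

/-- The consequence of annihilation that we use. -/
def AnnH {V : Type*} [AddCommGroup V] [Module ℝ V] (C : Set V) {k : ℕ}
    (f : V →ₗ[ℝ] (ℝ × EuclideanSpace ℝ (Fin k))) : Prop :=
  ∀ m : ℕ, 1 ≤ m → ∀ z ∈ maxTensorPow C m,
    ∀ Φ : MultilinearMap ℝ (fun _ : Fin m => ℝ × EuclideanSpace ℝ (Fin k)) ℝ,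
    (∀ x, (∀ l, x l ∈ lorentzCone k) → 0 ≤ Φ x) →
      0 ≤ PiTensorProduct.lift Φ (PiTensorProduct.map (fun _ => f) z)

theorem annH_of {V V' : Type*} [AddCommGroup V] [Module ℝ V] [AddCommGroup V'] [Module ℝ V']
    (C : Set V) (C' : Set V') {k : ℕ} (P : V →ₗ[ℝ] V') (hP : IsEntanglementAnnihilating C C' P)
    (R : V' →ₗ[ℝ] (ℝ × EuclideanSpace ℝ (Fin k))) (hR : Set.MapsTo R C' (lorentzCone k)) :
    AnnH C (R ∘ₗ P) := by
  intro m hm z hz Φ hΦ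
  have h1 := hP m hm hz
  have h2 : PiTensorProduct.map (fun _ : Fin m => R ∘ₗ P) z
      = PiTensorProduct.map (fun _ => R) (PiTensorProduct.map (fun _ => P) z) := by
    rw [PiTensorProduct.map_comp]; rfl
  rw [h2]
  generalize PiTensorProduct.map (fun _ : Fin m => P) z = w at h1
  have h3 : minTensorPow C' m ⊆ {w | 0 ≤ (PiTensorProduct.lift Φ ∘ₗ
      PiTensorProduct.map (fun _ : Fin m => R)) w} := by
    refine convexHull_min ?_ ?_
    · rintro _ ⟨x, hx, rfl⟩
      simpa using hΦ _ (fun l => hR (hx l))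
    · exact convex_halfSpace_ge (LinearMap.isLinear _) 0
  exact h3 h1

theorem step {V : Type*} [AddCommGroup V] [Module ℝ V] (C : Set V) {k : ℕ}
    (f : V →ₗ[ℝ] (ℝ × EuclideanSpace ℝ (Fin k))) (hf : AnnH C f)
    (T : (ℝ × EuclideanSpace ℝ (Fin k)) →ₗ[ℝ] V)
    (hT : ∀ φ ∈ dualConeSet C, ∀ x ∈ lorentzCone k, 0 ≤ φ (T x))
    (m : ℕ) (hm : 1 ≤ m)
    (ω : MultilinearMap ℝ (fun _ : Fin m => ℝ × EuclideanSpace ℝ (Fin k)) ℝ)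
    (hω : ∀ x, |ω x| ≤ ∏ l, ‖(x l).2‖) :
    ∑ I : Fin m → Fin k, ω (fun l => lorE (I l)) * ω (fun l => f (T (lorE (I l))))
      ≤ (f (T (lorE0 k))).1 ^ m := by
  classical
  let Z : ℝ → ⨂[ℝ] _ : Fin m, V := fun s =>
    PiTensorProduct.tprod ℝ (fun _ : Fin m => T (lorE0 k)) +
      s • ∑ I : Fin m → Fin k, ω (fun l => lorE (I l)) •
        PiTensorProduct.tprod ℝ (fun l => T (lorE (I l)))
  have hZ : ∀ s, |s| = 1 → Z s ∈ maxTensorPow C m := by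
    intro s hs φ hφ
    have e1 : dualPairing φ (Z s) = ∏ l, φ l (T (lorE0 k)) +
        s * ω (fun l => ∑ j, φ l (T (lorE j)) • lorE j) := by
      rw [MultilinearMap.map_sum]
      simp_rw [MultilinearMap.map_smul_univ]
      simp [Z, dualPairing, mul_comm]
    rw [e1]
    have e2 : |s * ω (fun l => ∑ j, φ l (T (lorE j)) • lorE j)| ≤ ∏ l, φ l (T (lorE0 k)) := by
      rw [abs_mul, hs, one_mul]
      refine (hω _).trans (Finset.prod_le_prod (fun _ _ => norm_nonneg _) fun l _ => ?_)
      set v : EuclideanSpace ℝ (Fin k) := (∑ j, φ l (T (lorE j)) • lorE j).2 with hv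
      have hvj : ∀ j, v j = φ l (T (lorE j)) := by
        intro j; simp [hv, lorE, Prod.snd_sum, Pi.single_apply]
      have h := hT _ (hφ l) (‖v‖, -v) (by simp [lorentzCone])
      rw [lor_decomp (‖v‖, -v)] at h
      simp only [map_add, map_smul, map_sum, smul_eq_mul, PiLp.neg_apply, ← hvj] at h
      have h2 : ∑ j, -v j * v j = -‖v‖^2 := by
        rw [EuclideanSpace.real_norm_sq_eq]; simp [sq]
      rw [h2] at h
      by_cases h0 : ‖v‖ = 0
      · rw [h0]
        exact hT _ (hφ l) _ (by simp [lorentzCone, lorE0])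
      · have : 0 < ‖v‖ := lt_of_le_of_ne (norm_nonneg _) (Ne.symm h0)
        nlinarith
    linarith [neg_abs_le (s * ω (fun l => ∑ j, φ l (T (lorE j)) • lorE j))]
  let Φ : ℝ → MultilinearMap ℝ (fun _ : Fin m => ℝ × EuclideanSpace ℝ (Fin k)) ℝ := fun s =>
    (MultilinearMap.mkPiAlgebra ℝ (Fin m) ℝ).compLinearMap (fun _ => LinearMap.fst ℝ _ _) + s • ω
  have hΦ : ∀ s, |s| = 1 → ∀ x, (∀ l, x l ∈ lorentzCone k) → 0 ≤ Φ s x := by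
    intro s hs x hx
    have e2 : |s * ω x| ≤ ∏ l, (x l).1 := by
      rw [abs_mul, hs, one_mul]
      exact (hω _).trans (Finset.prod_le_prod (fun _ _ => norm_nonneg _) fun l _ => hx l)
    simp only [Φ, add_apply, MultilinearMap.compLinearMap_apply,
      smul_apply, MultilinearMap.mkPiAlgebra_apply, LinearMap.fst_apply, smul_eq_mul]
    linarith [neg_abs_le (s * ω x)]
  have key := fun s s' hs hs' => hf m hm (Z s) (hZ s hs) (Φ s') (hΦ s' hs')
  have k1 := key 1 (-1) (by simp) (by simp)
  have k2 := key (-1) 1 (by simp) (by simp)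
  simp only [Z, map_add, map_smul, map_sum, PiTensorProduct.map_tprod,
    PiTensorProduct.lift.tprod] at k1 k2
  simp only [Φ,
    add_apply, MultilinearMap.compLinearMap_apply,
      smul_apply, MultilinearMap.mkPiAlgebra_apply, LinearMap.fst_apply, smul_eq_mul,
      mul_add, Finset.sum_add_distrib, Finset.prod_const, Finset.card_univ, Fintype.card_fin] at k1 k2
  simp only [one_mul, neg_mul, mul_neg, Finset.sum_neg_distrib] at k1 k2
  linarith

theorem step2 {V : Type*} [AddCommGroup V] [Module ℝ V] (C : Set V) {k : ℕ}
    (f : V →ₗ[ℝ] (ℝ × EuclideanSpace ℝ (Fin k))) (hf : AnnH C f)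
    (T : (ℝ × EuclideanSpace ℝ (Fin k)) →ₗ[ℝ] V)
    (hT : ∀ φ ∈ dualConeSet C, ∀ x ∈ lorentzCone k, 0 ≤ φ (T x))
    (m : ℕ) (hm : 1 ≤ m)
    (Ω : MultilinearMap ℝ (fun _ : Fin m => Fin k → ℝ) ℝ)
    (hΩ : ∀ x, |Ω x| ≤ ∏ l, √(∑ j, x l j ^ 2)) :
    ∑ I : Fin m → Fin k, Ω (fun l => Pi.single (I l) 1) ^ 2 * ∏ l, (f (T (lorE (I l)))).2 (I l)
      ≤ (f (T (lorE0 k))).1 ^ m := by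
  classical
  let N : Fin k → Fin k → ℝ := fun i j => (f (T (lorE i))).2 j
  let c : (Fin m → Fin k) → ℝ := fun I => Ω (fun l => Pi.single (I l) 1)
  let G : (Fin k → ℤˣ) → (ℝ × EuclideanSpace ℝ (Fin k)) →ₗ[ℝ] (Fin k → ℝ) := fun ε =>
    { toFun := fun x j => ((ε j : ℤ) : ℝ) * x.2 j
      map_add' := by intro x y; ext j; simp [mul_add]
      map_smul' := by intro a x; ext j; simp; ring }
  have hu : ∀ u : ℤˣ, ((u : ℤ) : ℝ) ^ 2 = 1 := by
    intro u; rcases Int.units_eq_one_or u with h | h <;> simp [h]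
  have expand : ∀ x : Fin m → Fin k → ℝ, Ω x = ∑ J : Fin m → Fin k, (∏ l, x l (J l)) * c J := by
    intro x
    have : x = fun l => ∑ j, x l j • (Pi.single j 1 : Fin k → ℝ) := by
      ext l i; simp [Pi.single_apply]
    conv_lhs => rw [this]
    rw [MultilinearMap.map_sum]
    simp_rw [MultilinearMap.map_smul_univ]
    rfl
  have h1 : ∀ ε : Fin m → Fin k → ℤˣ,
      ∑ I : Fin m → Fin k, ∑ J : Fin m → Fin k, c I * c J * (∏ l, N (I l) (J l)) *
        ∏ l, (((ε l (I l) : ℤ) : ℝ) * ((ε l (J l) : ℤ) : ℝ)) ≤ (f (T (lorE0 k))).1 ^ m := by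
    intro ε
    refine le_trans (le_of_eq ?_)
      (step C f hf T hT m hm (Ω.compLinearMap fun l => G (ε l)) ?_)
    · refine Finset.sum_congr rfl fun I _ => ?_
      have a1 : (Ω.compLinearMap fun l => G (ε l)) (fun l => lorE (I l))
          = (∏ l, ((ε l (I l) : ℤ) : ℝ)) * c I := by
        rw [MultilinearMap.compLinearMap_apply, expand, Finset.sum_eq_single I]
        · simp [G, lorE]
        · intro J _ hJ
          obtain ⟨l, hl⟩ := Function.ne_iff.1 hJ
          rw [Finset.prod_eq_zero (Finset.mem_univ l), zero_mul]
          simp [G, lorE, hl]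
        · simp
      rw [a1, MultilinearMap.compLinearMap_apply, expand, Finset.mul_sum]
      refine Finset.sum_congr rfl fun J _ => ?_
      simp only [G, LinearMap.coe_mk, AddHom.coe_mk, Finset.prod_mul_distrib, N]
      ring
    · intro x
      refine (hΩ _).trans (le_of_eq ?_)
      refine Finset.prod_congr rfl fun l _ => ?_
      simp [G, mul_pow, hu, EuclideanSpace.norm_eq]
  have h2 := Finset.sum_le_sum (s := Finset.univ) fun ε _ => h1 ε
  rw [Finset.sum_comm] at h2
  simp_rw [Finset.sum_comm (s := (Finset.univ : Finset (Fin m → Fin k → ℤˣ))), ← Finset.mul_sum] at h2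
  have h3 : ∀ I J : Fin m → Fin k, ∑ ε : Fin m → Fin k → ℤˣ,
      ∏ l, (((ε l (I l) : ℤ) : ℝ) * ((ε l (J l) : ℤ) : ℝ)) = if I = J then ((2:ℝ)^k)^m else 0 := by
    intro I J
    have := Finset.prod_univ_sum (fun _ : Fin m => (Finset.univ : Finset (Fin k → ℤˣ)))
      (fun l ε => (((ε (I l) : ℤ) : ℝ) * ((ε (J l) : ℤ) : ℝ)))
    rw [Fintype.piFinset_univ] at this
    rw [← this]
    simp_rw [sign_orth]
    split_ifs with h
    · subst h; simp
    · obtain ⟨l, hl⟩ := Function.ne_iff.1 h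
      exact Finset.prod_eq_zero (Finset.mem_univ l) (by simp [hl])
  simp_rw [h3] at h2
  simp only [mul_ite, mul_zero, Finset.sum_ite_eq, Finset.mem_univ, if_true, Finset.sum_const,
    Finset.card_univ, Fintype.card_pi, Finset.prod_const, Fintype.card_fin, nsmul_eq_mul,
    Fintype.card_units_int, ← Finset.sum_mul] at h2
  push_cast at h2
  rw [mul_comm] at h2
  have h4 := le_of_mul_le_mul_left h2 (by positivity)
  refine le_trans (le_of_eq ?_) h4
  refine Finset.sum_congr rfl fun I _ => ?_
  simp only [c, N]; ring

theorem step3 {V : Type*} [AddCommGroup V] [Module ℝ V] (C : Set V) {k : ℕ}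
    (f : V →ₗ[ℝ] (ℝ × EuclideanSpace ℝ (Fin k))) (hf : AnnH C f)
    (T : (ℝ × EuclideanSpace ℝ (Fin k)) →ₗ[ℝ] V)
    (hT : ∀ φ ∈ dualConeSet C, ∀ x ∈ lorentzCone k, 0 ≤ φ (T x)) :
    ∃ n : ℕ, ∀ m : ℕ, 1 ≤ m →
      (∑ j, (f (T (lorE j))).2 j) ^ m ≤ n * (f (T (lorE0 k))).1 ^ m := by
  classical
  obtain ⟨ι, _, _, ⟨y⟩, A, hs, hA⟩ := cliff k
  refine ⟨Fintype.card ι, fun m hm => ?_⟩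
  let Am : (Fin k → ℝ) →ₗ[ℝ] Matrix ι ι ℝ := Fintype.linearCombination ℝ A
  have hAm : ∀ x, Am x = ∑ j, x j • A j := fun x => Fintype.linearCombination_apply ℝ A x
  let Ω : ι → MultilinearMap ℝ (fun _ : Fin m => Fin k → ℝ) ℝ := fun z =>
    (Matrix.entryLinearMap ℝ ℝ z y).compMultilinearMap
      ((MultilinearMap.mkPiAlgebraFin ℝ m (Matrix ι ι ℝ)).compLinearMap fun _ => Am)
  have hΩ : ∀ z x, Ω z x = (List.ofFn fun l => ∑ j, x l j • A j).prod z y := by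
    intro z x; simp [Ω, hAm]
  have hsum : ∀ x : Fin m → Fin k → ℝ, ∑ z, Ω z x ^ 2 = ∏ l, ∑ j, x l j ^ 2 := by
    intro x
    simp_rw [hΩ]
    exact cliff_col _ _ (cliff_prod m _ _ fun l => cliff_sq A hs hA (x l)) y
  have hb : ∀ z x, |Ω z x| ≤ ∏ l, √(∑ j, x l j ^ 2) := by
    intro z x
    rw [← Real.sqrt_prod _ (fun _ _ => Finset.sum_nonneg fun _ _ => sq_nonneg _), ← hsum]
    refine Real.abs_le_sqrt ?_
    exact Finset.single_le_sum (f := fun z => Ω z x ^ 2) (fun _ _ => sq_nonneg _) (Finset.mem_univ z)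
  have h := Finset.sum_le_sum (s := Finset.univ) fun z _ => step2 C f hf T hT m hm (Ω z) (hb z)
  rw [Finset.sum_comm] at h
  simp_rw [← Finset.sum_mul, hsum] at h
  have h1 : ∀ i : Fin k, ∑ j, (Pi.single i (1:ℝ) : Fin k → ℝ) j ^ 2 = 1 := by
    intro i; simp [Pi.single_apply]
  simp only [h1, Finset.prod_const_one, one_mul, Finset.sum_const, Finset.card_univ,
    nsmul_eq_mul] at h
  refine le_trans (le_of_eq ?_) h
  have := Finset.prod_univ_sum (fun _ : Fin m => (Finset.univ : Finset (Fin k)))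
    (fun _ j => (f (T (lorE j))).2 j)
  rw [Fintype.piFinset_univ] at this
  simpa using this

theorem annH_pos {V : Type*} [AddCommGroup V] [Module ℝ V] (C : Set V) {k : ℕ}
    (f : V →ₗ[ℝ] (ℝ × EuclideanSpace ℝ (Fin k))) (hf : AnnH C f)
    (ψ : Module.Dual ℝ (ℝ × EuclideanSpace ℝ (Fin k))) (hψ : ψ ∈ dualConeSet (lorentzCone k))
    (v : V) (hv : ∀ φ ∈ dualConeSet C, 0 ≤ φ v) : 0 ≤ ψ (f v) := by
  have := hf 1 le_rfl (PiTensorProduct.tprod ℝ fun _ => v)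
    (by intro φ hφ; simpa [dualPairing] using hv _ (hφ 0))
    ((MultilinearMap.mkPiAlgebra ℝ (Fin 1) ℝ).compLinearMap fun _ => ψ)
    (by intro x hx; simpa using hψ _ (hx 0))
  simpa using this

theorem trace_nonneg' {V : Type*} [AddCommGroup V] [Module ℝ V] (C : Set V) {k : ℕ}
    (f : V →ₗ[ℝ] (ℝ × EuclideanSpace ℝ (Fin k))) (hf : AnnH C f)
    (T : (ℝ × EuclideanSpace ℝ (Fin k)) →ₗ[ℝ] V)
    (hT : ∀ φ ∈ dualConeSet C, ∀ x ∈ lorentzCone k, 0 ≤ φ (T x)) :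
    0 ≤ (f (T (lorE0 k))).1 + ∑ j, (f (T (lorE j))).2 j := by
  obtain ⟨n, hn⟩ := step3 C f hf T hT
  have ha : 0 ≤ (f (T (lorE0 k))).1 :=
    annH_pos C f hf (LinearMap.fst ℝ _ _)
      (fun x hx => (norm_nonneg _).trans hx) _
      (fun φ hφ => hT φ hφ _ (by simp [lorentzCone, lorE0]))
  set a := (f (T (lorE0 k))).1
  set t := ∑ j, (f (T (lorE j))).2 j
  by_contra hcon
  push Not at hcon
  have ht : 0 < -t := by linarith
  have h1 : a / (-t) < 1 := by rw [div_lt_one ht]; linarith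
  have h0 : 0 ≤ a / (-t) := by positivity
  have hlim : Filter.Tendsto (fun m : ℕ => (n:ℝ) * (a / (-t)) ^ m) Filter.atTop (nhds 0) := by
    simpa using (tendsto_pow_atTop_nhds_zero_of_lt_one h0 h1).const_mul (n:ℝ)
  obtain ⟨M, hM⟩ := Filter.eventually_atTop.1 (hlim.eventually (gt_mem_nhds one_pos))
  have h2 := hM (2 * (M + 1)) (by omega)
  have h3 := hn (2 * (M + 1)) (by omega)
  rw [div_pow, ← mul_div_assoc, div_lt_one (by positivity), Even.neg_pow (by simp)] at h2
  linarith

theorem sep {V : Type*} [AddCommGroup V] [Module ℝ V] {D k : ℕ} (b : Module.Basis (Fin D) ℝ V)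
    (C : Set V) (e : V) (hunit : ∀ v, ∃ c : ℝ, c • e - v ∈ C)
    (f : V →ₗ[ℝ] (ℝ × EuclideanSpace ℝ (Fin k))) (hpos : 0 < (f e).1)
    (htr : ∀ T : (ℝ × EuclideanSpace ℝ (Fin k)) →ₗ[ℝ] V,
      (∀ φ ∈ dualConeSet C, ∀ x ∈ lorentzCone k, 0 ≤ φ (T x)) →
      0 ≤ (f (T (lorE0 k))).1 + ∑ j, (f (T (lorE j))).2 j)
    (he : ∀ φ ∈ dualConeSet C, 0 ≤ φ e) :
    IsEntanglementBreaking C (lorentzCone k) f := by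
  classical
  let φ' : (Fin D → ℝ) → Module.Dual ℝ V := fun p => b.constr ℝ p
  have hφ' : ∀ p v, φ' p v = ∑ i, b.repr v i * p i := by
    intro p v; simp [φ', Module.Basis.constr_apply_fintype, Module.Basis.equivFun_apply]
  have hφb : ∀ p i, φ' p (b i) = p i := by intro p i; simp [φ']
  have hcont : ∀ v, Continuous fun p => φ' p v := by intro v; simp_rw [hφ']; fun_prop
  let K1 : Set (Fin D → ℝ) := {p | φ' p ∈ dualConeSet C ∧ φ' p e = 1}
  let K2 : Set (ℝ × EuclideanSpace ℝ (Fin k)) := {x | x ∈ lorentzCone k ∧ x.1 = 1}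
  have hK1 : IsCompact K1 := by
    choose c hc using hunit
    refine Metric.isCompact_of_isClosed_isBounded ?_ ?_
    · refine IsClosed.inter ?_ (isClosed_eq (hcont e) continuous_const)
      have : {p | φ' p ∈ dualConeSet C} = ⋂ x ∈ C, {p | 0 ≤ φ' p x} := by
        ext p; simp [dualConeSet]
      change IsClosed {p | φ' p ∈ dualConeSet C}
      rw [this]
      exact isClosed_biInter fun x _ => isClosed_le continuous_const (hcont x)
    · refine (isCompact_univ_pi fun i => isCompact_Icc (a := -(c (-b i))) (b := c (b i))).isBounded.subset ?_
      rintro p ⟨hp, hp1⟩ i _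
      have h1 := hp _ (hc (b i))
      have h2 := hp _ (hc (-b i))
      simp only [map_sub, map_smul, map_neg, hp1, hφb, smul_eq_mul, mul_one] at h1 h2
      constructor <;> linarith
  have hK2 : IsCompact K2 := by
    refine ((isCompact_singleton (x := (1:ℝ))).prod (isCompact_closedBall (0 : EuclideanSpace ℝ (Fin k)) 1)).of_isClosed_subset ?_ ?_
    · exact (isClosed_le (by fun_prop) (by fun_prop)).inter (isClosed_eq (by fun_prop) (by fun_prop))
    · rintro ⟨t, x⟩ ⟨h1, h2⟩
      simp only [lorentzCone, Set.mem_ofPred_eq] at h1 h2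
      simp [h2] at h1 ⊢; exact h1
  let ten : (Fin D → ℝ) × (ℝ × EuclideanSpace ℝ (Fin k)) → (Fin D → ℝ × EuclideanSpace ℝ (Fin k)) :=
    fun q i => q.1 i • q.2
  have hten : Continuous ten := by fun_prop
  have hB : IsCompact (convexHull ℝ (ten '' (K1 ×ˢ K2))) :=
    compact_hull ((hK1.prod hK2).image hten)
  set B := convexHull ℝ (ten '' (K1 ×ˢ K2)) with hBdef
  let f' : Fin D → ℝ × EuclideanSpace ℝ (Fin k) := (f e).1⁻¹ • fun i => f (b i)
  by_cases hmem : f' ∈ B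
  · rw [hBdef, mem_convexHull_iff_exists_fintype] at hmem
    obtain ⟨ι, _, w, z, hw, hw1, hz, hsum⟩ := hmem
    choose q hq hqz using hz
    let eq := Fintype.equivFin ι
    refine ⟨Fintype.card ι, fun i => ((f e).1 * w (eq.symm i)) • φ' (q (eq.symm i)).1,
      fun i => (q (eq.symm i)).2, ?_, ?_, ?_⟩
    · intro i x hx
      exact mul_nonneg (mul_nonneg hpos.le (hw _)) ((hq _).1.1 x hx)
    · intro i; exact (hq _).2.1
    · intro v
      rw [Equiv.sum_comp eq.symm
        (fun i => (((f e).1 * w i) • φ' (q i).1) v • (q i).2)]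
      have : f = ∑ i, LinearMap.smulRight (((f e).1 * w i) • φ' (q i).1) (q i).2 := by
        refine b.ext fun j => ?_
        have h1 := congrFun hsum j
        simp only [f', Finset.sum_apply, Pi.smul_apply, ← hqz, ten] at h1
        have h2 : f (b j) = (f e).1 • ((f e).1⁻¹ • f (b j)) := by
          rw [smul_smul, mul_inv_cancel₀ hpos.ne', one_smul]
        rw [h2, ← h1, Finset.smul_sum]
        simp [hφb, smul_smul, mul_assoc]
      conv_lhs => rw [this]
      simp
  · exfalso
    obtain ⟨g, u, hgf, hgB⟩ := geometric_hahn_banach_point_closed (convex_convexHull ℝ _) hB.isClosed hmem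
    -- ω functional
    let om : (Fin D → ℝ × EuclideanSpace ℝ (Fin k)) →ₗ[ℝ] ℝ :=
      ∑ i, b.repr e i • (LinearMap.fst ℝ _ _ ∘ₗ LinearMap.proj i)
    let G : (Fin D → ℝ × EuclideanSpace ℝ (Fin k)) →ₗ[ℝ] ℝ := g.toLinearMap - u • om
    have hom : ∀ p x, om (ten (p, x)) = φ' p e * x.1 := by
      intro p x; simp [om, ten, hφ', Finset.sum_mul, mul_assoc]
    have homf : om (fun i => f (b i)) = (f e).1 := by
      have := congrArg (fun v => (f v).1) (b.sum_repr e)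
      simp only [map_sum, map_smul, Prod.fst_sum, Prod.smul_fst, smul_eq_mul] at this
      simp [om, this]
    have hGneg : G (fun i => f (b i)) < 0 := by
      have h1 : (fun i => f (b i)) = (f e).1 • f' := by
        simp only [f']
        rw [smul_smul, mul_inv_cancel₀ hpos.ne', one_smul]
      have h2 : g (fun i => f (b i)) = (f e).1 * g f' := by rw [h1]; simp
      simp only [G, LinearMap.sub_apply, LinearMap.smul_apply, homf, smul_eq_mul]
      change g (fun i => f (b i)) - u * (f e).1 < 0
      rw [h2]; nlinarith
    have hGpos : ∀ p, φ' p ∈ dualConeSet C → ∀ x ∈ lorentzCone k, 0 ≤ G (ten (p, x)) := by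
      intro p hp x hx
      have hx0 : 0 ≤ x.1 := (norm_nonneg _).trans hx
      have hp0 : 0 ≤ φ' p e := he _ hp
      rcases hx0.eq_or_lt with h0 | h0
      · have : x = 0 := by
          have hx' : ‖x.2‖ ≤ x.1 := hx
          rw [← h0] at hx'
          exact Prod.ext h0.symm (norm_le_zero_iff.1 hx')
        have : ten (p, x) = 0 := by ext i <;> simp [ten, this]
        rw [this, map_zero]
      rcases hp0.eq_or_lt with h1 | h1
      · have : p = 0 := by
          ext i
          obtain ⟨c, hc⟩ := hunit (b i)
          obtain ⟨c', hc'⟩ := hunit (-b i)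
          have h1' := hp _ hc
          have h2' := hp _ hc'
          simp only [map_sub, map_smul, map_neg, ← h1, hφb, smul_eq_mul, mul_zero] at h1' h2'
          simp; linarith
        have : ten (p, x) = 0 := by ext i <;> simp [ten, this]
        rw [this, map_zero]
      have hsc : ten (p, x) = (φ' p e * x.1) • ten ((φ' p e)⁻¹ • p, x.1⁻¹ • x) := by
        funext i
        simp only [ten, Pi.smul_apply, smul_smul, smul_eq_mul]
        congr 1; field_simp
      have hφs : φ' ((φ' p e)⁻¹ • p) = (φ' p e)⁻¹ • φ' p := by simp [φ']
      rw [hsc, map_smul, smul_eq_mul]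
      refine mul_nonneg (by positivity) ?_
      have hin : ten ((φ' p e)⁻¹ • p, x.1⁻¹ • x) ∈ B := by
        refine subset_convexHull ℝ _ ⟨_, ⟨⟨?_, ?_⟩, ⟨?_, ?_⟩⟩, rfl⟩
        · simp only [hφs]
          intro v hv
          exact mul_nonneg (inv_nonneg.2 h1.le) (hp v hv)
        · simp only [hφs]; simp [h1.ne']
        · simp only [lorentzCone, Set.mem_ofPred_eq, Prod.smul_snd, Prod.smul_fst, norm_smul, smul_eq_mul]
          rw [Real.norm_of_nonneg (inv_nonneg.2 h0.le)]
          exact mul_le_mul_of_nonneg_left hx (inv_nonneg.2 h0.le)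
        · simp [h0.ne']
      have h3 := hgB _ hin
      simp only [G, LinearMap.sub_apply, LinearMap.smul_apply, hom, hφs, smul_eq_mul]
      change 0 ≤ g _ - _
      simp only [LinearMap.smul_apply, Prod.smul_fst, smul_eq_mul, inv_mul_cancel₀ h1.ne', inv_mul_cancel₀ h0.ne']
      linarith
    let T : (ℝ × EuclideanSpace ℝ (Fin k)) →ₗ[ℝ] V :=
      ∑ i, LinearMap.smulRight (G ∘ₗ LinearMap.single ℝ (fun _ => ℝ × EuclideanSpace ℝ (Fin k)) i) (b i)
    have hT : ∀ x, T x = ∑ i, G (Pi.single i x) • b i := by intro x; simp [T]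
    have hGs : ∀ z : Fin D → ℝ × EuclideanSpace ℝ (Fin k), G z = ∑ i, G (Pi.single i (z i)) := by
      intro z
      rw [← map_sum, Finset.univ_sum_single]
    have h4 := htr T (by
      intro φ hφ x hx
      have hp : φ' (fun i => φ (b i)) = φ := b.ext fun i => by simp [hφb]
      have := hGpos (fun i => φ (b i)) (by rw [hp]; exact hφ) x hx
      rw [hGs] at this
      rw [hT, map_sum]
      refine this.trans (le_of_eq (Finset.sum_congr rfl fun i _ => ?_))
      simp [ten, Pi.single_smul, mul_comm])
    refine absurd h4 (not_le.2 (lt_of_eq_of_lt ?_ hGneg))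
    rw [hGs]
    have h5 : ∀ i, G (Pi.single i (f (b i))) = (f (b i)).1 * G (Pi.single i (lorE0 k))
        + ∑ j, (f (b i)).2 j * G (Pi.single i (lorE j)) := by
      intro i
      have := congrArg (G ∘ₗ LinearMap.single ℝ (fun _ => ℝ × EuclideanSpace ℝ (Fin k)) i) (lor_decomp (f (b i)))
      simpa only [map_add, map_sum, map_smul, LinearMap.comp_apply, LinearMap.coe_single, smul_eq_mul] using this
    simp_rw [h5, hT, map_sum, map_smul, Prod.fst_sum, Prod.snd_sum, Finset.sum_add_distrib]
    rw [Finset.sum_comm (s := (Finset.univ : Finset (Fin D)))]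
    congr 1
    · exact Finset.sum_congr rfl fun i _ => by simp [mul_comm]
    · refine Finset.sum_congr rfl fun i _ => ?_
      simp [mul_comm]

theorem eb_of_fintype {V₁ V₂ ι : Type*} [AddCommGroup V₁] [Module ℝ V₁]
    [AddCommGroup V₂] [Module ℝ V₂] [Fintype ι] (C₁ : Set V₁) (C₂ : Set V₂) (P : V₁ →ₗ[ℝ] V₂)
    (φ : ι → Module.Dual ℝ V₁) (x : ι → V₂) (hφ : ∀ i, φ i ∈ dualConeSet C₁)
    (hx : ∀ i, x i ∈ C₂) (hP : ∀ v, P v = ∑ i, φ i v • x i) :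
    IsEntanglementBreaking C₁ C₂ P := by
  let eq := Fintype.equivFin ι
  refine ⟨Fintype.card ι, fun i => φ (eq.symm i), fun i => x (eq.symm i), fun i => hφ _,
    fun i => hx _, fun v => ?_⟩
  rw [hP, Equiv.sum_comp eq.symm (fun i => φ i v • x i)]

theorem eb_lorentz {V : Type*} [AddCommGroup V] [Module ℝ V] {D k : ℕ}
    (b : Module.Basis (Fin D) ℝ V)
    (C : Set V) (e : V) (hunit : ∀ v, ∃ c : ℝ, c • e - v ∈ C) (he : e ∈ C)
    (f : V →ₗ[ℝ] (ℝ × EuclideanSpace ℝ (Fin k))) (hf : AnnH C f) :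
    IsEntanglementBreaking C (lorentzCone k) f := by
  have hpos := fun ψ hψ v (hv : v ∈ C) => annH_pos C f hf ψ hψ v (fun φ hφ => hφ v hv)
  have hfst : (LinearMap.fst ℝ ℝ (EuclideanSpace ℝ (Fin k))) ∈ dualConeSet (lorentzCone k) :=
    fun x hx => (norm_nonneg _).trans hx
  have h0 : 0 ≤ (f e).1 := hpos _ hfst e he
  rcases h0.eq_or_lt with h0 | h0
  · have hz : ∀ ψ ∈ dualConeSet (lorentzCone k), ψ (f e) = 0 → ∀ v, ψ (f v) = 0 := by
      intro ψ hψ h v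
      obtain ⟨c, hc⟩ := hunit v
      obtain ⟨c', hc'⟩ := hunit (-v)
      have h1 := hpos ψ hψ _ hc
      have h2 := hpos ψ hψ _ hc'
      simp only [map_sub, map_smul, map_neg, h, smul_eq_mul, mul_zero] at h1 h2
      linarith
    have hf1 : ∀ v, (f v).1 = 0 := hz _ hfst h0.symm
    have hf2 : ∀ v j, (f v).2 j = 0 := by
      intro v j
      let pr : (ℝ × EuclideanSpace ℝ (Fin k)) →ₗ[ℝ] ℝ :=
        { toFun := fun x => x.2 j
          map_add' := by intro x y; simp
          map_smul' := by intro x y; simp }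
      have hb : ∀ x ∈ lorentzCone k, |x.2 j| ≤ x.1 := fun x hx =>
        (PiLp.norm_apply_le x.2 j).trans hx
      have m1 : LinearMap.fst ℝ ℝ (EuclideanSpace ℝ (Fin k)) + pr ∈ dualConeSet (lorentzCone k) := by
        intro x hx
        have := neg_abs_le (x.2 j)
        have := hb x hx
        change 0 ≤ x.1 + x.2 j
        linarith
      have m2 : LinearMap.fst ℝ ℝ (EuclideanSpace ℝ (Fin k)) - pr ∈ dualConeSet (lorentzCone k) := by
        intro x hx
        have := le_abs_self (x.2 j)
        have := hb x hx
        change 0 ≤ x.1 - x.2 j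
        linarith
      have p1 : 0 ≤ (f e).1 + (f e).2 j := hpos _ m1 e he
      have p2 : 0 ≤ (f e).1 - (f e).2 j := hpos _ m2 e he
      have p3 : (f v).1 + (f v).2 j = 0 := hz _ m1 (by
        change (f e).1 + (f e).2 j = 0
        linarith) v
      rw [hf1] at p3
      linarith
    refine ⟨0, fun i => i.elim0, fun i => i.elim0, fun i => i.elim0, fun i => i.elim0, fun v => ?_⟩
    ext j
    · simpa using hf1 v
    · simpa using hf2 v j
  · exact sep b C e hunit f h0 (trace_nonneg' C f hf) (fun φ hφ => hφ e he)

/-- **Theorem (generalized reduction criterion).** If `P` is entanglement annihilating and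
`Q` factors through a Lorentz cone `L_k`, then `Q ∘ P` is entanglement breaking. -/
theorem generalized_reduction_criterion
    (k dA dB : ℕ) (hk : 1 ≤ k)
    (P : HermMat dA →ₗ[ℝ] HermMat dB)
    (hP : IsEntanglementAnnihilating (psdCone dA) (psdCone dB) P)
    (m : ℕ)
    (R : Fin m → (HermMat dB →ₗ[ℝ] (ℝ × EuclideanSpace ℝ (Fin k))))
    (S : Fin m → ((ℝ × EuclideanSpace ℝ (Fin k)) →ₗ[ℝ] HermMat dA))
    (hR : ∀ i, Set.MapsTo (⇑(R i)) (psdCone dB) (lorentzCone k))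
    (hS : ∀ i, Set.MapsTo (⇑(S i)) (lorentzCone k) (psdCone dA))
    (Q : HermMat dB →ₗ[ℝ] HermMat dA) (hQ : Q = ∑ i, S i ∘ₗ R i) :
    IsEntanglementBreaking (psdCone dA) (psdCone dA) (Q ∘ₗ P) := by
  classical
  have : FiniteDimensional ℝ (HermMat dA) :=
    inferInstanceAs (FiniteDimensional ℝ (selfAdjoint.submodule ℝ (Matrix (Fin dA) (Fin dA) ℂ)))
  have hEB : ∀ i, IsEntanglementBreaking (psdCone dA) (lorentzCone k) (R i ∘ₗ P) := fun i =>
    eb_lorentz (Module.finBasis ℝ (HermMat dA)) (psdCone dA) 1 (herm_unit dA)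
      (by simpa [psdCone] using Matrix.PosSemidef.one) _ (annH_of _ _ P hP (R i) (hR i))
  choose n φ x hφ hx hf using hEB
  refine eb_of_fintype (ι := Σ i : Fin m, Fin (n i)) _ _ _ (fun q => φ q.1 q.2)
    (fun q => S q.1 (x q.1 q.2)) (fun q => hφ _ _) (fun q => hS _ (hx _ _)) (fun v => ?_)
  rw [Fintype.sum_sigma, hQ]
  simp only [LinearMap.comp_apply, LinearMap.sum_apply]
  refine Finset.sum_congr rfl fun i _ => ?_
  have := hf i v
  rw [LinearMap.comp_apply] at this
  rw [this, map_sum]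
  simp only [map_smul]

end
end

section
/- Let C ⊆ V be a symmetric cone in a finite-dimensional real inner product space V, and let k ≥ 1. Let C_{ℓ1^k} = {(t,x) ∈ R ⊕ R^k : ‖x‖₁ ≤ t} ⊆ R^{k+1}, and let I_{√k} : R^{k+1} → R^{k+1} be the linear map (t,x) ↦ (√k · t, x). Then (id_V ⊗ I_{√k})(C ⊗max C_{ℓ1^k}) ⊆ C ⊗min C_{ℓ1^k}. -/
open scoped TensorProduct RealInnerProductSpace
open Set

noncomputable section

/-- A symmetric cone: a proper cone which is self-dual with respect to the inner product and
whose automorphism group acts transitively on its interior. -/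
def IsSymmetricCone {V : Type*} [NormedAddCommGroup V] [InnerProductSpace ℝ V]
    (C : Set V) : Prop :=
  IsProperCone C ∧ (C = {y | ∀ x ∈ C, 0 ≤ ⟪x, y⟫}) ∧
    ∀ x ∈ interior C, ∀ y ∈ interior C, ∃ A : V ≃ₗ[ℝ] V, (⇑A) '' C = C ∧ A x = y

/-- The cone over the unit ball of `ℓ₁ᵏ`: `{(t,x) : ‖x‖₁ ≤ t} ⊆ ℝ ⊕ ℝᵏ`. -/
def l1Cone (k : ℕ) : Set (ℝ × (Fin k → ℝ)) := {p | ∑ i, |p.2 i| ≤ p.1}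

/-- The isotropic map `I_{√k} : (t,x) ↦ (√k · t, x)`. -/
def isoSqrt (k : ℕ) : (ℝ × (Fin k → ℝ)) →ₗ[ℝ] (ℝ × (Fin k → ℝ)) :=
  LinearMap.prodMap ((Real.sqrt k) • LinearMap.id) LinearMap.id


namespace SymC

set_option linter.unusedSectionVars false

variable {V : Type} [NormedAddCommGroup V] [InnerProductSpace ℝ V]

def SD (C : Set V) : Prop := ∀ y, y ∈ C ↔ ∀ x ∈ C, 0 ≤ ⟪x, y⟫

lemma SD.inner_nonneg {C : Set V} (h : SD C) {x y : V} (hx : x ∈ C) (hy : y ∈ C) :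
    0 ≤ ⟪x, y⟫ := (h y).1 hy x hx

lemma SD.zero {C : Set V} (h : SD C) : (0 : V) ∈ C := by
  rw [h]; intro x _; simp

lemma SD.add {C : Set V} (h : SD C) {x y : V} (hx : x ∈ C) (hy : y ∈ C) : x + y ∈ C := by
  rw [h]; intro z hz
  rw [inner_add_right]
  exact add_nonneg (h.inner_nonneg hz hx) (h.inner_nonneg hz hy)

lemma SD.smul {C : Set V} (h : SD C) {x : V} (hx : x ∈ C) {c : ℝ} (hc : 0 ≤ c) : c • x ∈ C := by
  rw [h]; intro z hz
  rw [inner_smul_right]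
  exact mul_nonneg hc (h.inner_nonneg hz hx)

lemma SD.sum {C : Set V} (h : SD C) {ι : Type*} (s : Finset ι) (f : ι → V)
    (hf : ∀ i ∈ s, f i ∈ C) : ∑ i ∈ s, f i ∈ C := by
  rw [h]; intro z hz
  rw [inner_sum]
  exact Finset.sum_nonneg fun i hi => h.inner_nonneg hz (hf i hi)

lemma SD.convex {C : Set V} (h : SD C) : Convex ℝ C := by
  intro x hx y hy a b ha hb _
  exact h.add (h.smul hx ha) (h.smul hy hb)

lemma SD.closed {C : Set V} (h : SD C) : IsClosed C := by
  have : C = ⋂ x ∈ C, {y | 0 ≤ ⟪x, y⟫} := by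
    ext y; rw [h y]; simp
  rw [this]
  refine isClosed_biInter fun x _ => ?_
  exact isClosed_le continuous_const (by fun_prop)

/-- `a ± b ∈ C` forces `‖b‖ ≤ ‖a‖`. -/
lemma SD.norm_le {C : Set V} (h : SD C) {a b : V} (h1 : a + b ∈ C) (h2 : a - b ∈ C) :
    ‖b‖ ≤ ‖a‖ := by
  have := h.inner_nonneg h1 h2
  rw [inner_add_left, inner_sub_right, inner_sub_right, real_inner_self_eq_norm_sq,
    real_inner_self_eq_norm_sq, real_inner_comm] at this
  refine le_of_sq_le_sq ?_ (norm_nonneg _)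
  linarith [real_inner_comm a b]

lemma SD.ball {C : Set V} {x : V} (hx : x ∈ interior C) :
    ∃ r > 0, ∀ v : V, ‖v‖ ≤ r → x + v ∈ C := by
  rw [mem_interior_iff_mem_nhds, Metric.mem_nhds_iff] at hx
  obtain ⟨r, hr, hb⟩ := hx
  refine ⟨r / 2, by positivity, fun v hv => hb ?_⟩
  simp; linarith

lemma opNorm_le {C : Set V} (h : SD C) {x : V} {r : ℝ} (hr : 0 < r)
    (hb : ∀ v : V, ‖v‖ ≤ r → x + v ∈ C) (A : V →L[ℝ] V) (hA : MapsTo A C C) :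
    ‖A‖ ≤ ‖A x‖ / r := by
  refine ContinuousLinearMap.opNorm_le_bound _ (by positivity) fun v => ?_
  by_cases hv : v = 0
  · simp [hv]
  have hv' : 0 < ‖v‖ := norm_pos_iff.2 hv
  have h1 : ‖(r / ‖v‖) • v‖ ≤ r := by
    rw [norm_smul, Real.norm_of_nonneg (by positivity)]; field_simp; rfl
  have a1 := hA (hb _ h1)
  have a2 := hA (hb (-((r / ‖v‖) • v)) (by rwa [norm_neg]))
  rw [map_add] at a1 a2
  rw [map_neg, ← sub_eq_add_neg] at a2
  have := h.norm_le a1 a2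
  rw [map_smul, norm_smul, Real.norm_of_nonneg (by positivity)] at this
  rw [div_mul_eq_mul_div, div_le_iff₀ hv'] at this
  rw [div_mul_eq_mul_div, le_div_iff₀ hr]
  linarith

lemma interior_add {C : Set V} (h : SD C) {x y : V} (hx : x ∈ interior C) (hy : y ∈ C) :
    x + y ∈ interior C := by
  obtain ⟨r, hr, hb⟩ := SD.ball hx
  rw [mem_interior_iff_mem_nhds, Metric.mem_nhds_iff]
  refine ⟨r, hr, fun z hz => ?_⟩
  have : z = (x + (z - (x + y))) + y := by abel
  rw [this]
  refine h.add (hb _ ?_) hy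
  rw [Metric.mem_ball, dist_eq_norm] at hz
  exact hz.le

lemma interior_smul {C : Set V} (h : SD C) {x : V} (hx : x ∈ interior C) {c : ℝ} (hc : 0 < c) :
    c • x ∈ interior C := by
  obtain ⟨r, hr, hb⟩ := SD.ball hx
  rw [mem_interior_iff_mem_nhds, Metric.mem_nhds_iff]
  refine ⟨c * r, by positivity, fun z hz => ?_⟩
  have : z = c • (x + c⁻¹ • (z - c • x)) := by
    rw [smul_add, smul_smul, mul_inv_cancel₀ hc.ne', one_smul]; abel
  rw [this]
  refine h.smul (hb _ ?_) hc.le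
  rw [Metric.mem_ball, dist_eq_norm] at hz
  rw [norm_smul, Real.norm_of_nonneg (by positivity), inv_mul_le_iff₀ hc]
  exact hz.le

variable [FiniteDimensional ℝ V]

lemma moreau {C : Set V} (h : SD C) (z : V) : ∃ p ∈ C, ∃ m ∈ C, z = p - m ∧ ⟪p, m⟫ = 0 := by
  obtain ⟨p, hp, hpe⟩ := exists_norm_eq_iInf_of_complete_convex ⟨0, h.zero⟩
    h.closed.isComplete h.convex z
  have hp' := (norm_eq_iInf_iff_real_inner_le_zero h.convex hp).1 hpe
  have h0 := hp' 0 h.zero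
  have h2 := hp' ((2 : ℝ) • p) (h.smul hp (by norm_num))
  rw [two_smul, add_sub_cancel_right] at h2
  rw [zero_sub, inner_neg_right] at h0
  have h3 : ⟪z - p, p⟫ = 0 := by linarith
  refine ⟨p, hp, p - z, ?_, by abel, ?_⟩
  · rw [h]; intro x hx
    have := hp' x hx
    rw [inner_sub_right, h3] at this
    rw [real_inner_comm, ← neg_sub z p, inner_neg_left]; linarith
  · rw [real_inner_comm, ← neg_sub z p, inner_neg_left, h3, neg_zero]

/-- The Lie algebra of the automorphism group. -/
def lie (C : Set V) : Submodule ℝ (V →L[ℝ] V) where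
  carrier := {X | ∀ x ∈ C, ∀ y ∈ C, ⟪x, y⟫ = 0 → ⟪X x, y⟫ = 0}
  add_mem' := by
    intro X Y hX hY x hx y hy hxy
    simp [inner_add_left, hX x hx y hy hxy, hY x hx y hy hxy]
  zero_mem' := by intro x hx y hy hxy; simp
  smul_mem' := by
    intro c X hX x hx y hy hxy
    simp [inner_smul_left, hX x hx y hy hxy]

lemma mem_lie {C : Set V} {X : V →L[ℝ] V} :
    X ∈ lie C ↔ ∀ x ∈ C, ∀ y ∈ C, ⟪x, y⟫ = 0 → ⟪X x, y⟫ = 0 := Iff.rfl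

lemma lie_adjoint {C : Set V} {X : V →L[ℝ] V} (hX : X ∈ lie C) :
    ContinuousLinearMap.adjoint X ∈ lie C := by
  intro x hx y hy hxy
  rw [ContinuousLinearMap.adjoint_inner_left, real_inner_comm]
  exact hX y hy x hx (by rw [real_inner_comm]; exact hxy)

lemma resolvent {C : Set V} (h : SD C) {X : V →L[ℝ] V} (hX : X ∈ lie C) {t : ℝ} (ht : 0 ≤ t)
    (hs : t * ‖X‖ < 1) {z : V} (hz : (1 - t • X) z ∈ C) : z ∈ C := by
  obtain ⟨p, hp, m, hm, rfl, hpm⟩ := moreau h z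
  have h1 := h.inner_nonneg hz hm
  have h2 := hX p hp m hm hpm
  have h3 : ⟪X m, m⟫ ≤ ‖X‖ * ‖m‖ * ‖m‖ :=
    (real_inner_le_norm _ _).trans (by gcongr; exact X.le_opNorm m)
  have h4 : ⟪(1 - t • X) (p - m), m⟫ = - ‖m‖ ^ 2 + t * ⟪X m, m⟫ := by
    simp [inner_sub_left, inner_smul_left, hpm, h2]
  rw [h4] at h1
  have h5 : t * ⟪X m, m⟫ ≤ t * (‖X‖ * ‖m‖ * ‖m‖) := by gcongr
  have h6 : ‖m‖ ^ 2 * (1 - t * ‖X‖) ≤ 0 := by nlinarith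
  have h7 : ‖m‖ ^ 2 ≤ 0 := by
    by_contra hc
    push Not at hc
    have := mul_pos hc (sub_pos.2 hs)
    linarith
  have : m = 0 := by
    rw [← norm_eq_zero]; nlinarith [norm_nonneg m]
  simpa [this] using hp

lemma resolvent_pow {C : Set V} (h : SD C) {X : V →L[ℝ] V} (hX : X ∈ lie C) {t : ℝ} (ht : 0 ≤ t)
    (hs : t * ‖X‖ < 1) (n : ℕ) {z : V} (hz : ((1 - t • X) ^ n) z ∈ C) : z ∈ C := by
  induction n with
  | zero => simpa using hz
  | succ n ih =>
    apply ih
    rw [pow_succ'] at hz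
    exact resolvent h hX ht hs hz

lemma exp_pow_inv (X : V →L[ℝ] V) (n : ℕ) (hn : n ≠ 0) :
    (NormedSpace.exp ((n : ℝ)⁻¹ • X)) ^ n = NormedSpace.exp X := by
  let : NormedAlgebra ℚ (V →L[ℝ] V) := NormedAlgebra.restrictScalars ℚ ℝ _
  rw [← NormedSpace.exp_nsmul]
  congr 1
  rw [← Nat.cast_smul_eq_nsmul ℝ, smul_smul, mul_inv_cancel₀ (by exact_mod_cast hn), one_smul]

lemma hasDerivAt_exp_zero' (X : V →L[ℝ] V) :
    HasDerivAt (fun t : ℝ => NormedSpace.exp (t • X)) X 0 := by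
  have := hasDerivAt_exp_smul_const X (0 : ℝ)
  simpa [NormedSpace.exp_zero] using this

lemma tendsto_one_add_pow (E : ℕ → (V →L[ℝ] V))
    (hE : Filter.Tendsto (fun n : ℕ => (n : ℝ) • E n) Filter.atTop (nhds 0)) :
    Filter.Tendsto (fun n : ℕ => (1 + E n) ^ n) Filter.atTop (nhds 1) := by
  have key : ∀ (A : V →L[ℝ] V) (n : ℕ), ‖(1 + A) ^ n - 1‖ ≤ (1 + ‖A‖) ^ n - 1 := by
    intro A n
    induction n with
    | zero => simp
    | succ n ih =>
      have : (1 + A) ^ (n + 1) - 1 = ((1 + A) ^ n - 1) + A + A * ((1 + A) ^ n - 1) := by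
        rw [pow_succ']; noncomm_ring
      rw [this]
      calc _ ≤ ‖(1 + A) ^ n - 1‖ + ‖A‖ + ‖A‖ * ‖(1 + A) ^ n - 1‖ :=
            (norm_add₃_le).trans (by gcongr; exact norm_mul_le _ _)
        _ ≤ ((1 + ‖A‖) ^ n - 1) + ‖A‖ + ‖A‖ * ((1 + ‖A‖) ^ n - 1) := by gcongr
        _ = _ := by ring
  rw [tendsto_iff_norm_sub_tendsto_zero]
  have h1 : Filter.Tendsto (fun n : ℕ => Real.exp (‖(n : ℝ) • E n‖) - 1) Filter.atTop (nhds 0) := by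
    have := (Real.continuous_exp.tendsto 0).comp (by simpa using hE.norm)
    simpa using this.sub_const 1
  refine squeeze_zero (fun _ => norm_nonneg _) (fun n => ?_) h1
  refine (key _ _).trans ?_
  have : (1 + ‖E n‖) ^ n ≤ Real.exp (‖E n‖) ^ n := by
    gcongr
    linarith [Real.add_one_le_exp ‖E n‖]
  rw [← Real.exp_nat_mul] at this
  rw [norm_smul, Real.norm_natCast]
  linarith

lemma exp_mem_aux {C : Set V} (h : SD C) {X : V →L[ℝ] V} (hX : X ∈ lie C) {x : V}
    (hx : x ∈ interior C) : NormedSpace.exp X x ∈ C := by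
  let : NormedAlgebra ℚ (V →L[ℝ] V) := NormedAlgebra.restrictScalars ℚ ℝ _
  set E : ℕ → (V →L[ℝ] V) := fun n =>
    (1 - (n : ℝ)⁻¹ • X) * NormedSpace.exp ((n : ℝ)⁻¹ • X) - 1 with hEdef
  have hd : HasDerivAt (fun t : ℝ => (1 - t • X) * NormedSpace.exp (t • X)) 0 0 := by
    have h1 : HasDerivAt (fun t : ℝ => (1 - t • X)) (-X) 0 := by
      have := ((hasDerivAt_id (0 : ℝ)).smul_const X).const_sub 1
      simpa using this
    have h2 := h1.mul (hasDerivAt_exp_zero' X)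
    have h3 : -X * NormedSpace.exp ((0 : ℝ) • X) + (1 - (0 : ℝ) • X) * X = 0 := by
      simp [NormedSpace.exp_zero]
    rw [h3] at h2
    exact h2
  have hinv : Filter.Tendsto (fun n : ℕ => (n : ℝ)⁻¹) Filter.atTop (nhds 0) :=
    tendsto_inv_atTop_nhds_zero_nat
  have hE : Filter.Tendsto (fun n : ℕ => (n : ℝ) • E n) Filter.atTop (nhds 0) := by
    have h2 := hd.tendsto_slope
    have h3 : Filter.Tendsto (fun n : ℕ => (n : ℝ)⁻¹) Filter.atTop (nhdsWithin 0 {0}ᶜ) := by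
      rw [tendsto_nhdsWithin_iff]
      refine ⟨hinv, ?_⟩
      filter_upwards [Filter.eventually_gt_atTop 0] with n hn
      simp; omega
    have := h2.comp h3
    refine this.congr fun n => ?_
    simp [slope, hEdef, NormedSpace.exp_zero]
  have hT := tendsto_one_add_pow E hE
  have hT2 : Filter.Tendsto (fun n : ℕ => ((1 + E n) ^ n : V →L[ℝ] V) x) Filter.atTop (nhds x) := by
    have := (ContinuousLinearMap.apply ℝ V x).continuous.tendsto (1 : V →L[ℝ] V)
    exact this.comp hT
  have hev := hT2.eventually (mem_interior_iff_mem_nhds.1 hx)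
  have hsm : ∀ᶠ n : ℕ in Filter.atTop, (n : ℝ)⁻¹ * ‖X‖ < 1 := by
    have := hinv.mul_const ‖X‖
    rw [zero_mul] at this
    exact this.eventually (gt_mem_nhds one_pos)
  obtain ⟨n, hn, hn2, hn3⟩ := (hev.and (hsm.and (Filter.eventually_gt_atTop 0))).exists
  refine resolvent_pow h hX (t := (n : ℝ)⁻¹) (by positivity) hn2 n ?_
  have hc : Commute (1 - (n : ℝ)⁻¹ • X) (NormedSpace.exp ((n : ℝ)⁻¹ • X)) := by
    apply Commute.exp_right
    exact (Commute.one_left _).sub_left (Commute.refl _)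
  have : (1 + E n) ^ n = (1 - (n : ℝ)⁻¹ • X) ^ n * NormedSpace.exp X := by
    rw [← exp_pow_inv X n (by omega), ← hc.mul_pow]; simp [hEdef]
  have hn' : ((1 + E n) ^ n : V →L[ℝ] V) x ∈ C := hn
  rw [this] at hn'
  exact hn'

lemma exp_mapsTo {C : Set V} (h : SD C) {u : V} (hu : u ∈ interior C)
    {X : V →L[ℝ] V} (hX : X ∈ lie C) : MapsTo (NormedSpace.exp X : V →L[ℝ] V) C C := by
  intro x hx
  have h1 : ∀ n : ℕ, NormedSpace.exp X (x + (1 / ((n : ℝ) + 1)) • u) ∈ C := fun n =>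
    exp_mem_aux h hX (by rw [add_comm]; exact interior_add h (interior_smul h hu (by positivity)) hx)
  have h2 : Filter.Tendsto (fun n : ℕ => NormedSpace.exp X (x + (1 / ((n : ℝ) + 1)) • u))
      Filter.atTop (nhds (NormedSpace.exp X (x + (0 : ℝ) • u))) := by
    refine ((NormedSpace.exp X).continuous.tendsto _).comp ?_
    exact tendsto_const_nhds.add (tendsto_one_div_add_atTop_nhds_zero_nat.smul_const u)
  have := h.closed.mem_of_tendsto h2 (Filter.Eventually.of_forall h1)
  simpa using this

open Filter Topology

/-- Automorphisms of the cone, with their inverses. -/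
def aut (C : Set V) : Set ((V →L[ℝ] V) × (V →L[ℝ] V)) :=
  {p | p.1 * p.2 = 1 ∧ p.2 * p.1 = 1 ∧ MapsTo p.1 C C ∧ MapsTo p.2 C C}

lemma aut_closed {C : Set V} (h : SD C) : IsClosed (aut C) := by
  have hm : IsClosed {A : V →L[ℝ] V | MapsTo A C C} := by
    have : {A : V →L[ℝ] V | MapsTo A C C} = ⋂ x ∈ C, {A | A x ∈ C} := by
      ext A; simp [MapsTo]
    rw [this]
    exact isClosed_biInter fun x _ => h.closed.preimage (ContinuousLinearMap.apply ℝ V x).continuous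
  have h1 : IsClosed {p : (V →L[ℝ] V) × (V →L[ℝ] V) | p.1 * p.2 = 1} :=
    isClosed_eq (continuous_fst.mul continuous_snd) continuous_const
  have h2 : IsClosed {p : (V →L[ℝ] V) × (V →L[ℝ] V) | p.2 * p.1 = 1} :=
    isClosed_eq (continuous_snd.mul continuous_fst) continuous_const
  exact h1.inter (h2.inter ((hm.preimage continuous_fst).inter (hm.preimage continuous_snd)))

lemma aut_mul {C : Set V} {p q : (V →L[ℝ] V) × (V →L[ℝ] V)} (hp : p ∈ aut C) (hq : q ∈ aut C) :
    (p.1 * q.1, q.2 * p.2) ∈ aut C := by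
  obtain ⟨a, b, c, d⟩ := hp
  obtain ⟨a', b', c', d'⟩ := hq
  refine ⟨?_, ?_, fun x hx => c (c' hx), fun x hx => d' (d hx)⟩
  · calc p.1 * q.1 * (q.2 * p.2) = p.1 * (q.1 * q.2) * p.2 := by noncomm_ring
      _ = 1 := by rw [a', mul_one, a]
  · calc q.2 * p.2 * (p.1 * q.1) = q.2 * (p.2 * p.1) * q.1 := by noncomm_ring
      _ = 1 := by rw [b, mul_one, b']

lemma aut_swap {C : Set V} {p : (V →L[ℝ] V) × (V →L[ℝ] V)} (hp : p ∈ aut C) :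
    (p.2, p.1) ∈ aut C := ⟨hp.2.1, hp.1, hp.2.2.2, hp.2.2.1⟩

lemma exp_neg_mul (X : V →L[ℝ] V) : NormedSpace.exp X * NormedSpace.exp (-X) = 1 := by
  let : NormedAlgebra ℚ (V →L[ℝ] V) := NormedAlgebra.restrictScalars ℚ ℝ _
  rw [← NormedSpace.exp_add_of_commute (Commute.refl X).neg_right, add_neg_cancel,
    NormedSpace.exp_zero]

lemma exp_aut {C : Set V} (h : SD C) {u : V} (hu : u ∈ interior C)
    {X : V →L[ℝ] V} (hX : X ∈ lie C) : (NormedSpace.exp X, NormedSpace.exp (-X)) ∈ aut C :=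
  ⟨exp_neg_mul X, by simpa using exp_neg_mul (-X), exp_mapsTo h hu hX,
    exp_mapsTo h hu (neg_mem hX)⟩

lemma exp_fix (X : V →L[ℝ] V) {u : V} (hu : X u = 0) : NormedSpace.exp X u = u := by
  let : NormedAlgebra ℚ (V →L[ℝ] V) := NormedAlgebra.restrictScalars ℚ ℝ _
  have h1 := NormedSpace.exp_series_hasSum_exp' (𝕂 := ℝ) X
  have h2 := h1.mapL (ContinuousLinearMap.apply ℝ V u)
  have h3 : ∀ n : ℕ, n ≠ 0 →
      (ContinuousLinearMap.apply ℝ V u) (((n.factorial : ℝ)⁻¹) • X ^ n) = 0 := by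
    intro n hn
    obtain ⟨m, rfl⟩ := Nat.exists_eq_succ_of_ne_zero hn
    have : (X ^ (m + 1)) u = 0 := by
      rw [pow_succ]; change (X ^ m) (X u) = 0; rw [hu, map_zero]
    simp only [map_smul, ContinuousLinearMap.apply_apply, Nat.succ_eq_add_one]
    rw [this, smul_zero]
  have h4 := h2.unique (hasSum_single 0 h3)
  simpa using h4

/-- transitivity in terms of `aut`. -/
def Trans (C : Set V) : Prop :=
  ∀ x ∈ interior C, ∀ y ∈ interior C, ∃ p ∈ aut C, p.1 x = y

lemma exists_min (C : Set V) (h : SD C) (hT : Trans C) {u x : V} (hu : u ∈ interior C)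
    (hx : x ∈ interior C) :
    ∃ p ∈ aut C, p.1 u = x ∧ ∀ q ∈ aut C, q.1 u = x → ‖p.1 - 1‖ ≤ ‖q.1 - 1‖ := by
  obtain ⟨r, hr, hb⟩ := SD.ball hu
  obtain ⟨r', hr', hb'⟩ := SD.ball hx
  let S : Set ((V →L[ℝ] V) × (V →L[ℝ] V)) := aut C ∩ {p | p.1 u = x}
  have hS : IsClosed S := (aut_closed h).inter
    (isClosed_eq ((ContinuousLinearMap.apply ℝ V u).continuous.comp continuous_fst)
      continuous_const)
  have hbd : S ⊆ Metric.closedBall 0 (max (‖x‖ / r) (‖u‖ / r')) := by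
    rintro ⟨A, B⟩ ⟨hp, hpx⟩
    simp only [mem_ofPred_eq] at hpx
    have e1 := opNorm_le h hr hb A hp.2.2.1
    have e2 := opNorm_le h hr' hb' B hp.2.2.2
    have : B x = u := by
      rw [← hpx]
      change (B * A) u = u
      rw [hp.2.1]; rfl
    rw [hpx] at e1
    rw [this] at e2
    rw [mem_closedBall_zero_iff, Prod.norm_def]
    exact max_le_max e1 e2
  have hc : IsCompact S := (isCompact_closedBall _ _).of_isClosed_subset hS hbd
  obtain ⟨p0, hp0, hp0x⟩ := hT u hu x hx
  obtain ⟨p, hp, hmin⟩ := hc.exists_isMinOn ⟨p0, hp0, hp0x⟩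
    (f := fun p => ‖p.1 - 1‖) (by fun_prop)
  exact ⟨p, hp.1, hp.2, fun q hq hqx => hmin ⟨hq, hqx⟩⟩

lemma exp_slope (X : V →L[ℝ] V) {m : ℕ → ℝ} (hm : Tendsto m atTop (𝓝 0)) (hm0 : ∀ n, 0 < m n) :
    Tendsto (fun n => (m n)⁻¹ • (NormedSpace.exp ((m n) • X) - 1)) atTop (𝓝 X) := by
  have h2 := (hasDerivAt_exp_zero' X).tendsto_slope
  have h3 : Tendsto m atTop (𝓝[≠] 0) := by
    rw [tendsto_nhdsWithin_iff]
    exact ⟨hm, Eventually.of_forall fun n => (hm0 n).ne'⟩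
  refine (h2.comp h3).congr fun n => ?_
  simp [slope, NormedSpace.exp_zero]

set_option maxHeartbeats 800000 in
lemma tangent {C : Set V} (h : SD C) (hT : Trans C) {u : V} (hu : u ∈ interior C) (v : V) :
    ∃ X ∈ lie C, X u = v := by
  obtain ⟨r, hr, hb⟩ := SD.ball hu
  -- the sequence of scales
  obtain ⟨δ, hδ0, hδ, hδr⟩ : ∃ δ : ℕ → ℝ, (∀ n, 0 < δ n) ∧ Tendsto δ atTop (𝓝 0) ∧
      ∀ n, ‖δ n • v‖ ≤ r / 2 := by
    refine ⟨fun n => (r / 2 / (‖v‖ + 1)) * (1 / ((n : ℝ) + 1)), fun n => by positivity, ?_, ?_⟩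
    · simpa using tendsto_one_div_add_atTop_nhds_zero_nat.const_mul (r / 2 / (‖v‖ + 1))
    · intro n
      rw [norm_smul, Real.norm_of_nonneg (by positivity)]
      have h1 : 1 / ((n : ℝ) + 1) ≤ 1 := by
        rw [div_le_one (by positivity)]; linarith [(Nat.cast_nonneg n : (0 : ℝ) ≤ n)]
      calc (r / 2 / (‖v‖ + 1)) * (1 / ((n : ℝ) + 1)) * ‖v‖
          ≤ (r / 2 / (‖v‖ + 1)) * 1 * (‖v‖ + 1) := by gcongr; linarith
        _ = r / 2 := by field_simp
  have hball : ∀ n, ∀ w : V, ‖w‖ ≤ r / 2 → (u + δ n • v) + w ∈ C := by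
    intro n w hw
    rw [add_assoc]
    refine hb _ ((norm_add_le _ _).trans ?_)
    linarith [hδr n]
  have hxn : ∀ n, u + δ n • v ∈ interior C := by
    intro n
    rw [mem_interior_iff_mem_nhds, Metric.mem_nhds_iff]
    refine ⟨r / 2, by positivity, fun z hz => ?_⟩
    rw [Metric.mem_ball, dist_eq_norm] at hz
    have := hball n (z - (u + δ n • v)) hz.le
    rwa [add_sub_cancel] at this
  choose p hp hpu hpmin using fun n => exists_min C h hT hu (hxn n)
  have hback : ∀ n, (p n).2 (u + δ n • v) = u := by
    intro n
    rw [← hpu n]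
    change ((p n).2 * (p n).1) u = u
    rw [(hp n).2.1]; rfl
  have hbd : ∀ n, p n ∈ Metric.closedBall (0 : (V →L[ℝ] V) × (V →L[ℝ] V))
      (max ((‖u‖ + r / 2) / r) (‖u‖ / (r / 2))) := by
    intro n
    have e1 := opNorm_le h hr hb _ (hp n).2.2.1
    have e2 := opNorm_le h (half_pos hr) (hball n) _ (hp n).2.2.2
    rw [hpu] at e1
    rw [hback] at e2
    rw [mem_closedBall_zero_iff, Prod.norm_def]
    refine max_le_max (e1.trans ?_) e2
    gcongr
    exact (norm_add_le _ _).trans (by linarith [hδr n])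
  obtain ⟨q, -, φ, hφ, hlim⟩ := tendsto_subseq_of_bounded Metric.isBounded_closedBall hbd
  have hq : q ∈ aut C := (aut_closed h).mem_of_tendsto hlim (Eventually.of_forall fun n => hp _)
  have hl1 : Tendsto (fun n => (p (φ n)).1) atTop (𝓝 q.1) := (continuous_fst.tendsto _).comp hlim
  have hl2 : Tendsto (fun n => (p (φ n)).2) atTop (𝓝 q.2) := (continuous_snd.tendsto _).comp hlim
  have hδφ : Tendsto (fun n => δ (φ n)) atTop (𝓝 0) := hδ.comp hφ.tendsto_atTop
  have happ : ∀ {A : ℕ → (V →L[ℝ] V)} {B : V →L[ℝ] V} (w : V), Tendsto A atTop (𝓝 B) →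
      Tendsto (fun n => A n w) atTop (𝓝 (B w)) := fun w hA =>
    ((ContinuousLinearMap.apply ℝ V w).continuous.tendsto _).comp hA
  have hqu : q.1 u = u := by
    have h1 := happ u hl1
    have h2 : Tendsto (fun n => u + δ (φ n) • v) atTop (𝓝 (u + (0 : ℝ) • v)) :=
      tendsto_const_nhds.add (hδφ.smul_const v)
    simp only [hpu] at h1
    simpa using tendsto_nhds_unique h1 h2
  have hqu2 : q.2 u = u := by
    conv_lhs => rw [← hqu]
    change (q.2 * q.1) u = u
    rw [hq.2.1]; rfl
  -- the norms tend to zero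
  have hs : Tendsto (fun n => ‖(p (φ n)).1 - 1‖) atTop (𝓝 0) := by
    have h1 : Tendsto (fun n => ‖(p (φ n)).1 * q.2 - 1‖) atTop (𝓝 0) := by
      have := ((hl1.mul_const q.2).sub_const 1).norm
      rwa [hq.1, sub_self, norm_zero] at this
    refine squeeze_zero (fun _ => norm_nonneg _) (fun n => ?_) h1
    have hu1 : ((p (φ n)).1 * q.2) u = u + δ (φ n) • v := by
      rw [mul_apply_eq_comp, hqu2, hpu]
    exact hpmin (φ n) ((p (φ n)).1 * q.2, q.1 * (p (φ n)).2)
      (aut_mul (hp (φ n)) (aut_swap hq)) hu1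
  have hq1 : q.1 = 1 := by
    have := tendsto_nhds_unique hs (hl1.sub_const 1).norm
    exact sub_eq_zero.1 (norm_eq_zero.1 this.symm)
  have hq2 : q.2 = 1 := by
    have := hq.1
    rwa [hq1, one_mul] at this
  set A : ℕ → (V →L[ℝ] V) := fun n => (p (φ n)).1 with hA
  set B : ℕ → (V →L[ℝ] V) := fun n => (p (φ n)).2 with hB
  set m : ℕ → ℝ := fun n => ‖A n - 1‖ + δ (φ n) with hm
  have hm0 : ∀ n, 0 < m n := fun n => add_pos_of_nonneg_of_pos (norm_nonneg _) (hδ0 _)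
  have hmlim : Tendsto m atTop (𝓝 0) := by simpa using hs.add hδφ
  have hbd2 : ∀ n, (((m n)⁻¹ • (A n - 1), (m n)⁻¹ * δ (φ n)) : (V →L[ℝ] V) × ℝ) ∈
      Metric.closedBall (0 : (V →L[ℝ] V) × ℝ) 1 := by
    intro n
    have := hm0 n
    have hd := hδ0 (φ n)
    rw [mem_closedBall_zero_iff, Prod.norm_def]
    refine max_le ?_ ?_
    · rw [norm_smul, Real.norm_of_nonneg (by positivity), inv_mul_le_iff₀ this, mul_one]
      simp only [hm]; linarith
    · rw [Real.norm_of_nonneg (by positivity), inv_mul_le_iff₀ this, mul_one]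
      simp only [hm]; linarith [norm_nonneg (A n - 1)]
  obtain ⟨⟨X, θ⟩, -, ψ, hψ, hlim2⟩ := tendsto_subseq_of_bounded Metric.isBounded_closedBall hbd2
  have hX : Tendsto (fun n => (m (ψ n))⁻¹ • (A (ψ n) - 1)) atTop (𝓝 X) :=
    (continuous_fst.tendsto _).comp hlim2
  have hθ : Tendsto (fun n => (m (ψ n))⁻¹ * δ (φ (ψ n))) atTop (𝓝 θ) :=
    (continuous_snd.tendsto _).comp hlim2
  have hmψ : Tendsto (fun n => m (ψ n)) atTop (𝓝 0) := hmlim.comp hψ.tendsto_atTop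
  have hXu : X u = θ • v := by
    have h1 := happ u hX
    have h2 := hθ.smul_const v
    refine tendsto_nhds_unique h1 (h2.congr fun n => ?_)
    simp [hA, hpu, smul_smul]
  have hXB : Tendsto (fun n => (m (ψ n))⁻¹ • (B (ψ n) - 1)) atTop (𝓝 (-X)) := by
    have h1 : Tendsto (fun n => B (ψ n)) atTop (𝓝 1) := by
      rw [← hq2]; exact hl2.comp hψ.tendsto_atTop
    have h2 := (h1.mul hX).neg
    rw [one_mul] at h2
    refine h2.congr fun n => ?_
    have : B (ψ n) * A (ψ n) = 1 := (hp _).2.1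
    rw [mul_smul_comm, mul_sub, this, mul_one, ← smul_neg, neg_sub]
  have hpos : ∀ (D : ℕ → (V →L[ℝ] V)) (Y : V →L[ℝ] V), (∀ n, MapsTo (D n) C C) →
      Tendsto (fun n => (m (ψ n))⁻¹ • (D n - 1)) atTop (𝓝 Y) →
      ∀ x ∈ C, ∀ y ∈ C, ⟪x, y⟫ = 0 → 0 ≤ ⟪Y x, y⟫ := by
    intro D Y hD hY x hx y hy hxy
    have h1 := Filter.Tendsto.inner (𝕜 := ℝ) (happ x hY) (tendsto_const_nhds (x := y) : Tendsto (fun _ : ℕ => y) atTop _)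
    refine ge_of_tendsto' h1 fun n => ?_
    have := h.inner_nonneg (hD n hx) hy
    have h0 := hm0 (ψ n)
    simp only [smul_apply, sub_apply,
      one_apply_eq_self, real_inner_smul_left, inner_sub_left, hxy, sub_zero]
    positivity
  have hXlie : X ∈ lie C := by
    intro x hx y hy hxy
    have h1 := hpos _ X (fun n => (hp (φ (ψ n))).2.2.1) hX x hx y hy hxy
    have h2 := hpos _ (-X) (fun n => (hp (φ (ψ n))).2.2.2) hXB x hx y hy hxy
    rw [neg_apply, inner_neg_left] at h2
    linarith
  by_cases hθ0 : θ = 0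
  · exfalso
    rw [hθ0, zero_smul] at hXu
    rw [hθ0] at hθ
    have e1 : Tendsto (fun n => NormedSpace.exp (m (ψ n) • -X)) atTop (𝓝 1) := by
      have h0 := (hasDerivAt_exp_zero' (-X)).continuousAt.tendsto
      simp only [zero_smul, NormedSpace.exp_zero] at h0
      exact h0.comp hmψ
    have e2 := (hX.mul e1).add (exp_slope (-X) hmψ (fun n => hm0 _))
    rw [mul_one, add_neg_cancel] at e2
    have e3 := e2.norm
    rw [norm_zero] at e3
    have e4 := e3.add hθ
    rw [add_zero] at e4
    have e5 : ∀ n, 1 ≤ ‖(m (ψ n))⁻¹ • (A (ψ n) - 1) * NormedSpace.exp (m (ψ n) • -X)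
        + (m (ψ n))⁻¹ • (NormedSpace.exp (m (ψ n) • -X) - 1)‖ + (m (ψ n))⁻¹ * δ (φ (ψ n)) := by
      intro n
      have h0 := hm0 (ψ n)
      have : (m (ψ n))⁻¹ • (A (ψ n) - 1) * NormedSpace.exp (m (ψ n) • -X)
        + (m (ψ n))⁻¹ • (NormedSpace.exp (m (ψ n) • -X) - 1) =
        (m (ψ n))⁻¹ • (A (ψ n) * NormedSpace.exp (m (ψ n) • -X) - 1) := by
        rw [smul_mul_assoc, ← smul_add, sub_mul, one_mul]; congr 1; abel
      rw [this, norm_smul, Real.norm_of_nonneg (by positivity), ← mul_add,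
        ← div_eq_inv_mul, le_div_iff₀ h0, one_mul]
      have hmem : m (ψ n) • -X ∈ lie C := (lie C).smul_mem _ (neg_mem hXlie)
      have hu1 : ((p (φ (ψ n))).1 * NormedSpace.exp (m (ψ n) • -X)) u
          = u + δ (φ (ψ n)) • v := by
        rw [mul_apply_eq_comp, exp_fix _ (by simp [hXu]), hpu]
      have h9 : ‖A (ψ n) - 1‖ ≤ ‖A (ψ n) * NormedSpace.exp (m (ψ n) • -X) - 1‖ :=
        hpmin (φ (ψ n)) ((p (φ (ψ n))).1 * NormedSpace.exp (m (ψ n) • -X),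
          NormedSpace.exp (-(m (ψ n) • -X)) * (p (φ (ψ n))).2)
          (aut_mul (hp (φ (ψ n))) (exp_aut h hu hmem)) hu1
      have h10 : m (ψ n) = ‖A (ψ n) - 1‖ + δ (φ (ψ n)) := rfl
      linarith
    have := ge_of_tendsto' e4 e5
    norm_num at this
  · refine ⟨θ⁻¹ • X, (lie C).smul_mem _ hXlie, ?_⟩
    rw [smul_apply, hXu, smul_smul, inv_mul_cancel₀ hθ0, one_smul]

open ContinuousLinearMap (adjoint)

lemma adjoint_mapsTo {C : Set V} (h : SD C) {A : V →L[ℝ] V} (hA : MapsTo A C C) :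
    MapsTo (adjoint A) C C := by
  intro y hy
  rw [h]; intro x hx
  rw [ContinuousLinearMap.adjoint_inner_right]
  exact h.inner_nonneg (hA hx) hy

lemma adjoint_exp (X : V →L[ℝ] V) :
    adjoint (NormedSpace.exp X) = NormedSpace.exp (adjoint X) := by
  let : NormedAlgebra ℚ (V →L[ℝ] V) := NormedAlgebra.restrictScalars ℚ ℝ _
  simpa [ContinuousLinearMap.star_eq_adjoint] using NormedSpace.star_exp X

lemma hasDerivAt_exp_apply (X : V →L[ℝ] V) (v : V) :
    HasDerivAt (fun t : ℝ => NormedSpace.exp (t • X) v) (X v) 0 := by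
  have h1 := hasDerivAt_exp_zero' X
  exact (ContinuousLinearMap.apply ℝ V v).hasFDerivAt.comp_hasDerivAt (0 : ℝ) h1

lemma exists_e {C : Set V} (h : SD C) {u : V} (hu : u ∈ interior C) :
    ∃ e ∈ interior C, ∀ X ∈ lie C, adjoint X = -X → X e = 0 := by
  set D : Set V := {x | ∀ y ∈ C, ‖y‖ ≤ ⟪x, y⟫} with hD
  have hDc : IsClosed D := by
    have : D = ⋂ y ∈ C, {x | ‖y‖ ≤ ⟪x, y⟫} := by ext; simp [hD]
    rw [this]
    exact isClosed_biInter fun x _ => isClosed_le continuous_const (by fun_prop)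
  have hDconv : Convex ℝ D := by
    intro a ha b hb s t hs ht hst y hy
    rw [inner_add_left, real_inner_smul_left, real_inner_smul_left]
    have h1 := mul_le_mul_of_nonneg_left (ha y hy) hs
    have h2 := mul_le_mul_of_nonneg_left (hb y hy) ht
    calc ‖y‖ = s * ‖y‖ + t * ‖y‖ := by rw [← add_mul, hst, one_mul]
      _ ≤ _ := add_le_add h1 h2
  have hne : D.Nonempty := by
    obtain ⟨r, hr, hb⟩ := SD.ball hu
    refine ⟨r⁻¹ • u, fun y hy => ?_⟩
    by_cases hy0 : y = 0
    · simp [hy0]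
    have hy' : 0 < ‖y‖ := norm_pos_iff.2 hy0
    have := h.inner_nonneg (hb (-((r / ‖y‖) • y)) (by
      rw [norm_neg, norm_smul, Real.norm_of_nonneg (by positivity)]; field_simp; rfl)) hy
    rw [inner_add_left, inner_neg_left, real_inner_smul_left, real_inner_self_eq_norm_sq] at this
    rw [real_inner_smul_left, ← div_eq_inv_mul, le_div_iff₀ hr]
    have e : r / ‖y‖ * ‖y‖ ^ 2 = ‖y‖ * r := by field_simp
    linarith
  obtain ⟨e, he, hee⟩ := exists_norm_eq_iInf_of_complete_convex hne hDc.isComplete hDconv 0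
  have hmin := (norm_eq_iInf_iff_real_inner_le_zero hDconv he).1 hee
  have heint : e ∈ interior C := by
    rw [mem_interior_iff_mem_nhds, Metric.mem_nhds_iff]
    refine ⟨1, one_pos, fun z hz => ?_⟩
    rw [Metric.mem_ball, dist_eq_norm] at hz
    rw [h]; intro y hy
    have h1 := he y hy
    have h2 := abs_le.1 (abs_real_inner_le_norm (z - e) y)
    have h3 : ‖z - e‖ * ‖y‖ ≤ 1 * ‖y‖ := by gcongr
    have h4 : ⟪y, z⟫ = ⟪e, y⟫ + ⟪z - e, y⟫ := by
      rw [← inner_add_left, add_sub_cancel, real_inner_comm]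
    rw [h4]; linarith [h2.1]
  refine ⟨e, heint, fun X hX hskew => ?_⟩
  have hfix : ∀ t : ℝ, NormedSpace.exp (t • X) e = e := by
    intro t
    have hmem : t • X ∈ lie C := (lie C).smul_mem _ hX
    have hau := exp_aut h hu hmem
    have hadj : adjoint (NormedSpace.exp (t • X)) = NormedSpace.exp (-(t • X)) := by
      rw [adjoint_exp]; congr 1; simp [hskew]
    have hadj2 : adjoint (NormedSpace.exp (-(t • X))) = NormedSpace.exp (t • X) := by
      rw [← hadj, ContinuousLinearMap.adjoint_adjoint]
    have hinv : ∀ w, NormedSpace.exp (t • X) (NormedSpace.exp (-(t • X)) w) = w := by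
      intro w
      rw [← mul_apply_eq_comp, hau.1]; rfl
    have hinv2 : ∀ w, NormedSpace.exp (-(t • X)) (NormedSpace.exp (t • X) w) = w := by
      intro w
      rw [← mul_apply_eq_comp, hau.2.1]; rfl
    set k := NormedSpace.exp (t • X)
    set k' := NormedSpace.exp (-(t • X))
    have hn : ∀ w, ‖k w‖ ^ 2 = ‖w‖ ^ 2 := by
      intro w
      rw [← real_inner_self_eq_norm_sq, ← ContinuousLinearMap.adjoint_inner_right, hadj, hinv2,
        real_inner_self_eq_norm_sq]
    have hn' : ∀ w, ‖k' w‖ = ‖w‖ := by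
      intro w
      have := hn (k' w)
      rw [hinv] at this
      exact (sq_eq_sq₀ (norm_nonneg _) (norm_nonneg _)).1 this.symm
    have hkD : k e ∈ D := by
      intro y hy
      rw [← ContinuousLinearMap.adjoint_inner_right, hadj, ← hn' y]
      exact he _ (hau.2.2.2 hy)
    have h1 := hmin _ hkD
    rw [zero_sub, inner_neg_left, inner_sub_right, real_inner_self_eq_norm_sq] at h1
    have h2 := hn e
    have h3 : ‖k e - e‖ ^ 2 ≤ 0 := by
      rw [norm_sub_sq_real, real_inner_comm]; linarith
    have h4 : ‖k e - e‖ = 0 := by nlinarith [norm_nonneg (k e - e)]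
    exact sub_eq_zero.1 (norm_eq_zero.1 h4)
  have h1 := hasDerivAt_exp_apply X e
  simp only [hfix] at h1
  exact h1.unique (hasDerivAt_const _ _)

lemma sym_inj {C : Set V} (h : SD C) {u : V} (hu : u ∈ interior C) {X : V →L[ℝ] V}
    (hX : X ∈ lie C) (hs : adjoint X = X) (hXu : X u = 0) : X = 0 := by
  obtain ⟨r, hr, hb⟩ := SD.ball hu
  let : NormedAlgebra ℚ (V →L[ℝ] V) := NormedAlgebra.restrictScalars ℚ ℝ _
  have hbound : ∀ t : ℝ, ‖NormedSpace.exp (t • X)‖ ≤ ‖u‖ / r := by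
    intro t
    have := opNorm_le h hr hb _ (exp_mapsTo h hu ((lie C).smul_mem t hX))
    rwa [exp_fix _ (by simp [hXu])] at this
  have hle : ∀ t : ℝ, ‖NormedSpace.exp (t • X)‖ ≤ 1 := by
    intro t
    by_contra hc
    push Not at hc
    have hsa : IsSelfAdjoint (NormedSpace.exp (t • X)) := by
      rw [IsSelfAdjoint, ContinuousLinearMap.star_eq_adjoint, adjoint_exp]; simp [hs]
    have hp : ∀ n : ℕ, ‖NormedSpace.exp (t • X)‖ ^ (2 ^ n) ≤ ‖u‖ / r := by
      intro n
      have h1 : ‖NormedSpace.exp (t • X) ^ (2 ^ n)‖ = ‖NormedSpace.exp (t • X)‖ ^ (2 ^ n) :=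
        IsSelfAdjoint.norm_pow_two_pow (E := V →L[ℝ] V) hsa n
      rw [← h1, ← NormedSpace.exp_nsmul, ← Nat.cast_smul_eq_nsmul ℝ, smul_smul]
      exact hbound _
    obtain ⟨n, hn⟩ := pow_unbounded_of_one_lt (‖u‖ / r) hc
    have h2 := pow_le_pow_right₀ hc.le (Nat.lt_two_pow_self (n := n)).le
    linarith [hp n]
  have hzero : ∀ v, ⟪X v, v⟫ = 0 := by
    intro v
    have hd : HasDerivAt (fun t : ℝ => ⟪NormedSpace.exp (t • X) v, v⟫) ⟪X v, v⟫ 0 := by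
      have := (hasDerivAt_exp_apply X v).inner ℝ (hasDerivAt_const (0 : ℝ) v)
      simpa using this
    refine IsLocalMax.hasDerivAt_eq_zero (Eventually.of_forall fun t => ?_) hd
    simp only [zero_smul, NormedSpace.exp_zero]
    rw [one_apply_eq_self, real_inner_self_eq_norm_sq]
    refine (real_inner_le_norm _ _).trans ?_
    rw [sq]
    gcongr
    calc _ ≤ ‖NormedSpace.exp (t • X)‖ * ‖v‖ := ContinuousLinearMap.le_opNorm _ _
      _ ≤ 1 * ‖v‖ := by gcongr; exact hle t
      _ = _ := one_mul _
  have hsym : (X : V →ₗ[ℝ] V).IsSymmetric := by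
    intro a b
    change ⟪X a, b⟫ = ⟪a, X b⟫
    rw [← ContinuousLinearMap.adjoint_inner_right, hs]
  have := hsym.inner_map_self_eq_zero.1 hzero
  exact ContinuousLinearMap.coe_injective this

/-- symmetric part of the Lie algebra -/
def symLie (C : Set V) : Submodule ℝ (V →L[ℝ] V) where
  carrier := {X | X ∈ lie C ∧ adjoint X = X}
  add_mem' := by
    rintro X Y ⟨h1, h2⟩ ⟨h3, h4⟩
    exact ⟨add_mem h1 h3, by rw [map_add, h2, h4]⟩
  zero_mem' := ⟨zero_mem _, by simp⟩
  smul_mem' := by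
    rintro c X ⟨h1, h2⟩
    exact ⟨(lie C).smul_mem _ h1, by simp [h2]⟩

lemma sym_surj {C : Set V} (h : SD C) (hT : Trans C) {u : V} (hu : u ∈ interior C) (v : V) :
    ∃ X ∈ lie C, adjoint X = X ∧ X u = v := by
  let ev : V → (symLie C →ₗ[ℝ] V) := fun w =>
    ((ContinuousLinearMap.apply ℝ V w : (V →L[ℝ] V) →L[ℝ] V) : (V →L[ℝ] V) →ₗ[ℝ] V) ∘ₗ
      (symLie C).subtype
  have hev : ∀ w (X : symLie C), ev w X = (X : V →L[ℝ] V) w := fun _ _ => rfl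
  have hinj : ∀ w ∈ interior C, Function.Injective (ev w) := by
    intro w hw
    rw [← LinearMap.ker_eq_bot, LinearMap.ker_eq_bot']
    rintro ⟨X, hX, hs⟩ h0
    exact Subtype.ext (sym_inj h hw hX hs h0)
  obtain ⟨e, he, hskew⟩ := exists_e h hu
  have hsurj : Function.Surjective (ev e) := by
    intro w
    obtain ⟨X, hX, hXe⟩ := tangent h hT he w
    have hXa := lie_adjoint hX
    have hk : (X - adjoint X) e = 0 := hskew _ (sub_mem hX hXa) (by simp)
    have hk2 : adjoint X e = w := by
      rw [sub_apply, hXe, sub_eq_zero] at hk; exact hk.symm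
    refine ⟨⟨(1 / 2 : ℝ) • (X + adjoint X), (lie C).smul_mem _ (add_mem hX hXa), ?_⟩, ?_⟩
    · simp [add_comm]
    · rw [hev]
      simp only [smul_apply, add_apply, hXe, hk2]
      rw [← two_smul ℝ w, smul_smul]; norm_num
  have hfr : Module.finrank ℝ (symLie C) = Module.finrank ℝ V :=
    (LinearEquiv.ofBijective (ev e) ⟨hinj e he, hsurj⟩).finrank_eq
  have := (LinearMap.injective_iff_surjective_of_finrank_eq_finrank hfr).1 (hinj u hu)
  obtain ⟨⟨X, hX, hs⟩, hXv⟩ := this v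
  exact ⟨X, hX, hs, hXv⟩

lemma aut_interior {C : Set V} {p : (V →L[ℝ] V) × (V →L[ℝ] V)} (hp : p ∈ aut C) {x : V}
    (hx : x ∈ interior C) : p.1 x ∈ interior C := by
  obtain ⟨r, hr, hb⟩ := SD.ball hx
  have hcont : p.2 ⁻¹' interior C ∈ 𝓝 (p.1 x) := by
    refine p.2.continuous.continuousAt.preimage_mem_nhds (isOpen_interior.mem_nhds ?_)
    rw [← mul_apply_eq_comp, hp.2.1]; exact hx
  rw [mem_interior_iff_mem_nhds]
  filter_upwards [hcont] with z hz
  have : z = p.1 (p.2 z) := by rw [← mul_apply_eq_comp, hp.1]; rfl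
  rw [this]
  exact hp.2.2.1 (interior_subset hz)

lemma scaling {C : Set V} (h : SD C) (hT : Trans C) {x y : V} (hx : x ∈ interior C)
    (hy : y ∈ interior C) : ∃ p ∈ aut C, p.1 x = adjoint p.2 y := by
  obtain ⟨r, hr, hb⟩ := SD.ball hx
  obtain ⟨r', hr', hb'⟩ := SD.ball hy
  let f : (V →L[ℝ] V) × (V →L[ℝ] V) → ℝ := fun p => ‖p.1 x‖ ^ 2 + ‖adjoint p.2 y‖ ^ 2
  have hadjc : Continuous (fun B : V →L[ℝ] V => adjoint B) := LinearIsometryEquiv.continuous _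
  have hf : Continuous f := by
    have h1 : Continuous (fun p : (V →L[ℝ] V) × (V →L[ℝ] V) => p.1 x) :=
      (ContinuousLinearMap.apply ℝ V x).continuous.comp continuous_fst
    have h2 : Continuous (fun p : (V →L[ℝ] V) × (V →L[ℝ] V) => adjoint p.2 y) :=
      (ContinuousLinearMap.apply ℝ V y).continuous.comp (hadjc.comp continuous_snd)
    exact (h1.norm.pow 2).add (h2.norm.pow 2)
  set c := f (1, 1) with hc
  let S := aut C ∩ {p | f p ≤ c}
  have hS : IsClosed S := (aut_closed h).inter (isClosed_le hf continuous_const)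
  have hbd : S ⊆ Metric.closedBall 0 (max ((c + 1) / r) ((c + 1) / r')) := by
    rintro ⟨A, B⟩ ⟨hp, hpc⟩
    have hpc' : ‖A x‖ ^ 2 + ‖adjoint B y‖ ^ 2 ≤ c := hpc
    have e1 := opNorm_le h hr hb A hp.2.2.1
    have e2 := opNorm_le h hr' hb' (adjoint B) (adjoint_mapsTo h hp.2.2.2)
    rw [LinearIsometryEquiv.norm_map] at e2
    rw [mem_closedBall_zero_iff, Prod.norm_def]
    refine max_le_max (e1.trans ?_) (e2.trans ?_)
    · gcongr; nlinarith [sq_nonneg (‖A x‖ - 1), sq_nonneg (‖adjoint B y‖)]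
    · gcongr; nlinarith [sq_nonneg (‖adjoint B y‖ - 1), sq_nonneg (‖A x‖)]
  have hcpt : IsCompact S := (isCompact_closedBall _ _).of_isClosed_subset hS hbd
  have h1mem : ((1, 1) : (V →L[ℝ] V) × (V →L[ℝ] V)) ∈ aut C :=
    ⟨one_mul _, one_mul _, fun x hx => hx, fun x hx => hx⟩
  obtain ⟨p, hp, hmin⟩ := hcpt.exists_isMinOn ⟨(1, 1), h1mem, le_refl c⟩ hf.continuousOn
  have hmin' : ∀ q ∈ aut C, f p ≤ f q := by
    intro q hq
    by_cases hqc : f q ≤ c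
    · exact hmin ⟨hq, hqc⟩
    · push Not at hqc
      have : f p ≤ c := hp.2
      linarith
  refine ⟨p, hp.1, ?_⟩
  set a := p.1 x with ha
  set b := adjoint p.2 y with hbdef
  have haint : a ∈ interior C := aut_interior hp.1 hx
  have hbC : b ∈ C := adjoint_mapsTo h hp.1.2.2.2 (interior_subset hy)
  obtain ⟨X, hX, hs, hXab⟩ := sym_surj h hT (interior_add h haint hbC) (a - b)
  have hd : HasDerivAt (fun t : ℝ => ‖NormedSpace.exp (t • X) a‖ ^ 2
      + ‖NormedSpace.exp (t • -X) b‖ ^ 2) (2 * ⟪a, X a⟫ + 2 * ⟪b, (-X) b⟫) 0 := by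
    have h1 := (hasDerivAt_exp_apply X a).norm_sq
    have h2 := (hasDerivAt_exp_apply (-X) b).norm_sq
    have h3 := h1.add h2
    simp only [zero_smul, NormedSpace.exp_zero, one_apply_eq_self] at h3
    exact h3
  have hz : 2 * ⟪a, X a⟫ + 2 * ⟪b, (-X) b⟫ = 0 := by
    refine IsLocalMin.hasDerivAt_eq_zero (Eventually.of_forall fun t => ?_) hd
    simp only [zero_smul, NormedSpace.exp_zero, one_apply_eq_self]
    have hm := hmin' _ (aut_mul (exp_aut h hx ((lie C).smul_mem t hX)) hp.1)
    have e1 : adjoint (p.2 * NormedSpace.exp (-(t • X))) y = NormedSpace.exp (t • -X) b := by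
      have : p.2 * NormedSpace.exp (-(t • X)) = p.2 ∘L NormedSpace.exp (-(t • X)) := rfl
      rw [this, ContinuousLinearMap.adjoint_comp, adjoint_exp]
      simp [hs, hbdef]
    have e2 : f (NormedSpace.exp (t • X) * p.1, p.2 * NormedSpace.exp (-(t • X))) =
        ‖NormedSpace.exp (t • X) a‖ ^ 2 + ‖NormedSpace.exp (t • -X) b‖ ^ 2 := by
      simp only [f]
      rw [e1]; rfl
    rw [← e2]
    exact hm
  have hsym : ⟪a, X b⟫ = ⟪b, X a⟫ := by
    rw [← ContinuousLinearMap.adjoint_inner_left, hs, real_inner_comm]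
  rw [neg_apply, inner_neg_right] at hz
  have hfin : ⟪a - b, X (a + b)⟫ = 0 := by
    rw [map_add, inner_add_right, inner_sub_left, inner_sub_left]; linarith
  rw [hXab] at hfin
  exact sub_eq_zero.1 (inner_self_eq_zero.1 hfin)

lemma exists_signs {k : ℕ} (z : Fin k → V) (s : Finset (Fin k)) :
    ∃ ε : Fin k → ℝ, (∀ i, ε i = 1 ∨ ε i = -1) ∧
      ∑ i ∈ s, ‖z i‖ ^ 2 ≤ ‖∑ i ∈ s, ε i • z i‖ ^ 2 := by
  classical
  induction s using Finset.induction_on with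
  | empty => exact ⟨fun _ => 1, fun _ => Or.inl rfl, by simp⟩
  | insert j s hj ih =>
    obtain ⟨ε, hε, hle⟩ := ih
    have key : ∀ c : ℝ, ∑ i ∈ s, (Function.update ε j c) i • z i = ∑ i ∈ s, ε i • z i := by
      intro c
      refine Finset.sum_congr rfl fun i hi => ?_
      have hne : i ≠ j := by
        rintro rfl
        exact hj hi
      rw [Function.update_of_ne hne]
    have hex : ∃ c : ℝ, (c = 1 ∨ c = -1) ∧ 0 ≤ c * ⟪z j, ∑ i ∈ s, ε i • z i⟫ := by
      rcases le_total 0 ⟪z j, ∑ i ∈ s, ε i • z i⟫ with h | h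
      · exact ⟨1, Or.inl rfl, by linarith⟩
      · exact ⟨-1, Or.inr rfl, by linarith⟩
    obtain ⟨c, hc, hc0⟩ := hex
    refine ⟨Function.update ε j c, fun i => ?_, ?_⟩
    · by_cases h : i = j
      · subst h; simpa using hc
      · simpa [Function.update_of_ne h] using hε i
    · rw [Finset.sum_insert hj, Finset.sum_insert hj, key, Function.update_self,
        norm_add_sq_real, real_inner_smul_left, norm_smul]
      have : ‖c‖ = 1 := by rcases hc with h | h <;> simp [h]
      rw [this, one_mul]; linarith

def Signed {k : ℕ} (C : Set V) (z0 : V) (z : Fin k → V) : Prop :=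
  ∀ ε : Fin k → ℝ, (∀ i, ε i = 1 ∨ ε i = -1) → z0 + ∑ i, ε i • z i ∈ C

lemma ineq_same {C : Set V} (h : SD C) {k : ℕ} {p : V} {z w : Fin k → V}
    (hz : Signed C p z) (hw : ∀ i, p + w i ∈ C ∧ p - w i ∈ C) :
    0 ≤ Real.sqrt k * ⟪p, p⟫ + ∑ i, ⟪z i, w i⟫ := by
  have h1 : ∑ i, ‖z i‖ ^ 2 ≤ ‖p‖ ^ 2 := by
    obtain ⟨ε, hε, hle⟩ := exists_signs z Finset.univ
    refine hle.trans ?_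
    have a1 := hz ε hε
    have a2 := hz (fun i => - ε i) (fun i => by rcases hε i with h | h <;> simp [h])
    simp only [neg_smul, Finset.sum_neg_distrib, ← sub_eq_add_neg] at a2
    have := h.norm_le a1 a2
    gcongr
  have h2 : ∀ i, ‖w i‖ ≤ ‖p‖ := fun i => h.norm_le (hw i).1 (hw i).2
  have h3 : (∑ i, ‖z i‖) ≤ Real.sqrt k * ‖p‖ := by
    have := sq_sum_le_card_mul_sum_sq (s := Finset.univ) (f := fun i => ‖z i‖)
    rw [Finset.card_univ, Fintype.card_fin] at this
    refine le_of_sq_le_sq ?_ (by positivity)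
    rw [mul_pow, Real.sq_sqrt (by positivity)]
    exact this.trans (by gcongr)
  have h4 : -(‖p‖ * ∑ i, ‖z i‖) ≤ ∑ i, ⟪z i, w i⟫ := by
    rw [Finset.mul_sum, ← Finset.sum_neg_distrib]
    refine Finset.sum_le_sum fun i _ => ?_
    have := (abs_le.1 (abs_real_inner_le_norm (z i) (w i))).1
    have h5 : ‖z i‖ * ‖w i‖ ≤ ‖z i‖ * ‖p‖ := by gcongr; exact h2 i
    linarith [mul_comm ‖z i‖ ‖p‖]
  rw [real_inner_self_eq_norm_sq]
  have h6 : ‖p‖ * ∑ i, ‖z i‖ ≤ ‖p‖ * (Real.sqrt k * ‖p‖) := by gcongr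
  nlinarith

lemma ineq_int {C : Set V} (h : SD C) (hT : Trans C) {k : ℕ} {z0 w0 : V} {z w : Fin k → V}
    (hz0 : z0 ∈ interior C) (hw0 : w0 ∈ interior C)
    (hz : Signed C z0 z) (hw : ∀ i, w0 + w i ∈ C ∧ w0 - w i ∈ C) :
    0 ≤ Real.sqrt k * ⟪z0, w0⟫ + ∑ i, ⟪z i, w i⟫ := by
  obtain ⟨p, hp, hpe⟩ := scaling h hT hz0 hw0
  have hB := adjoint_mapsTo h hp.2.2.2
  have hin : ∀ a b : V, ⟪p.1 a, adjoint p.2 b⟫ = ⟪a, b⟫ := by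
    intro a b
    rw [ContinuousLinearMap.adjoint_inner_right, ← mul_apply_eq_comp, hp.2.1]; rfl
  have := ineq_same h (k := k) (p := p.1 z0) (z := fun i => p.1 (z i))
    (w := fun i => adjoint p.2 (w i)) ?_ ?_
  · simp only [hin] at this
    rw [← hin z0 w0, ← hpe]
    exact this
  · intro ε hε
    have := hp.2.2.1 (hz ε hε)
    simpa [map_add, map_sum, map_smul] using this
  · intro i
    rw [hpe, ← map_add, ← map_sub]
    exact ⟨hB (hw i).1, hB (hw i).2⟩

lemma ineq {C : Set V} (h : SD C) (hT : Trans C) {u : V} (hu : u ∈ interior C) {k : ℕ}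
    (hk : 1 ≤ k) {z0 w0 : V} {z w : Fin k → V}
    (hz : Signed C z0 z) (hw : ∀ i, w0 + w i ∈ C ∧ w0 - w i ∈ C) :
    0 ≤ Real.sqrt k * ⟪z0, w0⟫ + ∑ i, ⟪z i, w i⟫ := by
  have hhalf : ∀ {a b : V}, a + b ∈ C → a - b ∈ C → a ∈ C := by
    intro a b h1 h2
    have := h.smul (h.add h1 h2) (c := 1 / 2) (by norm_num)
    have e : (1 / 2 : ℝ) • (a + b + (a - b)) = a := by
      rw [add_add_sub_cancel, ← two_smul ℝ a, smul_smul]; norm_num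
    rwa [e] at this
  have hw0 : w0 ∈ C := hhalf (hw ⟨0, hk⟩).1 (hw ⟨0, hk⟩).2
  have hz0 : z0 ∈ C := by
    have a1 := hz (fun _ => 1) (fun _ => Or.inl rfl)
    have a2 := hz (fun _ => -1) (fun _ => Or.inr rfl)
    simp only [neg_smul, Finset.sum_neg_distrib, ← sub_eq_add_neg] at a2
    exact hhalf a1 a2
  have key : ∀ n : ℕ, 0 ≤ Real.sqrt k * ⟪z0 + (1 / ((n : ℝ) + 1)) • u,
      w0 + (1 / ((n : ℝ) + 1)) • u⟫ + ∑ i, ⟪z i, w i⟫ := by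
    intro n
    have hun : (1 / ((n : ℝ) + 1)) • u ∈ interior C := interior_smul h hu (by positivity)
    have hun' := interior_subset hun
    refine ineq_int h hT (by rw [add_comm]; exact interior_add h hun hz0)
      (by rw [add_comm]; exact interior_add h hun hw0) ?_ ?_
    · intro ε hε
      rw [add_right_comm]
      exact h.add (hz ε hε) hun'
    · intro i
      rw [add_right_comm, add_sub_right_comm]
      exact ⟨h.add (hw i).1 hun', h.add (hw i).2 hun'⟩
  have hl : ∀ a : V, Tendsto (fun n : ℕ => a + (1 / ((n : ℝ) + 1)) • u) atTop (𝓝 a) := by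
    intro a
    simpa using tendsto_const_nhds.add
      ((tendsto_one_div_add_atTop_nhds_zero_nat (𝕜 := ℝ)).smul_const u)
  have hlim := ((Filter.Tendsto.inner (𝕜 := ℝ) (hl z0) (hl w0)).const_mul
    (Real.sqrt k)).add_const (∑ i, ⟪z i, w i⟫)
  exact ge_of_tendsto' hlim key

/-- The cone of decomposable elements. -/
def dec (C : Set V) (k : ℕ) : Set (V × (Fin k → V)) :=
  {q | ∃ a b : Fin k → V, (∀ i, a i ∈ C) ∧ (∀ i, b i ∈ C) ∧ (∑ i, (a i + b i) = q.1) ∧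
    (∀ i, a i - b i = q.2 i)}

lemma dec_add {C : Set V} (h : SD C) {k : ℕ} {q q' : V × (Fin k → V)} (hq : q ∈ dec C k)
    (hq' : q' ∈ dec C k) : q + q' ∈ dec C k := by
  obtain ⟨a, b, ha, hb, hs, hd⟩ := hq
  obtain ⟨a', b', ha', hb', hs', hd'⟩ := hq'
  refine ⟨a + a', b + b', fun i => h.add (ha i) (ha' i), fun i => h.add (hb i) (hb' i), ?_, ?_⟩
  · rw [Prod.fst_add, ← hs, ← hs', ← Finset.sum_add_distrib]
    refine Finset.sum_congr rfl fun i _ => ?_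
    simp only [Pi.add_apply]; abel
  · intro i
    simp only [Prod.snd_add, Pi.add_apply]
    rw [← hd, ← hd']; abel

lemma dec_smul {C : Set V} (h : SD C) {k : ℕ} {q : V × (Fin k → V)} (hq : q ∈ dec C k)
    {c : ℝ} (hc : 0 ≤ c) : c • q ∈ dec C k := by
  obtain ⟨a, b, ha, hb, hs, hd⟩ := hq
  refine ⟨c • a, c • b, fun i => h.smul (ha i) hc, fun i => h.smul (hb i) hc, ?_, ?_⟩
  · simp [← hs, Finset.smul_sum]
  · intro i
    simp [← hd, smul_sub]

lemma dec_closed {C : Set V} (h : SD C) (k : ℕ) : IsClosed (dec C k) := by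
  apply IsSeqClosed.isClosed
  intro q l hq hl
  choose a b ha hb hs hd using hq
  obtain ⟨M, hM⟩ := (hl.fst_nhds.norm).bddAbove_range
  have hM' : ∀ n, ‖(q n).1‖ ≤ M := fun n => hM ⟨n, rfl⟩
  have hM0 : 0 ≤ M := (norm_nonneg _).trans (hM' 0)
  have hbound : ∀ n, ((a n, b n) : (Fin k → V) × (Fin k → V)) ∈ Metric.closedBall 0 M := by
    intro n
    have hsC : ∀ i, (q n).1 - (a n i + b n i) ∈ C := by
      classical
      intro i
      rw [← hs n, ← Finset.add_sum_erase _ _ (Finset.mem_univ i), add_sub_cancel_left]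
      exact h.sum _ _ fun j _ => h.add (ha n j) (hb n j)
    have key : ∀ x y : V, x ∈ C → y ∈ C → (q n).1 - (x + y) ∈ C → ‖x‖ ≤ M := by
      intro x y hx hy hxy
      refine (h.norm_le (a := (q n).1) (b := x) ?_ ?_).trans (hM' n)
      · have := h.add (h.add hxy hy) (h.add hx hx)
        convert this using 1; abel
      · have := h.add hxy hy
        convert this using 1; abel
    rw [mem_closedBall_zero_iff, Prod.norm_def]
    refine max_le ((pi_norm_le_iff_of_nonneg hM0).2 fun i => ?_)
      ((pi_norm_le_iff_of_nonneg hM0).2 fun i => ?_)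
    · exact key _ _ (ha n i) (hb n i) (hsC i)
    · exact key _ _ (hb n i) (ha n i) (by rw [add_comm (b n i)]; exact hsC i)
  obtain ⟨⟨a', b'⟩, -, φ, hφ, hlim⟩ := tendsto_subseq_of_bounded Metric.isBounded_closedBall hbound
  have hla : ∀ i, Tendsto (fun n => a (φ n) i) atTop (𝓝 (a' i)) := fun i =>
    (tendsto_pi_nhds.1 hlim.fst_nhds) i
  have hlb : ∀ i, Tendsto (fun n => b (φ n) i) atTop (𝓝 (b' i)) := fun i =>
    (tendsto_pi_nhds.1 hlim.snd_nhds) i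
  have hl' := hl.comp hφ.tendsto_atTop
  refine ⟨a', b', fun i => h.closed.mem_of_tendsto (hla i) (Eventually.of_forall fun n => ha _ i),
    fun i => h.closed.mem_of_tendsto (hlb i) (Eventually.of_forall fun n => hb _ i), ?_, ?_⟩
  · have h1 := tendsto_finsetSum Finset.univ fun i _ => (hla i).add (hlb i)
    refine tendsto_nhds_unique h1 (hl'.fst_nhds.congr fun n => ?_)
    simp [hs]
  · intro i
    refine tendsto_nhds_unique ((hla i).sub (hlb i))
      (((tendsto_pi_nhds.1 hl'.snd_nhds) i).congr fun n => ?_)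
    simp [hd]

lemma main_dec {C : Set V} (h : SD C) (hT : Trans C) {u : V} (hu : u ∈ interior C) {k : ℕ}
    (hk : 1 ≤ k) {z0 : V} {z : Fin k → V} (hz : Signed C z0 z) :
    ((Real.sqrt k) • z0, z) ∈ dec C k := by
  classical
  by_contra hn
  have hconv : Convex ℝ (dec C k) := by
    intro x hx y hy s t hs ht _
    exact dec_add h (dec_smul h hx hs) (dec_smul h hy ht)
  obtain ⟨f, m, hf, hm⟩ := geometric_hahn_banach_closed_point hconv (dec_closed h k) hn
  have h0 : (0 : V × (Fin k → V)) ∈ dec C k :=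
    ⟨0, 0, fun _ => h.zero, fun _ => h.zero, by simp, by simp⟩
  have hm0 : 0 < m := by simpa using hf 0 h0
  have hneg : ∀ q ∈ dec C k, f q ≤ 0 := by
    intro q hq
    by_contra hc
    push Not at hc
    have := hf _ (dec_smul h hq (c := m / f q) (by positivity))
    rw [map_smul, smul_eq_mul, div_mul_cancel₀ _ hc.ne'] at this
    exact lt_irrefl _ this
  let g0 : V →L[ℝ] ℝ := f ∘L ContinuousLinearMap.inl ℝ V (Fin k → V)
  let g : Fin k → (V →L[ℝ] ℝ) := fun i =>
    f ∘L ContinuousLinearMap.inr ℝ V (Fin k → V) ∘L ContinuousLinearMap.single ℝ (fun _ => V) i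
  let w0 : V := -(InnerProductSpace.toDual ℝ V).symm g0
  let w : Fin k → V := fun i => -(InnerProductSpace.toDual ℝ V).symm (g i)
  have hw0 : ∀ x, ⟪w0, x⟫ = - f (x, 0) := by
    intro x
    simp [w0, inner_neg_left, InnerProductSpace.toDual_symm_apply, g0]
  have hwi : ∀ i x, ⟪w i, x⟫ = - f (0, Pi.single i x) := by
    intro i x
    simp [w, inner_neg_left, InnerProductSpace.toDual_symm_apply, g]
  have hsplit : ∀ (s : V) (y : Fin k → V), f (s, y) = -⟪w0, s⟫ - ∑ i, ⟪w i, y i⟫ := by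
    intro s y
    have e : (s, y) = (s, 0) + ∑ i, ((0 : V), (Pi.single i (y i) : Fin k → V)) := by
      ext j
      · simp [Prod.fst_sum]
      · simp [Prod.snd_sum, Finset.sum_apply, Finset.sum_pi_single]
    rw [e, map_add, map_sum, hw0]
    simp only [hwi, Finset.sum_neg_distrib]
    ring
  have hmem : ∀ i, w0 + w i ∈ C ∧ w0 - w i ∈ C := by
    intro i
    constructor
    · rw [h]; intro x hx
      have := hneg (x, Pi.single i x) ⟨Pi.single i x, 0, fun j => by
        by_cases hj : j = i
        · subst hj; simpa using hx
        · simpa [hj] using h.zero, fun j => h.zero, by simp, by simp⟩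
      rw [hsplit] at this
      have e : ∑ j, ⟪w j, (Pi.single i x : Fin k → V) j⟫ = ⟪w i, x⟫ := by
        rw [Finset.sum_eq_single i] <;> simp +contextual
      rw [e] at this
      rw [real_inner_comm, inner_add_left]; linarith
    · rw [h]; intro x hx
      have := hneg (x, -Pi.single i x) ⟨0, Pi.single i x, fun j => h.zero, fun j => by
        by_cases hj : j = i
        · subst hj; simpa using hx
        · simpa [hj] using h.zero, by simp, by simp⟩
      rw [hsplit] at this
      have e : ∑ j, ⟪w j, (-Pi.single i x : Fin k → V) j⟫ = -⟪w i, x⟫ := by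
        rw [Finset.sum_eq_single i] <;> simp +contextual
      rw [e] at this
      rw [real_inner_comm, inner_sub_left]; linarith
  have hfin := ineq h hT hu hk hz hmem
  rw [hsplit, real_inner_smul_right] at hm
  have e1 : ∑ i, ⟪z i, w i⟫ = ∑ i, ⟪w i, z i⟫ :=
    Finset.sum_congr rfl fun i _ => real_inner_comm _ _
  rw [e1, real_inner_comm] at hfin
  linarith

end SymC

namespace SymC

variable {V : Type} [NormedAddCommGroup V] [InnerProductSpace ℝ V] [FiniteDimensional ℝ V]

lemma sd_of {C : Set V} (hC : IsSymmetricCone C) : SD C := fun y => by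
  have := Set.ext_iff.1 hC.2.1 y
  exact this

lemma trans_of {C : Set V} (hC : IsSymmetricCone C) : Trans C := by
  intro x hx y hy
  obtain ⟨A, hA, hxy⟩ := hC.2.2 x hx y hy
  refine ⟨(A.toContinuousLinearEquiv, A.symm.toContinuousLinearEquiv), ⟨?_, ?_, ?_, ?_⟩, hxy⟩
  · ext v; simp
  · ext v; simp
  · intro v hv
    have : A v ∈ A '' C := ⟨v, hv, rfl⟩
    rw [hA] at this
    exact this
  · intro v hv
    rw [← hA] at hv
    obtain ⟨v', hv', rfl⟩ := hv
    simpa using hv'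

lemma int_nonempty {C : Set V} (hC : IsSymmetricCone C) : (interior C).Nonempty := by
  have h := sd_of hC
  rw [hC.1.2.1.interior_nonempty_iff_affineSpan_eq_top]
  rw [AffineSubspace.affineSpan_eq_top_iff_vectorSpan_eq_top_of_nonempty ℝ V V ⟨0, h.zero⟩]
  rw [eq_top_iff]
  intro v _
  obtain ⟨x, hx, y, hy, rfl⟩ := hC.1.2.2.2.1 v
  exact vsub_mem_vectorSpan ℝ hx hy

lemma tensor_decomp {k : ℕ} (t : V ⊗[ℝ] (ℝ × (Fin k → ℝ))) :
    ∃ (z0 : V) (z : Fin k → V), t = z0 ⊗ₜ[ℝ] ((1 : ℝ), (0 : Fin k → ℝ)) +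
      ∑ i, z i ⊗ₜ[ℝ] ((0 : ℝ), (Pi.single i 1 : Fin k → ℝ)) := by
  induction t using TensorProduct.induction_on with
  | zero => exact ⟨0, 0, by simp⟩
  | tmul v p =>
    refine ⟨p.1 • v, fun i => p.2 i • v, ?_⟩
    simp only [TensorProduct.smul_tmul]
    rw [← TensorProduct.tmul_sum, ← TensorProduct.tmul_add]
    congr 1
    ext j
    · simp [Prod.fst_sum]
    · simp [Prod.snd_sum, Finset.sum_apply, Pi.single_apply]
  | add x y hx hy =>
    obtain ⟨a, b, rfl⟩ := hx
    obtain ⟨a', b', rfl⟩ := hy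
    refine ⟨a + a', b + b', ?_⟩
    simp only [Pi.add_apply, TensorProduct.add_tmul, Finset.sum_add_distrib]
    abel

lemma signed_of {C : Set V} (h : SD C) {k : ℕ} {z0 : V} {z : Fin k → V}
    (ht : z0 ⊗ₜ[ℝ] ((1 : ℝ), (0 : Fin k → ℝ)) +
      ∑ i, z i ⊗ₜ[ℝ] ((0 : ℝ), (Pi.single i 1 : Fin k → ℝ)) ∈ maxTensor C (l1Cone k)) :
    Signed C z0 z := by
  intro ε hε
  rw [h]
  intro x hx
  let φ : Module.Dual ℝ V := innerₛₗ ℝ x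
  let ψ : Module.Dual ℝ (ℝ × (Fin k → ℝ)) :=
    LinearMap.fst ℝ ℝ (Fin k → ℝ) +
      ∑ i, ε i • (LinearMap.proj i ∘ₗ LinearMap.snd ℝ ℝ (Fin k → ℝ))
  have hψ : ∀ p, ψ p = p.1 + ∑ i, ε i * p.2 i := by
    intro p
    simp [ψ, LinearMap.sum_apply]
  have hφ : φ ∈ dualConeSet C := fun y hy => (h y).1 hy x hx
  have hψC : ψ ∈ dualConeSet (l1Cone k) := by
    intro p hp
    have hp' : ∑ i, |p.2 i| ≤ p.1 := hp
    rw [hψ]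
    have : -∑ i, |p.2 i| ≤ ∑ i, ε i * p.2 i := by
      rw [← Finset.sum_neg_distrib]
      refine Finset.sum_le_sum fun i _ => ?_
      rcases hε i with h | h <;> rw [h]
      · linarith [neg_abs_le (p.2 i)]
      · linarith [le_abs_self (p.2 i)]
    linarith
  have := ht φ hφ ψ hψC
  simp only [map_add, map_sum, TensorProduct.dualDistrib_apply, hψ] at this
  have e : ∀ i, ∑ j, ε j * (Pi.single i 1 : Fin k → ℝ) j = ε i := by
    intro i
    simp [Pi.single_apply]
  simp only [e, Pi.zero_apply, mul_zero, Finset.sum_const_zero, add_zero, zero_add, mul_one] at this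
  rw [inner_add_right, inner_sum]
  simp only [real_inner_smul_right]
  have e2 : ∑ i, ε i * ⟪x, z i⟫ = ∑ i, φ (z i) * ε i :=
    Finset.sum_congr rfl fun i _ => mul_comm (ε i) (⟪x, z i⟫ : ℝ)
  rw [e2]
  exact this

open Pointwise in
lemma min_smul {C : Set V} (h : SD C) {W : Type*} [AddCommGroup W] [Module ℝ W] {D : Set W}
    {x : V ⊗[ℝ] W} (hx : x ∈ minTensor C D) {c : ℝ} (hc : 0 ≤ c) : c • x ∈ minTensor C D := by
  have h1 : c • x ∈ c • minTensor C D := Set.smul_mem_smul_set hx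
  unfold minTensor at h1 ⊢
  rw [← convexHull_smul] at h1
  refine convexHull_mono ?_ h1
  rintro _ ⟨_, ⟨a, ha, b, hb, rfl⟩, rfl⟩
  exact ⟨c • a, h.smul ha hc, b, hb, by simp [TensorProduct.smul_tmul']⟩

lemma min_add {C : Set V} (h : SD C) {W : Type*} [AddCommGroup W] [Module ℝ W] {D : Set W}
    {x y : V ⊗[ℝ] W} (hx : x ∈ minTensor C D) (hy : y ∈ minTensor C D) :
    x + y ∈ minTensor C D := by
  have := (convex_convexHull ℝ _ : Convex ℝ (minTensor C D)) hx hy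
    (a := 1 / 2) (b := 1 / 2) (by norm_num) (by norm_num) (by norm_num)
  have h2 := min_smul h this (c := 2) (by norm_num)
  rw [← smul_add, smul_smul] at h2
  norm_num at h2
  exact h2

lemma min_sum {C : Set V} (h : SD C) {W : Type*} [AddCommGroup W] [Module ℝ W] {D : Set W}
    (hD : 0 ∈ D) {ι : Type*} (s : Finset ι) (f : ι → V ⊗[ℝ] W) (hf : ∀ i, f i ∈ minTensor C D) :
    ∑ i ∈ s, f i ∈ minTensor C D := by
  classical
  induction s using Finset.induction_on with
  | empty =>
    rw [Finset.sum_empty]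
    exact subset_convexHull ℝ _ ⟨0, h.zero, 0, hD, by simp⟩
  | insert j s hj ih =>
    rw [Finset.sum_insert hj]
    exact min_add h (hf j) ih

end SymC

/-- **Theorem.** For every symmetric cone `C` and every `k ≥ 1`,
`(id ⊗ I_{√k})(C ⊗max C_{ℓ₁ᵏ}) ⊆ C ⊗min C_{ℓ₁ᵏ}`. -/
theorem symmetricCone_breaks_l1_entanglement
    (V : Type) [NormedAddCommGroup V] [InnerProductSpace ℝ V] [FiniteDimensional ℝ V]
    (C : Set V) (hC : IsSymmetricCone C) (k : ℕ) (hk : 1 ≤ k) :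
    Set.MapsTo (⇑(TensorProduct.map (LinearMap.id : V →ₗ[ℝ] V) (isoSqrt k)))
      (maxTensor C (l1Cone k)) (minTensor C (l1Cone k)) := by
  intro t ht
  have h := SymC.sd_of hC
  have hT := SymC.trans_of hC
  obtain ⟨u, hu⟩ := SymC.int_nonempty hC
  obtain ⟨z0, z, rfl⟩ := SymC.tensor_decomp t
  obtain ⟨a, b, ha, hb, hs, hd⟩ := SymC.main_dec h hT hu hk (SymC.signed_of h ht)
  simp only at hs hd
  have e : TensorProduct.map (LinearMap.id : V →ₗ[ℝ] V) (isoSqrt k)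
      (z0 ⊗ₜ[ℝ] ((1 : ℝ), (0 : Fin k → ℝ)) +
        ∑ i, z i ⊗ₜ[ℝ] ((0 : ℝ), (Pi.single i 1 : Fin k → ℝ))) =
      ∑ i, (a i ⊗ₜ[ℝ] ((1 : ℝ), (Pi.single i 1 : Fin k → ℝ)) +
        b i ⊗ₜ[ℝ] ((1 : ℝ), -(Pi.single i 1 : Fin k → ℝ))) := by
    have e1 : isoSqrt k ((1 : ℝ), (0 : Fin k → ℝ)) =
        (Real.sqrt k) • ((1 : ℝ), (0 : Fin k → ℝ)) := by
      simp [isoSqrt]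
    have e2 : ∀ i, isoSqrt k ((0 : ℝ), (Pi.single i 1 : Fin k → ℝ)) =
        ((0 : ℝ), (Pi.single i 1 : Fin k → ℝ)) := by
      intro i
      simp [isoSqrt]
    simp only [map_add, map_sum, TensorProduct.map_tmul, LinearMap.id_apply, e1, e2]
    rw [← TensorProduct.smul_tmul, ← hs, TensorProduct.sum_tmul, ← Finset.sum_add_distrib]
    refine Finset.sum_congr rfl fun i _ => ?_
    rw [← hd i]
    have e3 : ((1 : ℝ), (Pi.single i 1 : Fin k → ℝ)) =
        ((1 : ℝ), (0 : Fin k → ℝ)) + ((0 : ℝ), (Pi.single i 1 : Fin k → ℝ)) := by simp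
    have e4 : ((1 : ℝ), -(Pi.single i 1 : Fin k → ℝ)) =
        ((1 : ℝ), (0 : Fin k → ℝ)) - ((0 : ℝ), (Pi.single i 1 : Fin k → ℝ)) := by simp
    rw [e3, e4]
    simp only [TensorProduct.add_tmul, TensorProduct.sub_tmul, TensorProduct.tmul_add,
      TensorProduct.tmul_sub]
    abel
  rw [e]
  refine SymC.min_sum h (by simp [l1Cone]) _ _ fun i => SymC.min_add h ?_ ?_
  · exact subset_convexHull ℝ _ ⟨a i, ha i, _, by simp [l1Cone, Pi.single_apply, apply_ite abs], rfl⟩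
  · exact subset_convexHull ℝ _ ⟨b i, hb i, _, by simp [l1Cone, Pi.single_apply, apply_ite abs], rfl⟩

end
end
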